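/- arXiv:2112.01217 — 2 statements merged into one kernel-verified Lean document; each statement's English description precedes it below -/
import Mathlib

section
/- Let Ω ⊂ B_1 ⊂ ℝ^d be open, 0 ∈ ∂Ω, and φ : B_1 → ℝ continuous satisfying: φ > 0 on Ω and φ ≡ 0 on B_1 \ Ω; φ L-Lipschitz; φ ≥ κ dist(·, B_1 \ Ω) on B_{1/2}; φ subharmonic in the sense of distributions. Then there exist constants A > 0 and δ_0 > 0, depending only on d, L, κ, such that for every δ ∈ (0, δ_0] and every positive harmonic function w : Ω → ℝ, sup_{B_{1/2} ∩ {φ > δ/2}} w ≤ A sup_{B_1 ∩ {φ > δ}} w and inf_{B_{1/2} ∩ {φ > δ/2}} w ≥ A^{-1} inf_{B_1 ∩ {φ > δ}} w. -/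
open MeasureTheory Metric

noncomputable def PF (τ : ℝ) : ℝ := expNegInvGlue (1 - τ)
noncomputable def pf (τ : ℝ) : ℝ := ((1 - τ)⁻¹) ^ 2 * expNegInvGlue (1 - τ)

lemma PF_contDiff : ContDiff ℝ (⊤ : ℕ∞) PF := by
  unfold PF
  exact expNegInvGlue.contDiff.comp (contDiff_const.sub contDiff_id)

lemma pf_contDiff : ContDiff ℝ (⊤ : ℕ∞) pf := by
  have h := expNegInvGlue.contDiff_polynomial_eval_inv_mul (n := ⊤) (Polynomial.X ^ 2)
  have := h.comp (contDiff_const.sub contDiff_id : ContDiff ℝ (⊤ : ℕ∞) (fun τ : ℝ => 1 - τ))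
  convert! this using 1
  ext τ
  simp [pf]

lemma PF_hasDerivAt (τ : ℝ) : HasDerivAt PF (-pf τ) τ := by
  have h := expNegInvGlue.hasDerivAt_polynomial_eval_inv_mul 1 (1 - τ)
  have := h.comp τ ((hasDerivAt_const τ (1:ℝ)).sub (hasDerivAt_id τ))
  convert! this using 1
  · ext τ; simp [PF]
  · simp [pf]

lemma pf_continuous : Continuous pf := pf_contDiff.continuous

lemma pf_hasDerivAt (τ : ℝ) : HasDerivAt pf (deriv pf τ) τ :=
  (pf_contDiff.differentiable (by simp) τ).hasDerivAt

lemma dpf_continuous : Continuous (deriv pf) := pf_contDiff.continuous_deriv (by simp)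

lemma pf_nonneg (τ : ℝ) : 0 ≤ pf τ := mul_nonneg (sq_nonneg _) (expNegInvGlue.nonneg _)
lemma PF_nonneg (τ : ℝ) : 0 ≤ PF τ := expNegInvGlue.nonneg _

lemma pf_pos {τ : ℝ} (h : τ < 1) : 0 < pf τ := by
  have h1 : 0 < 1 - τ := by linarith
  have := expNegInvGlue.pos_of_pos h1
  unfold pf
  positivity

lemma pf_zero {τ : ℝ} (h : 1 ≤ τ) : pf τ = 0 := by
  unfold pf; rw [expNegInvGlue.zero_of_nonpos (by linarith), mul_zero]
lemma PF_zero {τ : ℝ} (h : 1 ≤ τ) : PF τ = 0 := expNegInvGlue.zero_of_nonpos (by linarith)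

lemma dpf_zero {τ : ℝ} (h : 1 < τ) : deriv pf τ = 0 := by
  have : pf =ᶠ[nhds τ] fun _ => 0 := by
    filter_upwards [lt_mem_nhds h] with y hy using pf_zero hy.le
  rw [this.deriv_eq]; simp

section
variable {d : ℕ}
local notation "E" => EuclideanSpace ℝ (Fin d)

lemma rad_hasFDerivAt {f : ℝ → ℝ} {f' : ℝ} (x y : E) (s : ℝ)
    (hf : HasDerivAt f f' (‖y - x‖ ^ 2 / s ^ 2)) :
    HasFDerivAt (fun y : E => f (‖y - x‖ ^ 2 / s ^ 2))
      ((f' * (2 / s ^ 2)) • (innerSL ℝ (y - x))) y := by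
  have h1 : HasFDerivAt (fun y : E => ‖y - x‖ ^ 2 / s ^ 2) ((2 / s ^ 2) • (innerSL ℝ (y - x))) y := by
    have h0 := ((hasFDerivAt_id y).sub_const x).norm_sq
    have := h0.const_mul (1 / s ^ 2)
    convert! this using 1
    · ext y; simp; ring
    · ext v; simp; ring
  have := hf.comp_hasFDerivAt y h1
  convert! this using 1
  rw [smul_smul]

lemma lap_PF (x y : E) (s : ℝ) (hs : 0 < s) :
    (∑ i : Fin d, fderiv ℝ (fun y => fderiv ℝ (fun y : E => PF (‖y - x‖ ^ 2 / s ^ 2)) y (EuclideanSpace.single i 1)) y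
            (EuclideanSpace.single i 1)) =
     - (4 * ‖y - x‖ ^ 2 / s ^ 4 * deriv pf (‖y - x‖ ^ 2 / s ^ 2)
        + 2 * d / s ^ 2 * pf (‖y - x‖ ^ 2 / s ^ 2)) := by
  have h1 : ∀ i : Fin d, (fun y => fderiv ℝ (fun y : E => PF (‖y - x‖ ^ 2 / s ^ 2)) y (EuclideanSpace.single i 1))
      = fun y => (- (2 / s ^ 2)) * (pf (‖y - x‖ ^ 2 / s ^ 2) * (y i - x i)) := by
    intro i
    ext y
    rw [(rad_hasFDerivAt x y s (PF_hasDerivAt _)).fderiv]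
    simp [EuclideanSpace.inner_single_right]
    ring
  have h2 : ∀ i : Fin d, fderiv ℝ (fun y : E => (- (2 / s ^ 2)) * (pf (‖y - x‖ ^ 2 / s ^ 2) * (y i - x i))) y
      (EuclideanSpace.single i 1) = - (4 / s ^ 4 * deriv pf (‖y - x‖ ^ 2 / s ^ 2) * (y i - x i) ^ 2
        + 2 / s ^ 2 * pf (‖y - x‖ ^ 2 / s ^ 2)) := by
    intro i
    have ha := rad_hasFDerivAt x y s (pf_hasDerivAt _)
    have hb : HasFDerivAt (fun y : E => y i - x i) (EuclideanSpace.proj i : E →L[ℝ] ℝ) y :=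
      ((EuclideanSpace.proj i : E →L[ℝ] ℝ).hasFDerivAt).sub_const (x i)
    have hc : HasFDerivAt (fun y : E => (- (2 / s ^ 2)) * (pf (‖y - x‖ ^ 2 / s ^ 2) * (y i - x i))) _ y :=
      (ha.mul hb).const_mul (-(2 / s ^ 2))
    rw [hc.fderiv]
    simp [EuclideanSpace.inner_single_right]
    field_simp
    ring
  simp only [h1, h2]
  rw [Finset.sum_neg_distrib, Finset.sum_add_distrib, ← Finset.mul_sum]
  have : ‖y - x‖ ^ 2 = ∑ i, (y i - x i) ^ 2 := by
    rw [EuclideanSpace.norm_sq_eq]; simp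
  rw [← this]
  simp
  ring

end

section
variable {d : ℕ}
local notation "E" => EuclideanSpace ℝ (Fin d)

lemma G_continuous (φ : E → ℝ) (hφ : Continuous φ) (x : E) :
    Continuous (fun s : ℝ => ∫ y : E, pf (‖y‖ ^ 2) * φ (x + s • y)) := by
  have h := continuous_parametric_integral_of_continuous (μ := (volume : Measure E))
    (f := fun (s : ℝ) (y : E) => pf (‖y‖ ^ 2) * φ (x + s • y))
    (by have := pf_continuous; unfold Function.uncurry; fun_prop) (isCompact_closedBall (0 : E) 1)
  convert! h using 2 with s
  symm
  apply setIntegral_eq_integral_of_forall_compl_eq_zero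
  intro y hy
  have : 1 < ‖y‖ := by simpa using hy
  rw [pf_zero (by nlinarith), zero_mul]

lemma G_eq_J (φ : E → ℝ) (x : E) (s : ℝ) (hs : 0 < s) :
    ∫ y : E, pf (‖y‖ ^ 2) * φ (x + s • y) =
      ∫ y : E, (s ^ d)⁻¹ * (pf (‖y - x‖ ^ 2 / s ^ 2) * φ y) := by
  have h1 := Measure.integral_comp_smul_of_nonneg (volume : Measure E)
    (fun z : E => pf (‖z‖ ^ 2 / s ^ 2) * φ (x + z)) s (hR := hs.le)
  have h2 : (fun y : E => pf (‖s • y‖ ^ 2 / s ^ 2) * φ (x + s • y)) =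
      fun y => pf (‖y‖ ^ 2) * φ (x + s • y) := by
    ext y
    congr 2
    rw [norm_smul, Real.norm_of_nonneg hs.le]; field_simp
  rw [h2] at h1
  rw [h1, integral_const_mul]
  simp only [finrank_euclideanSpace, Fintype.card_fin, smul_eq_mul]
  congr 1
  rw [← integral_sub_right_eq_self _ x]
  simp

lemma J_hasDerivAt (φ : E → ℝ) (hφ : Continuous φ) (x : E) (s : ℝ) (hs : 0 < s) :
    HasDerivAt (fun s => ∫ y : E, (s ^ d)⁻¹ * (pf (‖y - x‖ ^ 2 / s ^ 2) * φ y))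
      (∫ y : E, (s ^ d)⁻¹ * s / 2 * (φ y * (- (4 * ‖y - x‖ ^ 2 / s ^ 4 * deriv pf (‖y - x‖ ^ 2 / s ^ 2)
        + 2 * d / s ^ 2 * pf (‖y - x‖ ^ 2 / s ^ 2))))) s := by
  have c1 := pf_continuous
  have c2 := dpf_continuous
  set F' : ℝ → E → ℝ := fun s y => (s ^ d)⁻¹ * s / 2 * (φ y * (- (4 * ‖y - x‖ ^ 2 / s ^ 4 * deriv pf (‖y - x‖ ^ 2 / s ^ 2)
        + 2 * d / s ^ 2 * pf (‖y - x‖ ^ 2 / s ^ 2)))) with hF'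
  have hz : ∀ t ∈ Set.Icc (s/2) (3*s/2), ∀ y ∉ closedBall x (2*s), 1 < ‖y - x‖ ^ 2 / t ^ 2 := by
    intro t ht y hy
    have hy : 2 * s < ‖y - x‖ := by simpa [dist_eq_norm] using hy
    have ht0 : 0 < t := by linarith [ht.1]
    rw [lt_div_iff₀ (by positivity)]
    nlinarith [ht.2]
  obtain ⟨M, hM⟩ : ∃ M, ∀ p ∈ Set.Icc (s/2) (3*s/2) ×ˢ closedBall x (2*s), ‖F' p.1 p.2‖ ≤ M := by
    apply IsCompact.exists_bound_of_continuousOn (isCompact_Icc.prod (isCompact_closedBall _ _))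
    have hne : ∀ p ∈ Set.Icc (s/2) (3*s/2) ×ˢ closedBall x (2*s), p.1 ≠ 0 := by
      rintro ⟨t, y⟩ ⟨h, -⟩
      have := h.1
      simp only at this ⊢
      linarith
    have hk : ∀ k : ℕ, ∀ p ∈ Set.Icc (s/2) (3*s/2) ×ˢ closedBall x (2*s), p.1 ^ k ≠ 0 :=
      fun k p hp => pow_ne_zero _ (hne p hp)
    have cq : ContinuousOn (fun p : ℝ × E => ‖p.2 - x‖ ^ 2 / p.1 ^ 2) (Set.Icc (s/2) (3*s/2) ×ˢ closedBall x (2*s)) :=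
      ContinuousOn.div (by fun_prop) (by fun_prop) (hk 2)
    have cq1 := c1.comp_continuousOn cq
    have cq2 := c2.comp_continuousOn cq
    have cq3 : ContinuousOn (fun p : ℝ × E => 4 * ‖p.2 - x‖ ^ 2 / p.1 ^ 4) (Set.Icc (s/2) (3*s/2) ×ˢ closedBall x (2*s)) :=
      ContinuousOn.div (by fun_prop) (by fun_prop) (hk 4)
    have cq4 : ContinuousOn (fun p : ℝ × E => 2 * (d:ℝ) / p.1 ^ 2) (Set.Icc (s/2) (3*s/2) ×ˢ closedBall x (2*s)) :=
      ContinuousOn.div (by fun_prop) (by fun_prop) (hk 2)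
    have cq5 : ContinuousOn (fun p : ℝ × E => (p.1 ^ d)⁻¹ * p.1 / 2) (Set.Icc (s/2) (3*s/2) ×ˢ closedBall x (2*s)) :=
      ((ContinuousOn.inv₀ (by fun_prop) (hk d)).mul (by fun_prop)).div_const _
    exact cq5.mul ((by fun_prop : ContinuousOn (fun p : ℝ × E => φ p.2) _).mul ((cq3.mul cq2).add (cq4.mul cq1)).neg)
  have hnhds : Set.Icc (s/2) (3*s/2) ∈ nhds s := Icc_mem_nhds (by linarith) (by linarith)
  refine (hasDerivAt_integral_of_dominated_loc_of_deriv_le (F' := F')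
    (bound := (closedBall x (2*s)).indicator fun _ => M) hnhds ?_ ?_ ?_ ?_ ?_ ?_).2
  · refine Filter.Eventually.of_forall fun t => ?_
    apply Continuous.aestronglyMeasurable
    fun_prop
  · apply Continuous.integrable_of_hasCompactSupport (by fun_prop)
    apply HasCompactSupport.intro (isCompact_closedBall x (2*s))
    intro y hy
    rw [pf_zero (hz s (mem_of_mem_nhds hnhds) y hy).le]; ring
  · apply Continuous.aestronglyMeasurable
    simp only [hF']
    fun_prop
  · refine Filter.Eventually.of_forall fun y t ht => ?_
    by_cases hy : y ∈ closedBall x (2*s)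
    · rw [Set.indicator_of_mem hy]
      exact hM (t, y) ⟨ht, hy⟩
    · rw [Set.indicator_of_notMem hy]
      have := hz t ht y hy
      simp [hF', pf_zero this.le, dpf_zero this]
  · rw [integrable_indicator_iff measurableSet_closedBall]
    exact integrableOn_const (measure_closedBall_lt_top).ne
  · refine Filter.Eventually.of_forall fun y t ht => ?_
    have ht0 : 0 < t := by linarith [ht.1]
    have e1 : HasDerivAt (fun t : ℝ => (t ^ d)⁻¹) (-(d * t ^ (d - 1)) / (t ^ d) ^ 2) t :=
      (hasDerivAt_pow d t).inv (pow_ne_zero _ ht0.ne')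
    have e2 : HasDerivAt (fun t : ℝ => ‖y - x‖ ^ 2 / t ^ 2) (‖y - x‖ ^ 2 * (-(2 * t) / (t ^ 2) ^ 2)) t := by
      have := ((hasDerivAt_pow 2 t).inv (pow_ne_zero _ ht0.ne')).const_mul (‖y - x‖ ^ 2)
      simpa [div_eq_mul_inv] using this
    have e3 := (pf_hasDerivAt (‖y - x‖ ^ 2 / t ^ 2)).comp t e2
    have e4 := e1.mul (e3.mul_const (φ y))
    convert! e4 using 1
    simp only [hF', Function.comp]
    rcases d with _ | n
    · simp; field_simp; ring
    · simp only [Nat.add_sub_cancel]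
      push_cast
      field_simp
      ring

theorem submean (φ : E → ℝ) (hφ : Continuous φ)
    (hsub : ∀ ψ : E → ℝ, ContDiff ℝ (⊤ : ℕ∞) ψ → HasCompactSupport ψ →
        tsupport ψ ⊆ ball (0 : E) 1 → (∀ x, 0 ≤ ψ x) →
        0 ≤ ∫ x in ball (0 : E) 1, φ x *
          (∑ i : Fin d, fderiv ℝ (fun y => fderiv ℝ ψ y (EuclideanSpace.single i 1)) x
            (EuclideanSpace.single i 1)))
    (x : E) (s : ℝ) (hs : 0 < s) (hx : closedBall x s ⊆ ball 0 1) :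
    (∫ y : E, pf (‖y‖ ^ 2)) * φ x ≤ ∫ y : E, pf (‖y‖ ^ 2) * φ (x + s • y) := by
  have hmono : MonotoneOn (fun s : ℝ => ∫ y : E, pf (‖y‖ ^ 2) * φ (x + s • y)) (Set.Icc 0 s) := by
    have hder : ∀ t ∈ interior (Set.Icc 0 s), ∃ D, 0 ≤ D ∧
        HasDerivAt (fun s : ℝ => ∫ y : E, pf (‖y‖ ^ 2) * φ (x + s • y)) D t := by
      intro t ht
      rw [interior_Icc] at ht
      have ht0 := ht.1
      refine ⟨_, ?_, (J_hasDerivAt φ hφ x t ht.1).congr_of_eventuallyEq ?_⟩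
      · rw [integral_const_mul]
        apply mul_nonneg (by positivity)
        have hsupp : tsupport (fun y : E => PF (‖y - x‖ ^ 2 / t ^ 2)) ⊆ closedBall x t := by
          apply closure_minimal _ isClosed_closedBall
          intro y hy
          by_contra hc
          apply hy
          have : t < ‖y - x‖ := by simpa [dist_eq_norm] using hc
          apply PF_zero
          rw [one_le_div (by positivity)]
          nlinarith
        have hsub1 := hsupp.trans ((closedBall_subset_closedBall ht.2.le).trans hx)
        have := hsub (fun y => PF (‖y - x‖ ^ 2 / t ^ 2)) ?_ ?_ hsub1 (fun y => PF_nonneg _)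
        · simp only [lap_PF x _ t ht0] at this
          rwa [setIntegral_eq_integral_of_forall_compl_eq_zero] at this
          intro y hy
          have hy : y ∉ closedBall x s := fun h => hy (hx h)
          have : s < ‖y - x‖ := by simpa [dist_eq_norm] using hy
          have : 1 < ‖y - x‖ ^ 2 / t ^ 2 := by
            rw [one_lt_div (by positivity)]
            nlinarith [ht.2]
          simp [pf_zero this.le, dpf_zero this]
        · apply PF_contDiff.comp
          exact ((contDiff_id.sub contDiff_const).norm_sq ℝ).div_const _
        · exact (isCompact_closedBall x t).of_isClosed_subset (isClosed_tsupport _) hsupp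
      · filter_upwards [lt_mem_nhds ht.1] with u hu using G_eq_J φ x u hu
    apply monotoneOn_of_deriv_nonneg (convex_Icc 0 s) (G_continuous φ hφ x).continuousOn
    · intro t ht
      obtain ⟨D, -, h⟩ := hder t ht
      exact h.differentiableAt.differentiableWithinAt
    · intro t ht
      obtain ⟨D, hD, h⟩ := hder t ht
      rwa [h.deriv]
  have := hmono (Set.left_mem_Icc.2 hs.le) (Set.right_mem_Icc.2 hs.le) hs.le
  simpa [integral_mul_const] using this
end

section
variable {d : ℕ}
local notation "E" => EuclideanSpace ℝ (Fin d)

def SubMean (g : E → ℝ) : Prop := ∀ (x : E) (s : ℝ), 0 < s → closedBall x s ⊆ ball 0 1 →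
    (∫ y : E, pf (‖y‖ ^ 2)) * g x ≤ ∫ y : E, pf (‖y‖ ^ 2) * g (x + s • y)

lemma pf_mul_integrable (h : E → ℝ) (hh : Continuous h) :
    Integrable (fun y : E => pf (‖y‖ ^ 2) * h y) := by
  have c1 := pf_continuous
  apply Continuous.integrable_of_hasCompactSupport (by fun_prop)
  apply HasCompactSupport.intro (isCompact_closedBall (0 : E) 1)
  intro y hy
  have : 1 < ‖y‖ := by simpa using hy
  rw [pf_zero (by nlinarith), zero_mul]

lemma SubMean.sub_inner {φ : E → ℝ} (hc : Continuous φ) (h : SubMean φ) (a : E) :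
    SubMean (fun y => φ y - inner ℝ a y) := by
  intro x s hs hx
  have h0 := h x s hs hx
  have hodd : ∫ y : E, pf (‖y‖ ^ 2) * inner ℝ a y = 0 := by
    have := integral_neg_eq_self (fun y : E => pf (‖y‖ ^ 2) * inner ℝ a y) volume
    simp only [norm_neg, inner_neg_right, mul_neg] at this
    rw [integral_neg] at this
    linarith
  have e : (fun y : E => pf (‖y‖ ^ 2) * (φ (x + s • y) - inner ℝ a (x + s • y))) =
      fun y => pf (‖y‖ ^ 2) * φ (x + s • y) - (pf (‖y‖ ^ 2) * inner ℝ a x + s * (pf (‖y‖ ^ 2) * inner ℝ a y)) := by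
    ext y
    rw [inner_add_right, inner_smul_right]; ring
  have i1 := pf_mul_integrable (fun y : E => φ (x + s • y)) (by fun_prop)
  have i2 := pf_mul_integrable (fun y : E => inner ℝ a x) (by fun_prop)
  have i3 := pf_mul_integrable (fun y : E => inner ℝ a y) (by fun_prop)
  have i23 : Integrable (fun y : E => pf (‖y‖ ^ 2) * inner ℝ a x + s * (pf (‖y‖ ^ 2) * inner ℝ a y)) :=
    i2.add (i3.const_mul s)
  beta_reduce
  rw [e, integral_sub i1 i23, integral_add i2 (i3.const_mul s), integral_const_mul s, hodd,
    integral_mul_const]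
  linarith

set_option maxHeartbeats 1000000 in
lemma growth (d : ℕ) (L C b : ℝ) (hL : 0 < L) (hC : 0 < C) (hb : 0 < b) :
    ∃ θ > (0:ℝ), θ ≤ 1/4 ∧ ∃ σ > (0:ℝ), ∀ g : EuclideanSpace ℝ (Fin d) → ℝ, Continuous g → SubMean g →
      (∀ x ∈ ball (0 : EuclideanSpace ℝ (Fin d)) 1,
        ∀ y ∈ ball (0 : EuclideanSpace ℝ (Fin d)) 1, |g x - g y| ≤ L * dist x y) →
      ∀ (x z : EuclideanSpace ℝ (Fin d)) (r δ : ℝ), 0 < δ → 0 < r → r ≤ C * δ →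
        closedBall x r ⊆ ball 0 1 → dist z x = r → g z ≤ g x - b * δ →
        ∃ y, dist y x ≤ (1 - θ) * r ∧ g x + σ * δ ≤ g y := by
  set θ : ℝ := min (1/4) (b / (8 * L * C)) with hθ
  have hθ0 : 0 < θ := by positivity
  have hθ1 : θ ≤ 1/4 := min_le_left _ _
  have hθ2 : L * (4 * θ * C) ≤ b / 2 := by
    have : θ ≤ b / (8 * L * C) := min_le_right _ _
    rw [le_div_iff₀ (by positivity)] at this
    linarith
  clear_value θ
  obtain ⟨τ, hτ, hmin⟩ := (isCompact_Icc (a := (0:ℝ)) (b := (1-θ)^2)).exists_isMinOn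
    ⟨0, by constructor <;> positivity⟩ pf_continuous.continuousOn
  set c := pf τ with hcdef
  have hc : 0 < c := pf_pos (lt_of_le_of_lt hτ.2 (by nlinarith))
  have hmin' : ∀ t ∈ Set.Icc (0:ℝ) ((1-θ)^2), c ≤ pf t := fun t ht => hmin ht
  set m := ∫ y : EuclideanSpace ℝ (Fin d), pf (‖y‖ ^ 2) with hm
  have hm0 : 0 ≤ m := integral_nonneg fun y => pf_nonneg _
  set V := volume.real (ball (0 : EuclideanSpace ℝ (Fin d)) θ) with hV
  have hV0 : 0 < V := by
    refine ENNReal.toReal_pos (measure_ball_pos _ _ hθ0).ne' measure_ball_lt_top.ne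
  refine ⟨θ, hθ0, hθ1, c * b * V / (4 * (m + 1)), by positivity, ?_⟩
  set σ := c * b * V / (4 * (m + 1)) with hσ
  have hσ0 : 0 < σ := by positivity
  have hσm : σ * (4 * (m + 1)) = c * b * V := by rw [hσ]; field_simp
  clear_value σ V
  clear_value c
  intro g hg hsm hlip x z r δ hδ hr hrC hball hzx hgz
  by_contra! hcon
  set s := (1 - θ) * r with hs
  have hs0 : 0 < s := by apply mul_pos <;> linarith
  have hsr : s ≤ r := by nlinarith
  have hsm1 := hsm x s hs0 ((closedBall_subset_closedBall hsr).trans hball)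
  rw [← hm] at hsm1
  set n := (1 / r) • (z - x) with hn
  have hn1 : ‖n‖ = 1 := by
    rw [hn, norm_smul, ← dist_eq_norm, hzx, Real.norm_of_nonneg (by positivity)]
    field_simp
  have hrn : r • n = z - x := by rw [hn, smul_smul]; field_simp; simp
  set B := ball ((1 - 2 * θ) • n) θ with hB
  have hBn : ∀ y ∈ B, ‖y‖ ≤ 1 - θ := by
    intro y hy
    have h1 : ‖y - (1 - 2 * θ) • n‖ < θ := by simpa [hB, dist_eq_norm] using hy
    have h2 : ‖(1 - 2 * θ) • n‖ = 1 - 2 * θ := by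
      rw [norm_smul, hn1, Real.norm_of_nonneg (by linarith)]; ring
    have := norm_le_norm_add_norm_sub ((1 - 2 * θ) • n) y
    rw [norm_sub_rev] at this
    linarith
  have hin : ∀ y : EuclideanSpace ℝ (Fin d), ‖y‖ ≤ 1 → dist (x + s • y) x ≤ s := by
    intro y hy
    rw [dist_eq_norm, add_sub_cancel_left, norm_smul, Real.norm_of_nonneg hs0.le]
    nlinarith
  have hpt : ∀ y : EuclideanSpace ℝ (Fin d), pf (‖y‖ ^ 2) * g (x + s • y) ≤
      pf (‖y‖ ^ 2) * (g x + σ * δ) - B.indicator (fun _ => c * (b / 2) * δ) y := by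
    intro y
    by_cases hyB : y ∈ B
    · rw [Set.indicator_of_mem hyB]
      have hy1 := hBn y hyB
      have hcy : c ≤ pf (‖y‖ ^ 2) := hmin' _ ⟨by positivity, by gcongr⟩
      have hd1 : dist (x + s • y) z ≤ 4 * θ * r := by
        have h1 : ‖y - (1 - 2 * θ) • n‖ < θ := by simpa [hB, dist_eq_norm] using hyB
        have e : x + s • y - z = s • (y - (1 - 2 * θ) • n) - (s * (2 * θ) + θ * r) • n := by
          have : z = x + r • n := by rw [hrn]; simp
          rw [this, hs]
          module
        rw [dist_eq_norm, e]
        refine (norm_sub_le _ _).trans ?_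
        rw [norm_smul, norm_smul, hn1, Real.norm_of_nonneg hs0.le, Real.norm_of_nonneg (by positivity)]
        nlinarith
      have hz1 : z ∈ ball 0 1 := hball (by simp [hzx])
      have hp1 : x + s • y ∈ ball 0 1 := hball ((hin y (by linarith)).trans hsr)
      have h3 := (abs_le.1 (hlip _ hp1 _ hz1)).2
      have h4 : L * dist (x + s • y) z ≤ b / 2 * δ := by
        calc L * dist (x + s • y) z ≤ L * (4 * θ * (C * δ)) := by
              gcongr; exact hd1.trans (by gcongr)
          _ = L * (4 * θ * C) * δ := by ring
          _ ≤ b / 2 * δ := by gcongr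
      have h5 : g (x + s • y) ≤ g x - b / 2 * δ := by linarith
      have h6 : pf (‖y‖ ^ 2) * g (x + s • y) ≤ pf (‖y‖ ^ 2) * (g x - b / 2 * δ) :=
        mul_le_mul_of_nonneg_left h5 (pf_nonneg _)
      have h7 : c * (b / 2 * δ) ≤ pf (‖y‖ ^ 2) * (b / 2 * δ) := by gcongr
      have h8 : 0 ≤ pf (‖y‖ ^ 2) * (σ * δ) := mul_nonneg (pf_nonneg _) (by positivity)
      linarith
    · rw [Set.indicator_of_notMem hyB, sub_zero]
      by_cases hy : ‖y‖ ≤ 1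
      · exact mul_le_mul_of_nonneg_left (hcon _ (hin y hy)).le (pf_nonneg _)
      · rw [pf_zero (by push Not at hy; nlinarith)]; simp
  have i1 := pf_mul_integrable (fun y : EuclideanSpace ℝ (Fin d) => g (x + s • y)) (by fun_prop)
  have i2 := pf_mul_integrable (fun y : EuclideanSpace ℝ (Fin d) => g x + σ * δ) (by fun_prop)
  have i3 : Integrable (B.indicator (fun _ => c * (b / 2) * δ)) (volume : Measure (EuclideanSpace ℝ (Fin d))) := by
    rw [integrable_indicator_iff measurableSet_ball]
    exact integrableOn_const (measure_ball_lt_top).ne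
  have hint := integral_mono i1 (i2.sub i3) hpt
  simp only [Pi.sub_apply] at hint
  rw [integral_sub i2 i3, integral_mul_const, ← hm, integral_indicator measurableSet_ball,
    setIntegral_const, smul_eq_mul] at hint
  have hVB : volume.real B = V := by
    rw [hV, hB, Measure.real, Measure.real, Measure.addHaar_ball_center]
  rw [hVB] at hint
  have : V * (c * (b / 2) * δ) ≤ m * (σ * δ) := by linarith
  have h9 : (V * c * (b / 2)) * δ ≤ (m * σ) * δ := by linarith
  have h10 := le_of_mul_le_mul_right h9 hδ
  nlinarith [mul_pos (mul_pos hc hb) hV0]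
end

/-- All standing assumptions, bundled. -/
structure Setup (d : ℕ) (L κ : ℝ) (Ω : Set (EuclideanSpace ℝ (Fin d)))
    (φ w : EuclideanSpace ℝ (Fin d) → ℝ) : Prop where
  L_pos : 0 < L
  κ_pos : 0 < κ
  isOpen : IsOpen Ω
  subset : Ω ⊆ ball 0 1
  zero_notMem : (0 : EuclideanSpace ℝ (Fin d)) ∉ Ω
  cont : Continuous φ
  pos : ∀ x ∈ Ω, 0 < φ x
  zero : ∀ x ∈ ball (0 : EuclideanSpace ℝ (Fin d)) 1 \ Ω, φ x = 0
  lip : ∀ x ∈ ball (0 : EuclideanSpace ℝ (Fin d)) 1,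
        ∀ y ∈ ball (0 : EuclideanSpace ℝ (Fin d)) 1, |φ x - φ y| ≤ L * dist x y
  nondeg : ∀ x ∈ ball (0 : EuclideanSpace ℝ (Fin d)) (1/2),
        κ * infDist x (ball (0 : EuclideanSpace ℝ (Fin d)) 1 \ Ω) ≤ φ x
  subMean : SubMean φ
  wpos : ∀ x ∈ Ω, 0 < w x
  wmv : ∀ x r, 0 < r → ball x r ⊆ Ω → w x = ⨍ y in ball x r, w y

/-- Comparability of two values of `w`. -/
def Cmp {X : Type*} (w : X → ℝ) (H : ℝ) (x y : X) : Prop := w x ≤ H * w y ∧ w y ≤ H * w x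

lemma Cmp.trans {X : Type*} {w : X → ℝ} {H H' : ℝ} {x y z : X} (hH : 0 ≤ H) (hH' : 0 ≤ H')
    (h : Cmp w H x y) (h' : Cmp w H' y z) : Cmp w (H * H') x z := by
  obtain ⟨h1, h2⟩ := h
  obtain ⟨h3, h4⟩ := h'
  constructor
  · calc w x ≤ H * w y := h1
      _ ≤ H * (H' * w z) := by gcongr
      _ = _ := by ring
  · calc w z ≤ H' * w y := h4
      _ ≤ H' * (H * w x) := by gcongr
      _ = _ := by ring

lemma Cmp.mono {X : Type*} {w : X → ℝ} {H H' : ℝ} {x y : X} (hx : 0 ≤ w x) (hy : 0 ≤ w y)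
    (hH : H ≤ H') (h : Cmp w H x y) : Cmp w H' x y :=
  ⟨h.1.trans (by gcongr), h.2.trans (by gcongr)⟩

section
variable {d : ℕ} {L κ : ℝ} {Ω : Set (EuclideanSpace ℝ (Fin d))} {φ w : EuclideanSpace ℝ (Fin d) → ℝ}
local notation "E" => EuclideanSpace ℝ (Fin d)

lemma Setup.harnack_one (S : Setup d L κ Ω φ w) {x y : E} {ρ : ℝ} (hρ : 0 < ρ)
    (hb : ball y (2 * ρ) ⊆ Ω) (hxy : dist x y ≤ ρ) : w x ≤ 2 ^ d * w y := by
  have hsub : ball x ρ ⊆ ball y (2 * ρ) := ball_subset_ball' (by linarith)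
  have hx := S.wmv x ρ hρ (hsub.trans hb)
  have hy := S.wmv y (2 * ρ) (by positivity) hb
  have hy0 : 0 < w y := S.wpos y (hb (mem_ball_self (by positivity)))
  rw [setAverage_eq, smul_eq_mul] at hx hy
  have hint : IntegrableOn w (ball y (2 * ρ)) := by
    by_contra hc
    rw [integral_undef hc, mul_zero] at hy
    linarith
  have hmono : ∫ z in ball x ρ, w z ≤ ∫ z in ball y (2 * ρ), w z := by
    apply setIntegral_mono_set hint
    · refine (ae_restrict_iff' measurableSet_ball).2 (Filter.Eventually.of_forall fun z hz => ?_)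
      exact (S.wpos z (hb hz)).le
    · exact hsub.eventuallyLE
  have hV : volume.real (ball y (2 * ρ)) = 2 ^ d * volume.real (ball x ρ) := by
    rw [Measure.real, Measure.addHaar_ball_mul_of_pos _ _ (by norm_num : (0:ℝ) < 2), ENNReal.toReal_mul,
      ENNReal.toReal_ofReal (by positivity), Measure.real, Measure.addHaar_ball_center volume x]
    simp
  have hV0 : 0 < volume.real (ball x ρ) :=
    ENNReal.toReal_pos (measure_ball_pos _ _ hρ).ne' measure_ball_lt_top.ne
  rw [hx, hy, hV]
  calc _ ≤ (volume.real (ball x ρ))⁻¹ * ∫ z in ball y (2 * ρ), w z := by gcongr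
    _ = _ := by field_simp

lemma Setup.harnack_chain (S : Setup d L κ Ω φ w) {c : E} {r ρ : ℝ} (hρ : 0 < ρ)
    (hb : ball c r ⊆ Ω) : ∀ (m : ℕ) (u v : E), u ∈ closedBall c (r - ρ) → v ∈ closedBall c (r - ρ) →
      dist u v ≤ m * (ρ / 2) → w u ≤ (2 ^ d) ^ m * w v := by
  intro m
  induction m with
  | zero =>
    intro u v hu hv h
    have : u = v := by
      have : dist u v ≤ 0 := by simpa using h
      exact dist_le_zero.1 this
    simp [this]
  | succ m ih =>
    intro u v hu hv h
    set q := AffineMap.lineMap u v ((m:ℝ) / (m + 1)) with hq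
    have hm : (0:ℝ) < m + 1 := by positivity
    have hqm : q ∈ closedBall c (r - ρ) := by
      apply (convex_closedBall c (r - ρ)).lineMap_mem hu hv
      constructor
      · positivity
      · rw [div_le_one hm]; linarith
    push_cast at h
    have h1 : dist u q ≤ m * (ρ / 2) := by
      rw [hq, dist_left_lineMap, Real.norm_of_nonneg (by positivity)]
      rw [div_mul_eq_mul_div, div_le_iff₀ hm]
      nlinarith [mul_le_mul_of_nonneg_left h (Nat.cast_nonneg (α := ℝ) m)]
    have h2 : dist q v ≤ ρ / 2 := by
      rw [hq, dist_lineMap_right]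
      have : 1 - (m:ℝ) / (m + 1) = 1 / (m + 1) := by field_simp; ring
      rw [this, Real.norm_of_nonneg (by positivity), div_mul_eq_mul_div, div_le_iff₀ hm]
      linarith
    have h3 := S.harnack_one (x := q) (y := v) (ρ := ρ / 2) (by positivity)
      ((ball_subset_ball' (by
        have : dist v c ≤ r - ρ := hv
        linarith)).trans hb) h2
    calc w u ≤ (2 ^ d) ^ m * w q := ih u q hu hqm h1
      _ ≤ (2 ^ d) ^ m * (2 ^ d * w v) := by gcongr
      _ = _ := by ring

lemma Setup.harnack_ball (S : Setup d L κ Ω φ w) {c y : E} {r ρ : ℝ} (m : ℕ) (hρ : 0 < ρ) (hr : ρ ≤ r)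
    (hb : ball c r ⊆ Ω) (hy : dist y c ≤ r - ρ) (hm : dist y c ≤ m * (ρ / 2)) :
    Cmp w ((2 ^ d) ^ m) c y := by
  have hc : c ∈ closedBall c (r - ρ) := mem_closedBall_self (by linarith)
  exact ⟨S.harnack_chain hρ hb m c y hc hy (by rwa [dist_comm]), S.harnack_chain hρ hb m y c hy hc hm⟩

lemma Setup.mem_of_pos (S : Setup d L κ Ω φ w) {x : E} (hx : x ∈ ball (0 : E) 1) (h : 0 < φ x) : x ∈ Ω := by
  by_contra hc
  rw [S.zero x ⟨hx, hc⟩] at h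
  exact lt_irrefl _ h

lemma Setup.zero_pt (S : Setup d L κ Ω φ w) {p : E} {δ : ℝ} (hδ : 0 < δ)
    (hp : p ∈ ball (0 : E) (1/2)) (h : φ p ≤ δ) :
    ∃ z ∈ ball (0 : E) 1 \ Ω, dist p z < 2 / κ * δ := by
  have hκ := S.κ_pos
  have hne : (ball (0 : E) 1 \ Ω).Nonempty := ⟨0, by simp, S.zero_notMem⟩
  rw [← infDist_lt_iff hne]
  have h1 := (S.nondeg p hp).trans h
  have : infDist p (ball (0 : E) 1 \ Ω) ≤ δ / κ := by
    rw [le_div_iff₀ hκ]; linarith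
  have h2 : 0 < δ / κ := by positivity
  have : 2 / κ * δ = δ / κ + δ / κ := by ring
  linarith

lemma Setup.ball_sub (S : Setup d L κ Ω φ w) {x : E} {ρ : ℝ}
    (h : ρ ≤ infDist x (closedBall (0:E) (3/4) \ Ω)) (h2 : ‖x‖ + ρ ≤ 3/4) : ball x ρ ⊆ Ω := by
  intro y hy
  by_contra hc
  have hy' : dist y x < ρ := hy
  have h3 : y ∈ closedBall (0:E) (3/4) \ Ω := by
    refine ⟨?_, hc⟩
    have := dist_triangle y x 0
    rw [dist_zero_right x] at this
    rw [mem_closedBall]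
    linarith
  have := infDist_le_dist_of_mem (x := x) h3
  rw [dist_comm] at this
  linarith

end

lemma step (d : ℕ) (L' C b : ℝ) (hL : 0 < L') (hC : 0 < C) (hb : 0 < b) :
    ∃ σ > (0:ℝ), ∃ H ≥ (1:ℝ), ∀ (L κ : ℝ) (Ω : Set (EuclideanSpace ℝ (Fin d)))
      (φ w : EuclideanSpace ℝ (Fin d) → ℝ), Setup d L κ Ω φ w →
      ∀ (a x : EuclideanSpace ℝ (Fin d)) (R δ : ℝ), L + ‖a‖ ≤ L' → 0 < δ → x ∈ Ω →
        infDist x (closedBall (0:EuclideanSpace ℝ (Fin d)) (3/4) \ Ω) ≤ R → R ≤ C * δ → ‖x‖ + R ≤ 3/4 →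
        (∀ z, dist z x ≤ R → - inner ℝ a z ≤ φ x - inner ℝ a x - b * δ) →
        ∃ y, dist y x ≤ R ∧ φ x - inner ℝ a x + σ * δ ≤ φ y - inner ℝ a y ∧ Cmp w H x y := by
  obtain ⟨θ, hθ0, hθ1, σ, hσ, hg⟩ := growth d L' C b hL hC hb
  refine ⟨σ, hσ, (2 ^ d) ^ (⌈2 / θ⌉₊), one_le_pow₀ (one_le_pow₀ (by norm_num)), ?_⟩
  intro L κ Ω φ w S a x R δ hLa hδ hx hR hRC hxR hz
  set A := closedBall (0:EuclideanSpace ℝ (Fin d)) (3/4) \ Ω with hA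
  have hAc : IsCompact A := (isCompact_closedBall _ _).diff S.isOpen
  have hAn : A.Nonempty := ⟨0, by simp; norm_num, S.zero_notMem⟩
  obtain ⟨z, hzA, hzr⟩ := hAc.exists_infDist_eq_dist hAn x
  set r := infDist x A with hr
  have hr0 : 0 < r := by
    rw [hzr, dist_pos]
    rintro rfl
    exact hzA.2 hx
  have hzr' : dist z x = r := by rw [dist_comm, hzr]
  have hzb : z ∈ ball (0:EuclideanSpace ℝ (Fin d)) 1 :=
    closedBall_subset_ball (by norm_num) hzA.1
  have hφz := S.zero z ⟨hzb, hzA.2⟩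
  have hl : ∀ u ∈ ball (0 : EuclideanSpace ℝ (Fin d)) 1, ∀ v ∈ ball (0 : EuclideanSpace ℝ (Fin d)) 1,
      |(φ u - inner ℝ a u) - (φ v - inner ℝ a v)| ≤ L' * dist u v := by
    intro u hu v hv
    have h1 := S.lip u hu v hv
    have h2 : |inner ℝ a u - inner ℝ a v| ≤ ‖a‖ * dist u v := by
      rw [← inner_sub_right, dist_eq_norm]
      exact abs_real_inner_le_norm _ _
    have h3 : φ u - inner ℝ a u - (φ v - inner ℝ a v) = (φ u - φ v) - (inner ℝ a u - inner ℝ a v) := by ring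
    simp only [h3]
    refine (abs_sub _ _).trans ?_
    have h4 : (L + ‖a‖) * dist u v ≤ L' * dist u v := by gcongr
    linarith
  have hcb : closedBall x r ⊆ ball 0 1 := by
    intro y hy
    have hy : dist y x ≤ r := hy
    have := dist_triangle y x 0
    rw [dist_zero_right x] at this
    rw [mem_ball]
    linarith
  have hgz : φ z - inner ℝ a z ≤ φ x - inner ℝ a x - b * δ := by
    rw [hφz, zero_sub]
    exact hz z (hzr'.le.trans hR)
  obtain ⟨y, hy1, hy2⟩ := hg (fun y => φ y - inner ℝ a y) (by have := S.cont; fun_prop)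
    (S.subMean.sub_inner S.cont a) hl x z r δ hδ hr0 (hR.trans hRC) hcb hzr' hgz
  · refine ⟨y, ?_, hy2, ?_⟩
    · nlinarith
    · have hρ : 0 < θ * r := by positivity
      refine S.harnack_ball (r := r) (ρ := θ * r) _ hρ (by nlinarith)
        (S.ball_sub le_rfl (by linarith)) (by linarith) ?_
      have h1 : 2 / θ ≤ ⌈2 / θ⌉₊ := Nat.le_ceil _
      calc dist y x ≤ r := by nlinarith
        _ = 2 / θ * (θ * r / 2) := by field_simp
        _ ≤ _ := by gcongr

lemma curv {d : ℕ} {x x0 e : EuclideanSpace ℝ (Fin d)} {q k : ℝ} (he : ‖e‖ = 1) (hx0 : x0 = ‖x0‖ • e)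
    (hx : 1 / 2 ≤ ‖x‖) (hq : dist x x0 ≤ q) (hq1 : q ≤ 1 / 4) (hqk : 2 * q ^ 2 ≤ k) :
    ‖x‖ ≤ inner ℝ e x + k := by
  set c := inner ℝ e x with hc
  set n := ‖x0‖ with hn
  rw [dist_eq_norm] at hq
  have h1 : ‖x - x0‖ ^ 2 = ‖x‖ ^ 2 - 2 * (n * c) + n ^ 2 := by
    rw [norm_sub_sq_real, ← hn]
    congr 3
    rw [hx0, inner_smul_right, real_inner_comm]
  have h0 : 0 ≤ ‖x - x0‖ := norm_nonneg _
  have h2 : ‖x‖ ^ 2 - c ^ 2 ≤ q ^ 2 := by nlinarith [sq_nonneg (n - c)]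
  have h3 : ‖x‖ - n ≤ ‖x - x0‖ := norm_sub_norm_le _ _
  have h4 : |inner ℝ e (x - x0)| ≤ 1 * ‖x - x0‖ := by rw [← he]; exact abs_real_inner_le_norm _ _
  have h5 : inner ℝ e x0 = n := by
    rw [hx0, inner_smul_right, real_inner_self_eq_norm_sq, he]; simp
  rw [inner_sub_right, h5, ← hc] at h4
  have h6 := (abs_le.1 h4).1
  have h7 : 0 ≤ c := by linarith
  by_contra! hcon
  nlinarith

lemma outer_step (d : ℕ) (L κ ε : ℝ) (hL : 0 < L) (hκ : 0 < κ) (hε : 0 < ε) (hεK : 12 * (2 / κ) * ε ≤ 1) :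
    ∃ σ > (0:ℝ), ∃ H ≥ (1:ℝ), ∀ (Ω : Set (EuclideanSpace ℝ (Fin d)))
      (φ w : EuclideanSpace ℝ (Fin d) → ℝ), Setup d L κ Ω φ w →
      ∀ (e x : EuclideanSpace ℝ (Fin d)) (δ : ℝ), ‖e‖ = 1 → 0 < δ → x ∈ Ω → 1 / 2 ≤ ‖x‖ → φ x ≤ δ →
        δ / 2 ≤ φ x - ε * (inner ℝ e x - 1 / 2) → ‖x‖ ≤ inner ℝ e x + 2 / κ * δ →
        ‖x‖ + (1 / (2 * ε) + 3 * (2 / κ)) * δ ≤ 3 / 4 →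
        (∃ y ∈ ball (0 : EuclideanSpace ℝ (Fin d)) 1, δ < φ y ∧ Cmp w H x y) ∨
        ∃ x' ∈ Ω, dist x' x ≤ (1 / (2 * ε) + 3 * (2 / κ)) * δ ∧
          φ x - ε * (inner ℝ e x - 1 / 2) + σ * δ ≤ φ x' - ε * (inner ℝ e x' - 1 / 2) ∧
          - (3 * (2 / κ) * δ) ≤ inner ℝ e x' - 1 / 2 ∧ Cmp w H x x' := by
  set K := 2 / κ with hK
  have hK0 : 0 < K := by positivity
  set C := 1 / (2 * ε) + 3 * K with hC
  have hC0 : 0 < C := by positivity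
  obtain ⟨σ, hσ, H, hH, hst⟩ := step d (L + ε) C (1/4) (by positivity) hC0 (by norm_num)
  refine ⟨σ, hσ, max H ((2 ^ d) ^ ⌈2 * C / K⌉₊), hH.trans (le_max_left _ _), ?_⟩
  intro Ω φ w S e x δ he hδ hxΩ hx hφx hg hcurv hdom
  set t := inner ℝ e x - 1 / 2 with ht
  have hKδ : 0 < K * δ := by positivity
  have ht1 : t ≤ 1 / (2 * ε) * δ := by
    have : ε * t ≤ δ / 2 := by linarith
    rw [one_div_mul_eq_div, le_div_iff₀ (by positivity)]
    linarith
  have ht2 : - (K * δ) ≤ t := by linarith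
  have hCδ : C * δ = 1 / (2 * ε) * δ + 3 * K * δ := by rw [hC]; ring
  have hεt : ε * t = ε * inner ℝ e x - ε * (1 / 2) := by rw [ht]; ring
  have hinner : ∀ z R, dist z x ≤ R → t - R ≤ inner ℝ e z - 1 / 2 := by
    intro z R hz
    have h4 : |inner ℝ e (z - x)| ≤ 1 * ‖z - x‖ := by rw [← he]; exact abs_real_inner_le_norm _ _
    rw [inner_sub_right, ← dist_eq_norm] at h4
    have := (abs_le.1 h4).1
    linarith
  have hball : ∀ z, dist z x ≤ C * δ → z ∈ ball (0 : EuclideanSpace ℝ (Fin d)) 1 := by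
    intro z hz
    have := dist_triangle z x 0
    rw [dist_zero_right x] at this
    rw [mem_ball]
    linarith
  by_cases hcase : infDist x (closedBall (0:EuclideanSpace ℝ (Fin d)) (3/4) \ Ω) ≤ t + 3 * K * δ
  · right
    obtain ⟨y, hy1, hy2, hy3⟩ := hst L κ Ω φ w S (ε • e) x (t + 3 * K * δ) δ
      (by rw [norm_smul, he, Real.norm_of_nonneg hε.le]; linarith) hδ hxΩ hcase (by linarith) (by linarith)
      (by
        intro z hz
        have := hinner z _ hz
        rw [inner_smul_left, inner_smul_left]
        simp only [conj_trivial]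
        have h1 : ε * (inner ℝ e z - 1 / 2) ≥ ε * (-(3 * K * δ)) := by
          apply mul_le_mul_of_nonneg_left _ hε.le
          linarith
        have h2 : 12 * K * ε * δ ≤ 1 * δ := by gcongr
        linarith)
    rw [inner_smul_left, inner_smul_left] at hy2
    simp only [conj_trivial] at hy2
    have hy4 := hinner y _ hy1
    have hyb := hball y (by linarith)
    have hyΩ : y ∈ Ω := by
      apply S.mem_of_pos hyb
      have h1 : ε * (inner ℝ e y - 1 / 2) ≥ ε * (-(3 * K * δ)) := by
        apply mul_le_mul_of_nonneg_left _ hε.le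
        linarith
      have h2 : 12 * K * ε * δ ≤ 1 * δ := by gcongr
      have h3 : 0 < σ * δ := by positivity
      linarith
    refine ⟨y, hyΩ, by linarith, by linarith, by linarith, ?_⟩
    exact hy3.mono (S.wpos _ hxΩ).le (S.wpos _ hyΩ).le (le_max_left _ _)
  · left
    push Not at hcase
    have hsub : ball x (t + 3 * K * δ) ⊆ Ω := S.ball_sub hcase.le (by linarith)
    set l := t + 2 * K * δ with hl
    have hl0 : 0 < l := by linarith
    have hxl : 0 < ‖x‖ := by linarith
    have hlx : l ≤ ‖x‖ := by linarith
    set p := ((‖x‖ - l) / ‖x‖) • x with hp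
    have hpn : ‖p‖ = ‖x‖ - l := by
      rw [hp, norm_smul, Real.norm_of_nonneg (div_nonneg (by linarith) hxl.le)]
      field_simp
    have hpx : dist p x = l := by
      have : p - x = (- (l / ‖x‖)) • x := by
        rw [hp]
        have : -(l / ‖x‖) = (‖x‖ - l) / ‖x‖ - 1 := by field_simp; ring
        rw [this, sub_smul, one_smul]
      rw [dist_eq_norm, this, norm_smul, norm_neg, Real.norm_of_nonneg (by positivity)]
      field_simp
    have hp2 : p ∈ ball (0 : EuclideanSpace ℝ (Fin d)) (1/2) := by
      rw [mem_ball, dist_zero_right, hpn]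
      linarith
    have hφp : δ < φ p := by
      by_contra! hcon
      obtain ⟨z, hz1, hz2⟩ := S.zero_pt hδ hp2 hcon
      apply hz1.2
      apply hsub
      have := dist_triangle z p x
      rw [dist_comm p z] at hz2
      rw [mem_ball]
      linarith
    have hpb := hball p (by linarith)
    refine ⟨p, hpb, hφp, ?_⟩
    have hpΩ := S.mem_of_pos hpb (by linarith)
    have hcm : Cmp w ((2 ^ d) ^ ⌈2 * C / K⌉₊) x p := by
      refine S.harnack_ball (r := t + 3 * K * δ) (ρ := K * δ) _ hKδ (by linarith) hsub (by linarith) ?_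
      have h1 : 2 * C / K ≤ ⌈2 * C / K⌉₊ := Nat.le_ceil _
      calc dist p x ≤ C * δ := by linarith
        _ = 2 * C / K * (K * δ / 2) := by field_simp
        _ ≤ _ := by gcongr
    exact hcm.mono (S.wpos _ hxΩ).le (S.wpos _ hpΩ).le (le_max_right _ _)

/-- One phase: starting in `B_{1/2}`, we reach either `{φ > δ}` or a point of `B_{1/2}` where
`φ` is larger by a definite multiple of `δ`. -/
lemma phase (d : ℕ) (L κ : ℝ) (hL : 0 < L) (hκ : 0 < κ) :
    ∃ σ > (0:ℝ), ∃ H ≥ (1:ℝ), ∃ δ₀ > (0:ℝ), ∀ (Ω : Set (EuclideanSpace ℝ (Fin d)))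
      (φ w : EuclideanSpace ℝ (Fin d) → ℝ), Setup d L κ Ω φ w →
      ∀ δ, 0 < δ → δ ≤ δ₀ → ∀ x ∈ ball (0 : EuclideanSpace ℝ (Fin d)) (1/2), δ / 2 < φ x → φ x ≤ δ →
      ∃ y ∈ ball (0 : EuclideanSpace ℝ (Fin d)) 1,
        (δ < φ y ∨ (y ∈ ball (0 : EuclideanSpace ℝ (Fin d)) (1/2) ∧ φ x + σ * δ ≤ φ y)) ∧ Cmp w H x y := by
  set K := 2 / κ with hK
  have hK0 : 0 < K := by positivity
  obtain ⟨σ0, hσ0, H0, hH0, hst⟩ := step d L K (1/2) hL hK0 (by norm_num)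
  set ε := min (1 / (12 * K)) (σ0 / (12 * K)) with hε
  have hε0 : 0 < ε := by positivity
  have hε1 : 12 * K * ε ≤ 1 := by
    have : ε ≤ 1 / (12 * K) := min_le_left _ _
    rw [le_div_iff₀ (by positivity)] at this
    linarith
  have hε2 : 12 * K * ε ≤ σ0 := by
    have : ε ≤ σ0 / (12 * K) := min_le_right _ _
    rw [le_div_iff₀ (by positivity)] at this
    linarith
  clear_value ε
  obtain ⟨σ1, hσ1, H1, hH1, hout⟩ := outer_step d L κ ε hL hκ hε0 hε1
  rw [← hK] at hout
  set C := 1 / (2 * ε) + 3 * K with hC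
  have hC0 : 0 < C := by positivity
  obtain ⟨N, hN⟩ := exists_nat_gt (2 / σ1)
  rw [div_lt_iff₀ hσ1] at hN
  set D := K + N * C with hD
  have hD0 : 0 < D := by positivity
  refine ⟨σ0 / 2, by positivity, H0 * H1 ^ N, one_le_mul_of_one_le_of_one_le hH0 (one_le_pow₀ hH1),
    min (K / (2 * D ^ 2)) (1 / (4 * (D + C))), by positivity, ?_⟩
  intro Ω φ w S δ hδ hδ0 x0 hx0 hφ1 hφ2
  have hδ1 : 2 * (D * δ) ^ 2 ≤ K * δ := by
    have := hδ0.trans (min_le_left _ _)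
    rw [le_div_iff₀ (by positivity)] at this
    nlinarith
  have hδ2 : D * δ + C * δ ≤ 1 / 4 := by
    have := hδ0.trans (min_le_right _ _)
    rw [le_div_iff₀ (by positivity)] at this
    linarith
  have hKδ : 0 < K * δ := by positivity
  have hCδ : 0 < C * δ := by positivity
  have hKD : K * δ ≤ D * δ := by
    have : K ≤ D := by rw [hD]; nlinarith [mul_nonneg (Nat.cast_nonneg (α := ℝ) N) hC0.le]
    gcongr
  have hx0n : ‖x0‖ < 1 / 2 := by simpa using hx0
  have hx0b : x0 ∈ ball (0 : EuclideanSpace ℝ (Fin d)) 1 := by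
    rw [mem_ball, dist_zero_right]; linarith
  have hx0Ω := S.mem_of_pos hx0b (by linarith)
  have hx0ne : x0 ≠ 0 := by
    rintro rfl
    exact S.zero_notMem hx0Ω
  have hx0pos : 0 < ‖x0‖ := norm_pos_iff.2 hx0ne
  set e := (1 / ‖x0‖) • x0 with he
  have he1 : ‖e‖ = 1 := by
    rw [he, norm_smul, Real.norm_of_nonneg (by positivity)]; field_simp
  have hx0e : x0 = ‖x0‖ • e := by
    rw [he, smul_smul]; field_simp; simp
  clear_value e
  have hnorm : ∀ x q, dist x x0 ≤ q → ‖x‖ ≤ 1 / 2 + q := by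
    intro x q h
    have := dist_triangle x x0 0
    rw [dist_zero_right, dist_zero_right] at this
    linarith
  -- the chain outside `B_{1/2}`
  have hchain : ∀ (n : ℕ) (x : EuclideanSpace ℝ (Fin d)) (G : ℝ), δ / 2 ≤ G → x ∈ Ω → 1 / 2 ≤ ‖x‖ → φ x ≤ δ →
      G ≤ φ x - ε * (inner ℝ e x - 1 / 2) →
      2 * δ < φ x - ε * (inner ℝ e x - 1 / 2) + n * σ1 * δ →
      dist x x0 ≤ D * δ - n * C * δ →
      ∃ y ∈ ball (0 : EuclideanSpace ℝ (Fin d)) 1,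
        (δ < φ y ∨ (y ∈ ball (0 : EuclideanSpace ℝ (Fin d)) (1/2) ∧ G - 3 * K * ε * δ ≤ φ y)) ∧
        Cmp w (H1 ^ n) x y := by
    intro n
    induction n with
    | zero =>
      intro x G hG hxΩ hx hφx hGx h2 hdist
      exfalso
      have hcurv := curv he1 hx0e hx (q := D * δ) (k := K * δ) (by simpa using hdist) (by linarith) hδ1
      have h3 : ε * (-(K * δ)) ≤ ε * (inner ℝ e x - 1 / 2) := by
        apply mul_le_mul_of_nonneg_left _ hε0.le
        linarith
      have h4 : 12 * K * ε * δ ≤ 1 * δ := by gcongr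
      simp only [Nat.cast_zero, zero_mul, add_zero] at h2
      linarith
    | succ n ih =>
      intro x G hG hxΩ hx hφx hGx h2 hdist
      push_cast at h2 hdist
      have hnC : 0 ≤ (n:ℝ) * C * δ := by positivity
      have hdist' : dist x x0 ≤ D * δ := by linarith
      have hcurv := curv he1 hx0e hx (q := D * δ) (k := K * δ) hdist' (by linarith) hδ1
      have hxn := hnorm x _ hdist'
      rcases hout Ω φ w S e x δ he1 hδ hxΩ hx hφx (hG.trans hGx) hcurv (by linarith) with
        ⟨y, hy1, hy2, hy3⟩ | ⟨x', hx'Ω, hx'd, hx'g, hx't, hx'c⟩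
      · refine ⟨y, hy1, Or.inl hy2, hy3.mono (S.wpos _ hxΩ).le
          (S.wpos _ (S.mem_of_pos hy1 (by linarith))).le ?_⟩
        exact le_self_pow₀ hH1 (by omega)
      · have hσδ : 0 < σ1 * δ := by positivity
        have hself : H1 ≤ H1 ^ (n + 1) := le_self_pow₀ hH1 (by omega)
        have hcm := hx'c.mono (S.wpos _ hxΩ).le (S.wpos _ hx'Ω).le hself
        by_cases hφx' : δ < φ x'
        · exact ⟨x', S.subset hx'Ω, Or.inl hφx', hcm⟩
        push Not at hφx'
        by_cases hx'n : ‖x'‖ < 1 / 2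
        · refine ⟨x', S.subset hx'Ω, Or.inr ⟨by simpa using hx'n, ?_⟩, hcm⟩
          have h3 : ε * (-(3 * K * δ)) ≤ ε * (inner ℝ e x' - 1 / 2) :=
            mul_le_mul_of_nonneg_left hx't hε0.le
          linarith
        push Not at hx'n
        have htri := dist_triangle x' x x0
        obtain ⟨y, hy1, hy2, hy3⟩ := ih x' G hG hx'Ω hx'n hφx' (by linarith) (by linarith) (by linarith)
        refine ⟨y, hy1, hy2, ?_⟩
        rw [pow_succ']
        exact hx'c.trans (by linarith) (by positivity) hy3
  -- first step
  have hinf : infDist x0 (closedBall (0:EuclideanSpace ℝ (Fin d)) (3/4) \ Ω) ≤ K * δ := by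
    obtain ⟨z, hz1, hz2⟩ := S.zero_pt hδ hx0 hφ2
    have hzA : z ∈ closedBall (0:EuclideanSpace ℝ (Fin d)) (3/4) \ Ω := by
      refine ⟨?_, hz1.2⟩
      have := dist_triangle z x0 0
      rw [dist_zero_right x0, dist_comm z x0] at this
      rw [mem_closedBall]
      linarith
    exact (infDist_le_dist_of_mem hzA).trans hz2.le
  obtain ⟨x1, hx1d, hx1g, hx1c⟩ := hst L κ Ω φ w S 0 x0 (K * δ) δ (by simp) hδ hx0Ω hinf le_rfl
    (by linarith) (by intro z _; simp; linarith)
  simp only [inner_zero_left, sub_zero] at hx1g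
  have hσδ : 0 < σ0 * δ := by positivity
  have hx1n := hnorm x1 _ hx1d
  have hx1b : x1 ∈ ball (0 : EuclideanSpace ℝ (Fin d)) 1 := by
    rw [mem_ball, dist_zero_right]; linarith
  have hx1Ω := S.mem_of_pos hx1b (by linarith)
  have hH1N : 1 ≤ H1 ^ N := one_le_pow₀ hH1
  have hcm := hx1c.mono (S.wpos _ hx0Ω).le (S.wpos _ hx1Ω).le
    (le_mul_of_one_le_right (by linarith) hH1N : H0 ≤ H0 * H1 ^ N)
  by_cases hφx1 : δ < φ x1
  · exact ⟨x1, hx1b, Or.inl hφx1, hcm⟩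
  push Not at hφx1
  by_cases hx1n' : ‖x1‖ < 1 / 2
  · exact ⟨x1, hx1b, Or.inr ⟨by simpa using hx1n', by linarith⟩, hcm⟩
  push Not at hx1n'
  have hin : inner ℝ e x1 ≤ 1 * ‖x1‖ := by rw [← he1]; exact real_inner_le_norm _ _
  have ht1 : ε * (inner ℝ e x1 - 1 / 2) ≤ ε * (K * δ) := by
    apply mul_le_mul_of_nonneg_left _ hε0.le
    linarith
  have hε2δ : 12 * K * ε * δ ≤ σ0 * δ := by gcongr
  have hNδ : 2 * δ < N * σ1 * δ := by gcongr
  obtain ⟨y, hy1, hy2, hy3⟩ := hchain N x1 (φ x0 + 3 / 4 * σ0 * δ) (by linarith) hx1Ω hx1n' hφx1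
    (by linarith) (by linarith) (by
      have : D * δ - N * C * δ = K * δ := by rw [hD]; ring
      rw [this]; exact hx1d)
  refine ⟨y, hy1, ?_, hx1c.trans (by linarith) (by positivity) hy3⟩
  rcases hy2 with h | ⟨h, h'⟩
  · exact Or.inl h
  · exact Or.inr ⟨h, by linarith⟩

/-- Interior Harnack inequality close to the boundary: there are `A > 0` and `δ₀ > 0`,
depending only on `d`, `L`, `κ`, such that for every `δ ∈ (0, δ₀]` and every positive
harmonic `w` on `Ω`, every value of `w` on `B_{1/2} ∩ {φ > δ/2}` is comparable (with
constant `A`) to a value of `w` on `B₁ ∩ {φ > δ}`; in particular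
`sup_{B_{1/2} ∩ {φ>δ/2}} w ≤ A sup_{B₁ ∩ {φ>δ}} w` and
`inf_{B_{1/2} ∩ {φ>δ/2}} w ≥ A⁻¹ inf_{B₁ ∩ {φ>δ}} w`. -/
theorem stmt_9 (d : ℕ) (hd : 0 < d) (L κ : ℝ) (hL : 0 < L) (hκ : 0 < κ) :
    ∃ A > (0:ℝ), ∃ δ₀ > (0:ℝ),
      ∀ (Ω : Set (EuclideanSpace ℝ (Fin d))) (φ : EuclideanSpace ℝ (Fin d) → ℝ),
      IsOpen Ω → Ω ⊆ ball 0 1 → (0 : EuclideanSpace ℝ (Fin d)) ∈ frontier Ω →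
      Continuous φ →
      (∀ x ∈ Ω, 0 < φ x) →
      (∀ x ∈ ball (0 : EuclideanSpace ℝ (Fin d)) 1 \ Ω, φ x = 0) →
      (∀ x ∈ ball (0 : EuclideanSpace ℝ (Fin d)) 1,
        ∀ y ∈ ball (0 : EuclideanSpace ℝ (Fin d)) 1, |φ x - φ y| ≤ L * dist x y) →
      (∀ x ∈ ball (0 : EuclideanSpace ℝ (Fin d)) (1/2),
        κ * infDist x (ball (0 : EuclideanSpace ℝ (Fin d)) 1 \ Ω) ≤ φ x) →
      (∀ ψ : EuclideanSpace ℝ (Fin d) → ℝ, ContDiff ℝ (⊤ : ℕ∞) ψ → HasCompactSupport ψ →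
        tsupport ψ ⊆ ball (0 : EuclideanSpace ℝ (Fin d)) 1 → (∀ x, 0 ≤ ψ x) →
        0 ≤ ∫ x in ball (0 : EuclideanSpace ℝ (Fin d)) 1, φ x *
          (∑ i : Fin d, fderiv ℝ (fun y => fderiv ℝ ψ y (EuclideanSpace.single i 1)) x
            (EuclideanSpace.single i 1))) →
      ∀ δ, 0 < δ → δ ≤ δ₀ →
      ∀ w : EuclideanSpace ℝ (Fin d) → ℝ, (∀ x ∈ Ω, 0 < w x) →
        (∀ x r, 0 < r → ball x r ⊆ Ω → w x = ⨍ y in ball x r, w y) →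
      ∀ x ∈ ball (0 : EuclideanSpace ℝ (Fin d)) (1/2), δ / 2 < φ x →
        ∃ y ∈ ball (0 : EuclideanSpace ℝ (Fin d)) 1, δ < φ y ∧
          w x ≤ A * w y ∧ A⁻¹ * w y ≤ w x := by
  obtain ⟨σ, hσ, H, hH, δ₀, hδ₀, hph⟩ := phase d L κ hL hκ
  obtain ⟨N, hN⟩ := exists_nat_gt (1 / σ)
  rw [div_lt_iff₀ hσ] at hN
  refine ⟨H ^ N, by positivity, δ₀, hδ₀, ?_⟩
  intro Ω φ hΩ hΩ1 h0 hcont hpos hzero hlip hnd hsub δ hδ hδ1 w hw hmv x hx hφx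
  have S : Setup d L κ Ω φ w :=
    { L_pos := hL, κ_pos := hκ, isOpen := hΩ, subset := hΩ1
      zero_notMem := fun h => by
        rw [hΩ.frontier_eq] at h0
        exact h0.2 h
      cont := hcont, pos := hpos, zero := hzero, lip := hlip, nondeg := hnd
      subMean := fun x s hs hx => submean φ hcont hsub x s hs hx
      wpos := hw, wmv := hmv }
  have key : ∀ (n : ℕ) (x : EuclideanSpace ℝ (Fin d)), x ∈ ball (0 : EuclideanSpace ℝ (Fin d)) (1/2) →
      δ / 2 < φ x → δ < φ x + n * σ * δ →
      ∃ y ∈ ball (0 : EuclideanSpace ℝ (Fin d)) 1, δ < φ y ∧ Cmp w (H ^ n) x y := by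
    intro n
    induction n with
    | zero =>
      intro x hx _ h
      exact ⟨x, ball_subset_ball (by norm_num) hx, by simpa using h, by simp [Cmp]⟩
    | succ n ih =>
      intro x hx h1 h2
      have hx1 : x ∈ ball (0 : EuclideanSpace ℝ (Fin d)) 1 := ball_subset_ball (by norm_num) hx
      have hxΩ := S.mem_of_pos hx1 (by linarith)
      have hHn : 1 ≤ H ^ (n + 1) := one_le_pow₀ hH
      by_cases h3 : δ < φ x
      · refine ⟨x, hx1, h3, ?_, ?_⟩ <;> exact le_mul_of_one_le_left (hw x hxΩ).le hHn
      push Not at h3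
      have hself : H ≤ H ^ (n + 1) := le_self_pow₀ hH (by omega)
      obtain ⟨y, hy1, hy2, hy3⟩ := hph Ω φ w S δ hδ hδ1 x hx h1 h3
      rcases hy2 with hy2 | ⟨hy2, hy4⟩
      · exact ⟨y, hy1, hy2, hy3.mono (hw x hxΩ).le (hw y (S.mem_of_pos hy1 (by linarith))).le hself⟩
      · have hσδ : 0 < σ * δ := by positivity
        push_cast at h2
        obtain ⟨z, hz1, hz2, hz3⟩ := ih y hy2 (by linarith) (by linarith)
        refine ⟨z, hz1, hz2, ?_⟩
        rw [pow_succ']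
        exact hy3.trans (by linarith) (by positivity) hz3
  have hNδ : 1 * δ < N * σ * δ := by gcongr
  obtain ⟨y, hy1, hy2, hy3⟩ := key N x hx hφx (by linarith)
  refine ⟨y, hy1, hy2, hy3.1, ?_⟩
  rw [inv_mul_le_iff₀ (by positivity)]
  exact hy3.2
end

section
/- Let Ω ⊂ B_1 ⊂ ℝ^d be open, 0 ∈ ∂Ω, and φ : B_1 → ℝ continuous satisfying: φ > 0 on Ω, φ ≡ 0 on B_1 \ Ω, φ L-Lipschitz, φ ≥ κ dist(·, B_1 \ Ω) on B_{1/2}, and φ subharmonic in the sense of distributions. Then there exist constants δ_2 > 0, C > 0, and p > 0, depending only on d, L, κ, such that for every δ ∈ (0, δ_2] and every positive harmonic function w : Ω → ℝ with w ≤ 1 on B_1 ∩ {φ > δ}, one has w(x) ≤ C φ(x)^{-p} for all x ∈ B_{1/2} ∩ Ω. -/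
open MeasureTheory Metric

section PartA

namespace HB

/-- partial derivative -/
noncomputable def pd {d : ℕ} (i : Fin d) (u : EuclideanSpace ℝ (Fin d) → ℝ) :
    EuclideanSpace ℝ (Fin d) → ℝ :=
  fun y => fderiv ℝ u y (EuclideanSpace.single i 1)

/-- Laplacian -/
noncomputable def lap {d : ℕ} (u : EuclideanSpace ℝ (Fin d) → ℝ)
    (x : EuclideanSpace ℝ (Fin d)) : ℝ :=
  ∑ i : Fin d, pd i (pd i u) x

/-- the kernel `(1 - |z|^2)_+ / 2` -/
noncomputable def KK {d : ℕ} (z : EuclideanSpace ℝ (Fin d)) : ℝ :=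
  (1 - (min ‖z‖ 1) ^ 2) / 2

variable {d : ℕ}

local notation "E" => EuclideanSpace ℝ (Fin d)

lemma pd_contDiff (i : Fin d) {u : E → ℝ} (hu : ContDiff ℝ (⊤ : ℕ∞) u) :
    ContDiff ℝ (⊤ : ℕ∞) (pd i u) := by
  unfold pd
  exact (hu.fderiv_right (m := (⊤ : ℕ∞)) (by norm_cast)).clm_apply contDiff_const

lemma pd_compact (i : Fin d) {u : E → ℝ} (hu : HasCompactSupport u) :
    HasCompactSupport (pd i u) := hu.fderiv_apply ℝ _

lemma lap_continuous {u : E → ℝ} (hu : ContDiff ℝ (⊤ : ℕ∞) u) : Continuous (lap u) := by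
  unfold lap
  exact continuous_finsetSum _ fun i _ => (pd_contDiff i (pd_contDiff i hu)).continuous

lemma KK_lip : LipschitzWith 1 (KK : E → ℝ) := by
  apply LipschitzWith.of_dist_le_mul
  intro x y
  have h1 : |min ‖x‖ 1 - min ‖y‖ 1| ≤ |‖x‖ - ‖y‖| := by
    have := abs_min_sub_min_le_max ‖x‖ 1 ‖y‖ 1
    simpa using this
  have h2 : |‖x‖ - ‖y‖| ≤ ‖x - y‖ := abs_norm_sub_norm_le x y
  have a0 : 0 ≤ min ‖x‖ 1 := le_min (norm_nonneg _) zero_le_one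
  have b0 : 0 ≤ min ‖y‖ 1 := le_min (norm_nonneg _) zero_le_one
  have a1 : min ‖x‖ 1 ≤ 1 := min_le_right _ _
  have b1 : min ‖y‖ 1 ≤ 1 := min_le_right _ _
  rw [Real.dist_eq, dist_eq_norm]
  unfold KK
  set a := min ‖x‖ 1
  set b := min ‖y‖ 1
  have : (1 - a ^ 2) / 2 - (1 - b ^ 2) / 2 = (b - a) * ((a + b) / 2) := by ring
  rw [this, abs_mul, abs_of_nonneg (by positivity : 0 ≤ (a + b) / 2), abs_sub_comm]
  have : |a - b| * ((a + b) / 2) ≤ |a - b| * 1 := by gcongr; linarith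
  simp only [NNReal.coe_one, one_mul]
  linarith

lemma KK_nonneg (z : E) : 0 ≤ KK z := by
  unfold KK
  have a0 : 0 ≤ min ‖z‖ 1 := le_min (norm_nonneg _) zero_le_one
  have a1 : min ‖z‖ 1 ≤ 1 := min_le_right _ _
  nlinarith

lemma KK_zero {z : E} (hz : 1 ≤ ‖z‖) : KK z = 0 := by
  unfold KK; rw [min_eq_right hz]; norm_num

lemma KK_compact : HasCompactSupport (KK : E → ℝ) := by
  apply HasCompactSupport.intro (isCompact_closedBall (0 : E) 1)
  intro x hx
  apply KK_zero
  simp at hx; exact hx.le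

lemma KK_integrable : Integrable (KK : E → ℝ) :=
  KK_lip.continuous.integrable_of_hasCompactSupport KK_compact

lemma KK_integral_pos : 0 < ∫ z : E, KK z := by
  have := KK_lip.continuous.integral_pos_of_hasCompactSupport_nonneg_nonzero (μ := (volume : Measure E)) (x := 0)
    KK_compact KK_nonneg (by unfold KK; simp)
  exact this

lemma KK_lineDeriv_in (i : Fin d) {z : E} (hz : ‖z‖ < 1) :
    lineDeriv ℝ KK z (-(EuclideanSpace.single i (1:ℝ))) = z i := by
  have h : HasFDerivAt (fun y : E => (1 - ‖y‖ ^ 2) / 2) (-(innerSL ℝ z)) z := by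
    have := ((hasStrictFDerivAt_norm_sq z).hasFDerivAt.const_sub 1).const_mul (1/2 : ℝ)
    have e : (fun y : E => (1 - ‖y‖ ^ 2) / 2) = fun y => 1 / 2 * (1 - ‖y‖ ^ 2) := by
      ext y; ring
    rw [e]
    refine this.congr_fderiv ?_
    ext y; simp
  have h' : HasFDerivAt (KK : E → ℝ) (-(innerSL ℝ z)) z := by
    apply h.congr_of_eventuallyEq
    filter_upwards [isOpen_ball.mem_nhds (show z ∈ ball (0:E) 1 by simpa using hz)] with y hy
    simp at hy
    unfold KK; rw [min_eq_left hy.le]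
  rw [h'.differentiableAt.lineDeriv_eq_fderiv, h'.fderiv]
  simp [EuclideanSpace.inner_single_right]

lemma KK_lineDeriv_out (v : E) {z : E} (hz : 1 < ‖z‖) :
    lineDeriv ℝ KK z v = 0 := by
  have h' : HasFDerivAt (KK : E → ℝ) (0 : E →L[ℝ] ℝ) z := by
    apply (hasFDerivAt_const (0:ℝ) z).congr_of_eventuallyEq
    have : ∀ᶠ y in nhds z, 1 < ‖y‖ := continuous_norm.continuousAt.eventually (lt_mem_nhds hz)
    filter_upwards [this] with y hy
    exact KK_zero hy.le
  rw [h'.differentiableAt.lineDeriv_eq_fderiv, h'.fderiv]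
  simp

lemma ibp [Nontrivial E] (i : Fin d) {h : E → ℝ} {C} (hh : LipschitzWith C h) :
    ∫ z in ball (0:E) 1, z i * h z =
      ∫ z, KK z * lineDeriv ℝ h z (EuclideanSpace.single i 1) := by
  have := hh.integral_lineDeriv_mul_eq (μ := (volume : Measure E)) KK_lip KK_compact
    (EuclideanSpace.single i 1)
  simp_rw [mul_comm (KK _)]
  rw [this, ← integral_indicator measurableSet_ball]
  apply integral_congr_ae
  have hs : ∀ᵐ z : E, z ∉ sphere (0:E) 1 :=
    measure_eq_zero_iff_ae_notMem.1 (Measure.addHaar_sphere _ _ _)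
  filter_upwards [hs] with z hz
  rcases lt_trichotomy ‖z‖ 1 with h1 | h1 | h1
  · rw [Set.indicator_of_mem (by simpa using h1), KK_lineDeriv_in i h1]
  · exact absurd (by simpa using h1) hz
  · rw [Set.indicator_of_notMem (by simpa using h1.le), KK_lineDeriv_out _ h1, zero_mul]

end HB

end PartA

section PartB

open scoped Pointwise

namespace HB
variable {d : ℕ}

local notation "E" => EuclideanSpace ℝ (Fin d)

lemma fderiv_eq_sum (u : E → ℝ) (y z : E) : fderiv ℝ u y z = ∑ i, z i * pd i u y := by
  conv_lhs => rw [← (EuclideanSpace.basisFun (Fin d) ℝ).sum_repr z]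
  simp [pd, map_sum]

lemma g_deriv [Nontrivial E] {u : E → ℝ} (hu : ContDiff ℝ (⊤ : ℕ∞) u) (hc : HasCompactSupport u)
    (x : E) (s : ℝ) :
    HasDerivAt (fun s : ℝ => ∫ z in ball (0:E) 1, u (x + s • z))
      (s * ∫ z, KK z * lap u (x + s • z)) s := by
  have hcf : Continuous (fderiv ℝ u) := hu.continuous_fderiv (by simp)
  obtain ⟨M, hM⟩ := hcf.bounded_above_of_compact_support (hc.fderiv ℝ)
  have hfin : IsFiniteMeasure ((volume : Measure E).restrict (ball 0 1)) :=
    ⟨by simpa using measure_ball_lt_top⟩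
  have hud : Differentiable ℝ u := hu.differentiable (by simp)
  have hcint : ∀ f : E → ℝ, Continuous f → Integrable f (volume.restrict (ball (0:E) 1)) := by
    intro f hf
    exact (hf.continuousOn.integrableOn_compact (isCompact_closedBall 0 1)).mono_set
      ball_subset_closedBall
  have key := (hasDerivAt_integral_of_dominated_loc_of_deriv_le
    (μ := (volume : Measure E).restrict (ball 0 1)) (x₀ := s) (s := Set.univ)
    (F := fun s z => u (x + s • z)) (F' := fun s z => fderiv ℝ u (x + s • z) z)
    (bound := fun _ => M) Filter.univ_mem
    (Filter.Eventually.of_forall fun t =>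
      (hcint _ (hu.continuous.comp (by fun_prop))).aestronglyMeasurable)
    (hcint _ (hu.continuous.comp (by fun_prop)))
    (hcint _ ((hcf.comp (by fun_prop : Continuous fun z : E => x + s • z)).clm_apply
      continuous_id)).aestronglyMeasurable
    ?_ (integrable_const _) ?_).2
  · refine key.congr_deriv ?_
    have h0 : ∀ z : E, fderiv ℝ u (x + s • z) z = ∑ i, z i * pd i u (x + s • z) :=
      fun z => fderiv_eq_sum u _ z
    simp only [h0]
    rw [integral_finsetSum]
    · have : ∀ i : Fin d, ∫ z in ball (0:E) 1, z i * pd i u (x + s • z) =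
          s * ∫ z, KK z * pd i (pd i u) (x + s • z) := by
        intro i
        have hs := pd_contDiff i hu
        obtain ⟨C, hC⟩ := (hs.of_le (m := 1) (by norm_cast)).lipschitzWith_of_hasCompactSupport
          (pd_compact i hc) (by simp)
        have hl : LipschitzWith ‖s‖₊ (fun z : E => x + s • z) := by
          apply LipschitzWith.of_dist_le_mul
          intro a b
          simp [dist_eq_norm, ← smul_sub, norm_smul]
        refine (ibp i (hC.comp hl)).trans ?_
        rw [← integral_const_mul]
        congr 1
        ext z
        have h1 : HasFDerivAt (fun z : E => x + s • z) (s • ContinuousLinearMap.id ℝ E) z :=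
          ((hasFDerivAt_id z).const_smul s).const_add x
        have h2 := (hs.differentiable (by simp) (x + s • z)).hasFDerivAt.comp z h1
        rw [h2.differentiableAt.lineDeriv_eq_fderiv, h2.fderiv]
        simp [pd]
        ring
      simp_rw [this]
      rw [← Finset.mul_sum, ← integral_finsetSum]
      · simp_rw [lap, Finset.mul_sum]
      · intro i _
        apply Continuous.integrable_of_hasCompactSupport
        · exact KK_lip.continuous.mul
            ((pd_contDiff i (pd_contDiff i hu)).continuous.comp (by fun_prop))
        · exact KK_compact.mul_right
    · intro i _
      apply hcint
      exact (by fun_prop : Continuous fun z : E => z i).mul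
        ((pd_contDiff i hu).continuous.comp (by fun_prop))
  · filter_upwards [ae_restrict_mem measurableSet_ball] with z hz t _
    have : ‖z‖ ≤ 1 := by simpa using (mem_ball.1 hz).le
    calc ‖fderiv ℝ u (x + t • z) z‖ ≤ ‖fderiv ℝ u (x + t • z)‖ * ‖z‖ := ContinuousLinearMap.le_opNorm _ _
      _ ≤ ‖fderiv ℝ u (x + t • z)‖ * 1 := by gcongr
      _ ≤ M := by rw [mul_one]; exact hM _
  · refine Filter.Eventually.of_forall fun z t _ => ?_
    have h1 : HasDerivAt (fun t : ℝ => x + t • z) z t := by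
      simpa using ((hasDerivAt_id t).smul_const z).const_add x
    exact (hud _).hasFDerivAt.comp_hasDerivAt t h1

lemma sub_aux [Nontrivial E] {u : E → ℝ} (hu : ContDiff ℝ (⊤ : ℕ∞) u) (hc : HasCompactSupport u)
    (x : E) {r e : ℝ} (hr : 0 < r) (he : ∀ y ∈ ball x r, e ≤ lap u y) :
    volume.real (ball (0:E) 1) * u x + e * (∫ z : E, KK z) / 2 * r ^ 2
      ≤ ∫ z in ball (0:E) 1, u (x + r • z) := by
  set g := fun s : ℝ => ∫ z in ball (0:E) 1, u (x + s • z) with hg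
  set I := ∫ z : E, KK z with hI
  have hd : ∀ s : ℝ, HasDerivAt (fun s => g s - e * I / 2 * s ^ 2)
      ((s * ∫ z, KK z * lap u (x + s • z)) - e * I / 2 * (2 * s)) s := by
    intro s
    have := (g_deriv hu hc x s).sub ((hasDerivAt_pow 2 s).const_mul (e * I / 2))
    refine HasDerivAt.congr_deriv this ?_
    simp
  have hmono : MonotoneOn (fun s => g s - e * I / 2 * s ^ 2) (Set.Icc 0 r) := by
    apply monotoneOn_of_deriv_nonneg (convex_Icc 0 r)
    · exact fun s _ => (hd s).continuousAt.continuousWithinAt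
    · exact fun s _ => (hd s).differentiableAt.differentiableWithinAt
    · intro s hs
      rw [interior_Icc] at hs
      rw [(hd s).deriv]
      have hi : Integrable (fun z : E => KK z * lap u (x + s • z)) := by
        apply Continuous.integrable_of_hasCompactSupport
        · exact KK_lip.continuous.mul ((lap_continuous hu).comp (by fun_prop))
        · exact KK_compact.mul_right
      have : e * I ≤ ∫ z, KK z * lap u (x + s • z) := by
        rw [hI, ← integral_const_mul]
        apply integral_mono (KK_integrable.const_mul e) hi
        intro z
        simp only
        rcases le_or_gt 1 ‖z‖ with h | h
        · rw [KK_zero h]; simp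
        · rw [mul_comm]
          apply mul_le_mul_of_nonneg_left _ (KK_nonneg z)
          apply he
          simp [norm_smul, abs_of_pos hs.1]
          nlinarith [hs.1, hs.2, norm_nonneg z]
      nlinarith [hs.1]
  have := hmono (Set.left_mem_Icc.2 hr.le) (Set.right_mem_Icc.2 hr.le) hr.le
  simp only [hg] at this
  simp at this
  linarith

/-- constant in the mean value expansion -/
noncomputable def kd (d : ℕ) : ℝ :=
  (∫ z : EuclideanSpace ℝ (Fin d), KK z) / 2 /
    volume.real (ball (0 : EuclideanSpace ℝ (Fin d)) 1)

lemma vol_pos (x : E) {r : ℝ} (hr : 0 < r) : 0 < volume.real (ball x r) := by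
  apply ENNReal.toReal_pos
  · exact (measure_ball_pos _ _ hr).ne'
  · exact measure_ball_lt_top.ne

lemma vol_eq (x : E) {r : ℝ} (hr : 0 < r) :
    volume.real (ball x r) = r ^ d * volume.real (ball (0:E) 1) := by
  rw [measureReal_def, Measure.addHaar_ball_of_pos _ _ hr, ENNReal.toReal_mul, measureReal_def,
    ENNReal.toReal_ofReal (by positivity)]
  simp

lemma kd_pos : 0 < kd d := by
  unfold kd
  have := KK_integral_pos (d := d)
  have := vol_pos (0:E) one_pos
  positivity

lemma average_eq (u : E → ℝ) (x : E) {r : ℝ} (hr : 0 < r) :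
    ⨍ y in ball x r, u y =
      (volume.real (ball (0:E) 1))⁻¹ * ∫ z in ball (0:E) 1, u (x + r • z) := by
  rw [setAverage_eq, vol_eq x hr]
  have h := Measure.setIntegral_comp_smul_of_pos (volume : Measure E) (fun z => u (x + z))
    (ball (0:E) 1) hr
  rw [h]
  have h3 : r • ball (0:E) 1 = ball 0 r := by
    rw [_root_.smul_ball hr.ne']; simp [abs_of_pos hr]
  rw [h3]
  have h2 : ∫ z in ball (0:E) r, u (x + z) = ∫ y in ball x r, u y := by
    have := (measurePreserving_add_left (volume : Measure E) x).setIntegral_preimage_emb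
      (MeasurableEquiv.addLeft x).measurableEmbedding u (ball x r)
    rw [← this]
    congr 2
    ext z; simp
  rw [h2]
  simp only [smul_eq_mul, finrank_euclideanSpace, Fintype.card_fin, mul_inv]
  ring

lemma lap_congr {u v : E → ℝ} {x : E} (h : u =ᶠ[nhds x] v) : lap u x = lap v x := by
  unfold lap
  congr 1
  ext i
  have : pd i u =ᶠ[nhds x] pd i v := by
    filter_upwards [h.eventuallyEq_nhds] with y hy
    unfold pd; rw [hy.fderiv_eq]
  conv_lhs => rw [pd]
  conv_rhs => rw [pd]
  rw [this.fderiv_eq]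

/-- The key mean value inequality. -/
lemma sub_mean [Nontrivial E] {u : E → ℝ} (hu : ContDiff ℝ (⊤ : ℕ∞) u)
    (x : E) {r e : ℝ} (hr : 0 < r) (he : ∀ y ∈ ball x r, e ≤ lap u y) :
    u x + e * kd d * r ^ 2 ≤ ⨍ y in ball x r, u y := by
  let χ : ContDiffBump x := ⟨r, r + 1, hr, by linarith⟩
  have hχ : ∀ y ∈ ball x r, χ y = 1 := fun y hy => χ.one_of_mem_closedBall (ball_subset_closedBall hy)
  have h := sub_aux (u := fun y => χ y * u y) (χ.contDiff.mul hu)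
    (χ.hasCompactSupport.mul_right) x hr (e := e) (by
      intro y hy
      have : (fun y => χ y * u y) =ᶠ[nhds y] u := by
        filter_upwards [isOpen_ball.mem_nhds hy] with z hz
        rw [hχ z hz, one_mul]
      rw [lap_congr this]
      exact he y hy)
  have h2 : ∫ z in ball (0:E) 1, χ (x + r • z) * u (x + r • z) =
      ∫ z in ball (0:E) 1, u (x + r • z) := by
    apply setIntegral_congr_fun measurableSet_ball
    intro z hz
    simp only
    rw [hχ, one_mul]
    simp at hz
    simp [norm_smul, abs_of_pos hr]
    nlinarith
  rw [h2, hχ x (mem_ball_self hr), one_mul] at h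
  rw [average_eq u x hr, kd]
  have hv := vol_pos (0:E) one_pos
  rw [← mul_le_mul_iff_right₀ hv]
  have : volume.real (ball (0:E) 1) * ((volume.real (ball (0:E) 1))⁻¹ *
      ∫ z in ball (0:E) 1, u (x + r • z)) = ∫ z in ball (0:E) 1, u (x + r • z) := by
    field_simp
  rw [this]
  refine le_trans (le_of_eq ?_) h
  field_simp

end HB

end PartB

section PartC

namespace HB
variable {d : ℕ}

local notation "E" => EuclideanSpace ℝ (Fin d)

/-- convolution -/
noncomputable def mol {d : ℕ} (ρ f : EuclideanSpace ℝ (Fin d) → ℝ)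
    (x : EuclideanSpace ℝ (Fin d)) : ℝ := ∫ y, f y * ρ (x - y)

lemma mol_eq (ρ f : E → ℝ) : mol ρ f =
    MeasureTheory.convolution f ρ (ContinuousLinearMap.lsmul ℝ ℝ) volume := by
  ext x; rfl

lemma mol_contDiff {ρ f : E → ℝ} (hρ : ContDiff ℝ (⊤ : ℕ∞) ρ) (hc : HasCompactSupport ρ)
    (hf : LocallyIntegrable f) : ContDiff ℝ (⊤ : ℕ∞) (mol ρ f) := by
  rw [mol_eq]
  exact hc.contDiff_convolution_right _ hf hρ

lemma mol_pd {ρ f : E → ℝ} (hρ : ContDiff ℝ (⊤ : ℕ∞) ρ) (hc : HasCompactSupport ρ)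
    (hf : LocallyIntegrable f) (i : Fin d) : pd i (mol ρ f) = mol (pd i ρ) f := by
  ext x
  have h := hc.hasFDerivAt_convolution_right (ContinuousLinearMap.lsmul ℝ ℝ) hf
    (hρ.of_le (m := 1) (by norm_cast)) x
  rw [← mol_eq] at h
  rw [pd, h.fderiv, convolution_precompR_apply _ hf (hc.fderiv ℝ) (hρ.continuous_fderiv (by simp))]
  rfl

lemma lap_const (c : ℝ) (x : E) : lap (fun _ : E => c) x = 0 := by
  have : ∀ i, pd i (fun _ : E => c) = fun _ => 0 := by
    intro i; ext y; simp [pd]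
  simp only [lap, this]
  apply Finset.sum_eq_zero
  intro i _
  simp [pd]

lemma lap_compact {ρ : E → ℝ} (hc : HasCompactSupport ρ) : HasCompactSupport (lap ρ) := by
  apply hc.of_isClosed_subset (isClosed_tsupport _)
  apply closure_minimal _ (isClosed_tsupport _)
  intro x hx
  by_contra h
  apply hx
  have : ρ =ᶠ[nhds x] fun _ => 0 := by
    have := (isClosed_tsupport ρ).isOpen_compl.mem_nhds h
    filter_upwards [this] with y hy
    exact image_eq_zero_of_notMem_tsupport hy
  rw [lap_congr this]
  exact lap_const 0 x

lemma mol_int {ρ f : E → ℝ} (hρ : Continuous ρ) (hc : HasCompactSupport ρ)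
    (hf : LocallyIntegrable f) (x : E) : Integrable (fun y => f y * ρ (x - y)) := by
  have := hc.convolutionExists_right (ContinuousLinearMap.lsmul ℝ ℝ) hf hρ x (μ := volume)
  exact this

lemma mol_lap {ρ f : E → ℝ} (hρ : ContDiff ℝ (⊤ : ℕ∞) ρ) (hc : HasCompactSupport ρ)
    (hf : LocallyIntegrable f) : lap (mol ρ f) = mol (lap ρ) f := by
  ext x
  have : ∀ i, pd i (pd i (mol ρ f)) x = mol (pd i (pd i ρ)) f x := by
    intro i
    rw [mol_pd hρ hc hf, mol_pd (pd_contDiff i hρ) (pd_compact i hc) hf]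
  simp only [lap, this, mol]
  rw [← integral_finsetSum]
  · congr 1; ext y; rw [Finset.mul_sum]
  · intro i _
    exact mol_int (pd_contDiff i (pd_contDiff i hρ)).continuous
      (pd_compact i (pd_compact i hc)) hf x

/-- reflected translate -/
lemma pd_refl (i : Fin d) {ρ : E → ℝ} (x : E) (c : ℝ) (hρ : Differentiable ℝ ρ) (y : E) :
    pd i (fun y => c * ρ (x - y)) y = (-c) * pd i ρ (x - y) := by
  have h1 : HasFDerivAt (fun y : E => x - y) (-ContinuousLinearMap.id ℝ E) y :=
    (hasFDerivAt_id y).const_sub x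
  have h2 := ((hρ (x - y)).hasFDerivAt.comp y h1).const_mul c
  rw [pd]
  erw [h2.fderiv]
  simp [pd]

lemma lap_refl {ρ : E → ℝ} (x : E) (hρ : ContDiff ℝ (⊤ : ℕ∞) ρ) (y : E) :
    lap (fun y => ρ (x - y)) y = lap ρ (x - y) := by
  unfold lap
  congr 1
  ext i
  have h1 : pd i (fun y => ρ (x - y)) = fun y => (-1) * pd i ρ (x - y) := by
    ext y
    have := pd_refl i x 1 (hρ.differentiable (by simp)) y
    simpa using this
  rw [h1, pd_refl i x (-1) ((pd_contDiff i hρ).differentiable (by simp))]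
  simp

/-- sub-mean value property of distributionally subharmonic Lipschitz functions. -/
lemma phi_sub_mean [Nontrivial E] {φ : E → ℝ} (hφ : Continuous φ)
    (hdist : ∀ ψ : E → ℝ, ContDiff ℝ (⊤ : ℕ∞) ψ → HasCompactSupport ψ →
        tsupport ψ ⊆ ball (0 : E) 1 → (∀ x, 0 ≤ ψ x) →
        0 ≤ ∫ x in ball (0 : E) 1, φ x * lap ψ x)
    {x : E} {r : ℝ} (hr : 0 < r) (hx : ‖x‖ + r < 1) : φ x ≤ ⨍ y in ball x r, φ y := by
  have hv := vol_pos x hr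
  have hfl : LocallyIntegrable φ := hφ.locallyIntegrable
  have huc : UniformContinuousOn φ (closedBall (0:E) 1) :=
    (isCompact_closedBall 0 1).uniformContinuousOn_of_continuous hφ.continuousOn
  rw [Metric.uniformContinuousOn_iff] at huc
  apply le_of_forall_pos_le_add
  intro e he
  obtain ⟨η, hη, hu⟩ := huc (e / 2) (by positivity)
  set s := min (η/2) ((1 - ‖x‖ - r) / 2) with hs
  have hs0 : 0 < s := lt_min (by positivity) (by linarith)
  have hs1 : s < η := by have := min_le_left (η/2) ((1 - ‖x‖ - r) / 2); linarith
  have hs2 : s ≤ (1 - ‖x‖ - r) / 2 := min_le_right _ _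
  let b : ContDiffBump (0:E) := ⟨s/2, s, by positivity, by linarith⟩
  set ρ : E → ℝ := b.normed volume with hρ
  have hρc : ContDiff ℝ (⊤ : ℕ∞) ρ := b.contDiff_normed
  have hρs : HasCompactSupport ρ := b.hasCompactSupport_normed
  have hρt : tsupport ρ = closedBall 0 s := b.tsupport_normed_eq
  have hnear : ∀ y ∈ closedBall x r, |mol ρ φ y - φ y| ≤ e / 2 := by
    intro y hy
    have hy1 : ‖y‖ ≤ ‖x‖ + r := by
      have := norm_le_norm_add_norm_sub' y x
      rw [mem_closedBall, dist_eq_norm] at hy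
      linarith
    have h1 : mol ρ φ y = MeasureTheory.convolution ρ φ (ContinuousLinearMap.lsmul ℝ ℝ) volume y := by
      rw [convolution_lsmul_swap]
      simp [mol, mul_comm]
    rw [h1, ← Real.dist_eq]
    apply b.dist_normed_convolution_le hφ.aestronglyMeasurable
    intro z hz
    have hz' : dist z y < s := hz
    refine (hu z ?_ y ?_ (hz'.trans hs1)).le
    · have := norm_le_norm_add_norm_sub' z y
      rw [dist_eq_norm] at hz'
      simp; linarith
    · simp; linarith
  have hlap : ∀ y ∈ ball x r, 0 ≤ lap (mol ρ φ) y := by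
    intro y hy
    have hy1 : ‖y‖ ≤ ‖x‖ + r := by
      have := norm_le_norm_add_norm_sub' y x
      rw [mem_ball, dist_eq_norm] at hy
      linarith
    rw [mol_lap hρc hρs hfl, mol]
    have hts : tsupport (fun z => ρ (y - z)) ⊆ closedBall y s := by
      apply closure_minimal _ isClosed_closedBall
      intro z hz
      have : y - z ∈ tsupport ρ := subset_tsupport _ hz
      rw [hρt] at this
      simpa [dist_eq_norm, norm_sub_rev] using this
    have hsub : closedBall y s ⊆ ball (0:E) 1 := by
      intro z hz
      have := norm_le_norm_add_norm_sub' z y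
      rw [mem_closedBall, dist_eq_norm] at hz
      simp; linarith
    have h := hdist (fun z => ρ (y - z)) (hρc.comp (contDiff_const.sub contDiff_id))
      ((isCompact_closedBall y s).of_isClosed_subset (isClosed_tsupport _) hts)
      (hts.trans hsub) (fun z => b.nonneg_normed _)
    simp_rw [lap_refl y hρc] at h
    rw [setIntegral_eq_integral_of_forall_compl_eq_zero] at h
    · exact h
    · intro z hz
      have : z ∉ tsupport (fun z => ρ (y - z)) := fun h' => hz (hsub (hts h'))
      have hz0 : (fun z => ρ (y - z)) =ᶠ[nhds z] fun _ => 0 := by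
        filter_upwards [(isClosed_tsupport _).isOpen_compl.mem_nhds this] with a ha
        exact image_eq_zero_of_notMem_tsupport (f := fun z => ρ (y - z)) ha
      rw [← lap_refl y hρc, lap_congr hz0, lap_const, mul_zero]
  have hm := sub_mean (mol_contDiff hρc hρs hfl) x hr hlap
  have hxx := hnear x (mem_closedBall_self hr.le)
  have hcint : ∀ g : E → ℝ, Continuous g → IntegrableOn g (ball x r) := fun g hg =>
    (hg.continuousOn.integrableOn_compact (isCompact_closedBall x r)).mono_set
      ball_subset_closedBall
  have hav : ⨍ y in ball x r, mol ρ φ y ≤ (⨍ y in ball x r, φ y) + e / 2 := by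
    rw [setAverage_eq, setAverage_eq, smul_eq_mul, smul_eq_mul]
    have : ∫ y in ball x r, mol ρ φ y ≤ ∫ y in ball x r, (φ y + e/2) := by
      apply setIntegral_mono_on (hcint _ (mol_contDiff hρc hρs hfl).continuous)
        (hcint _ (hφ.add continuous_const)) measurableSet_ball
      intro y hy
      have := abs_le.1 (hnear y (ball_subset_closedBall hy))
      simp only [Pi.add_apply]
      linarith
    rw [integral_add (hcint _ hφ) (hcint _ continuous_const), setIntegral_const, smul_eq_mul] at this
    rw [inv_mul_le_iff₀ hv]
    refine this.trans (le_of_eq ?_)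
    field_simp
  have := abs_le.1 hxx
  linarith

end HB

end PartC

section PartD

open scoped ENNReal

namespace HB
variable {d : ℕ}

local notation "E" => EuclideanSpace ℝ (Fin d)

lemma nontriv (hd : 0 < d) : Nontrivial E := by
  have : Nonempty (Fin d) := ⟨⟨0, hd⟩⟩
  infer_instance

lemma sq_contDiff (z : E) : ContDiff ℝ (⊤ : ℕ∞) (fun y : E => ‖y - z‖ ^ 2) :=
  (contDiff_id.sub contDiff_const).norm_sq ℝ

lemma pd_sq (z : E) (i : Fin d) : pd i (fun y : E => ‖y - z‖ ^ 2) = fun y => 2 * (y i - z i) := by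
  ext y
  have h := ((hasFDerivAt_id y).sub_const z).norm_sq
  rw [pd]
  erw [h.fderiv]
  simp [EuclideanSpace.inner_single_right]

lemma lap_sq (z x : E) : lap (fun y : E => ‖y - z‖ ^ 2) x = 2 * d := by
  have : ∀ i, pd i (pd i (fun y : E => ‖y - z‖ ^ 2)) x = 2 := by
    intro i
    rw [pd_sq, pd]
    have h : HasFDerivAt (fun y : E => 2 * (y i - z i))
        ((2:ℝ) • (EuclideanSpace.proj i : E →L[ℝ] ℝ)) x := by
      have := ((EuclideanSpace.proj i : E →L[ℝ] ℝ).hasFDerivAt (x := x)).sub_const (z i)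
      exact this.const_mul 2
    rw [h.fderiv]
    simp
  simp only [lap, this]
  simp [mul_comm]

lemma lap_cmul (c : ℝ) {u : E → ℝ} (hu : ContDiff ℝ (⊤ : ℕ∞) u) (x : E) :
    lap (fun y => c * u y) x = c * lap u x := by
  have h1 : ∀ (v : E → ℝ), ContDiff ℝ (⊤ : ℕ∞) v → ∀ i,
      pd i (fun y => c * v y) = fun y => c * pd i v y := by
    intro v hv i
    ext y
    have h := ((hv.differentiable (by simp) y).hasFDerivAt).const_mul c
    rw [pd, h.fderiv]
    simp [pd]
  unfold lap
  rw [Finset.mul_sum]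
  congr 1
  ext i
  rw [h1 u hu, h1 _ (pd_contDiff i hu)]

lemma lap_add {u v : E → ℝ} (hu : ContDiff ℝ (⊤ : ℕ∞) u) (hv : ContDiff ℝ (⊤ : ℕ∞) v) (x : E) :
    lap (fun y => u y + v y) x = lap u x + lap v x := by
  have h1 : ∀ (u v : E → ℝ), ContDiff ℝ (⊤ : ℕ∞) u → ContDiff ℝ (⊤ : ℕ∞) v → ∀ i,
      pd i (fun y => u y + v y) = fun y => pd i u y + pd i v y := by
    intro u v hu hv i
    ext y
    have h := ((hu.differentiable (by simp) y).hasFDerivAt).add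
      ((hv.differentiable (by simp) y).hasFDerivAt)
    rw [pd]
    erw [h.fderiv]
    simp [pd]
  unfold lap
  rw [← Finset.sum_add_distrib]
  congr 1
  ext i
  rw [h1 u v hu hv, h1 _ _ (pd_contDiff i hu) (pd_contDiff i hv)]

lemma int_ball {f : E → ℝ} (hf : Continuous f) (x : E) (r : ℝ) : IntegrableOn f (ball x r) :=
  (hf.continuousOn.integrableOn_compact (isCompact_closedBall x r)).mono_set ball_subset_closedBall

lemma av_cmul (c : ℝ) (f : E → ℝ) (s : Set E) : ⨍ y in s, c * f y = c * ⨍ y in s, f y := by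
  rw [setAverage_eq, setAverage_eq, integral_const_mul, smul_eq_mul, smul_eq_mul]; ring

lemma av_add {f g : E → ℝ} {s : Set E} (hf : IntegrableOn f s) (hg : IntegrableOn g s) :
    ⨍ y in s, (f y + g y) = (⨍ y in s, f y) + ⨍ y in s, g y := by
  rw [setAverage_eq, setAverage_eq, setAverage_eq, integral_add hf hg, smul_add]

lemma av_const (c : ℝ) (x : E) {r : ℝ} (hr : 0 < r) : ⨍ _y in ball x r, c = c := by
  rw [setAverage_eq, setIntegral_const, smul_smul, inv_mul_cancel₀ (vol_pos x hr).ne', one_smul]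

lemma av_mono {f g : E → ℝ} {x : E} {r : ℝ} (hf : IntegrableOn f (ball x r))
    (hg : IntegrableOn g (ball x r)) (h : ∀ y ∈ ball x r, f y ≤ g y) :
    ⨍ y in ball x r, f y ≤ ⨍ y in ball x r, g y := by
  rw [setAverage_eq, setAverage_eq, smul_eq_mul, smul_eq_mul]
  exact mul_le_mul_of_nonneg_left (setIntegral_mono_on hf hg measurableSet_ball h) (by positivity)

lemma av_sq (hd : 0 < d) (z x : E) {r : ℝ} (hr : 0 < r) :
    ⨍ y in ball x r, ‖y - z‖ ^ 2 = ‖x - z‖ ^ 2 + 2 * d * kd d * r ^ 2 := by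
  have := nontriv hd
  apply le_antisymm
  · have h := sub_mean (contDiff_const.mul (sq_contDiff z) : ContDiff ℝ (⊤ : ℕ∞)
      (fun y : E => (-1:ℝ) * ‖y - z‖ ^ 2)) x hr (e := -(2 * d)) (by
        intro y _
        rw [lap_cmul _ (sq_contDiff z), lap_sq]; simp)
    rw [av_cmul] at h
    linarith
  · exact sub_mean (sq_contDiff z) x hr (fun y _ => (lap_sq z y).ge)

lemma lav {f : E → ℝ} {x : E} {r : ℝ} (hr : 0 < r) (hi : IntegrableOn f (ball x r))
    (h0 : ∀ y ∈ ball x r, 0 ≤ f y) :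
    (volume (ball (0:E) r))⁻¹ * ∫⁻ y in ball x r, ENNReal.ofReal (f y) =
      ENNReal.ofReal (⨍ y in ball x r, f y) := by
  rw [setAverage_eq, smul_eq_mul, ENNReal.ofReal_mul (by positivity),
    ofReal_integral_eq_lintegral_ofReal hi]
  · congr 1
    rw [ENNReal.ofReal_inv_of_pos (vol_pos x hr), measureReal_def, ENNReal.ofReal_toReal
      measure_ball_lt_top.ne, Measure.addHaar_ball_center volume x]
  · filter_upwards [ae_restrict_mem measurableSet_ball] with y hy using h0 y hy

/-- transition kernel of the walk -/
noncomputable def ker {d : ℕ} (G : Set (EuclideanSpace ℝ (Fin d))) (ε : ℝ)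
    (x y : EuclideanSpace ℝ (Fin d)) : ℝ≥0∞ :=
  Set.indicator (G ×ˢ G ∩ {p | dist p.1 p.2 < ε})
    (fun _ => (volume (ball (0 : EuclideanSpace ℝ (Fin d)) ε))⁻¹) (x, y)

/-- transition operator -/
noncomputable def T {d : ℕ} (G : Set (EuclideanSpace ℝ (Fin d))) (ε : ℝ)
    (u : EuclideanSpace ℝ (Fin d) → ℝ≥0∞) (x : EuclideanSpace ℝ (Fin d)) : ℝ≥0∞ :=
  ∫⁻ y, ker G ε x y * u y

variable {G : Set (EuclideanSpace ℝ (Fin d))} {ε : ℝ}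

lemma ker_meas (hG : MeasurableSet G) : Measurable (fun p : E × E => ker G ε p.1 p.2) := by
  unfold ker
  apply Measurable.indicator measurable_const
  exact (hG.prod hG).inter (measurableSet_lt (measurable_fst.dist measurable_snd) measurable_const)

lemma ker_meas' (hG : MeasurableSet G) (x : E) : Measurable (ker G ε x) :=
  (ker_meas hG).comp (measurable_const.prodMk measurable_id : Measurable fun y : E => (x, y))

lemma ker_mul (hG : MeasurableSet G) (x : E) {u : E → ℝ≥0∞} (hu : Measurable u) :
    Measurable (fun y => ker G ε x y * u y) := (ker_meas' hG x).mul hu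

lemma ker_symm (x y : E) : ker G ε x y = ker G ε y x := by
  unfold ker Set.indicator
  have : (x, y) ∈ (G ×ˢ G ∩ {p | dist p.1 p.2 < ε}) ↔ (y, x) ∈ (G ×ˢ G ∩ {p | dist p.1 p.2 < ε}) := by
    simp [dist_comm]; tauto
  by_cases h : (x, y) ∈ (G ×ˢ G ∩ {p | dist p.1 p.2 < ε})
  · rw [if_pos h, if_pos (this.1 h)]
  · rw [if_neg h, if_neg (fun h' => h (this.2 h'))]

lemma T_meas (hG : MeasurableSet G) {u : E → ℝ≥0∞} (hu : Measurable u) :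
    Measurable (T G ε u) := by
  unfold T
  exact Measurable.lintegral_prod_right'
    (f := fun p : E × E => ker G ε p.1 p.2 * u p.2) ((ker_meas hG).mul (hu.comp measurable_snd))

lemma T_mono {u v : E → ℝ≥0∞} (h : ∀ x ∈ G, u x ≤ v x) (x : E) : T G ε u x ≤ T G ε v x := by
  apply lintegral_mono
  intro y
  by_cases hy : y ∈ G
  · exact mul_le_mul_right (h y hy) _
  · simp [ker, hy]

lemma T_cmul {c : ℝ≥0∞} (hc : c ≠ ⊤) (u : E → ℝ≥0∞) (x : E) :
    T G ε (fun y => c * u y) x = c * T G ε u x := by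
  unfold T
  rw [← lintegral_const_mul' _ _ hc]
  congr 1; ext y; ring

lemma T_symm (hG : MeasurableSet G) {u v : E → ℝ≥0∞} (hu : Measurable u) (hv : Measurable v) :
    ∫⁻ x, u x * T G ε v x = ∫⁻ x, v x * T G ε u x := by
  unfold T
  have h1 : ∀ (u v : E → ℝ≥0∞), Measurable v → ∀ x, u x * ∫⁻ y, ker G ε x y * v y = ∫⁻ y, u x * (ker G ε x y * v y) := by
    intro u v hv x
    rw [lintegral_const_mul _ (ker_mul hG x hv)]
  simp_rw [h1 u v hv, h1 v u hu]
  rw [lintegral_lintegral_swap]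
  · congr 1; ext x; congr 1; ext y
    rw [ker_symm]; ring
  · exact ((hu.comp measurable_fst).mul ((ker_meas hG).mul (hv.comp measurable_snd))).aemeasurable

lemma T_tsum (hG : MeasurableSet G) {f : ℕ → E → ℝ≥0∞} (hf : ∀ n, Measurable (f n)) (x : E) :
    T G ε (fun y => ∑' n, f n y) x = ∑' n, T G ε (f n) x := by
  unfold T
  rw [← lintegral_tsum]
  · congr 1; ext y; rw [ENNReal.tsum_mul_left]
  · intro n; exact (ker_mul hG x (hf n)).aemeasurable

lemma T_add (hG : MeasurableSet G) {u v : E → ℝ≥0∞} (hu : Measurable u) (x : E) :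
    T G ε (fun y => u y + v y) x = T G ε u x + T G ε v x := by
  unfold T
  rw [← lintegral_add_left (ker_mul hG x hu)]
  congr 1; ext y; rw [mul_add]

lemma T_off {u : E → ℝ≥0∞} {x : E} (hx : x ∉ G) : T G ε u x = 0 := by
  simp [T, ker, hx]

lemma T_le (u : E → ℝ≥0∞) (x : E) :
    T G ε u x ≤ (volume (ball (0:E) ε))⁻¹ * ∫⁻ y in ball x ε, u y := by
  unfold T
  by_cases he : 0 < ε
  · rw [← lintegral_const_mul' _ _ (ENNReal.inv_ne_top.2 (measure_ball_pos _ _ he).ne'),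
      ← lintegral_indicator measurableSet_ball]
    apply lintegral_mono
    intro y
    unfold ker Set.indicator
    simp only [Set.mem_inter_iff, Set.mem_prod, Set.mem_setOf_eq, mem_ball]
    split_ifs with h1 h2 h2
    · exact le_rfl
    · exact absurd (by rw [dist_comm]; exact h1.2) h2
    · simp
    · simp
  · have : ∀ y, ker G ε x y = 0 := by
      intro y
      unfold ker Set.indicator
      rw [if_neg]
      rintro ⟨-, h⟩
      exact he (lt_of_le_of_lt dist_nonneg h)
    simp [this]

lemma T_eq (he : 0 < ε) {u : E → ℝ≥0∞} {x : E} (hx : x ∈ G) (hu : ∀ y, y ∉ G → u y = 0) :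
    T G ε u x = (volume (ball (0:E) ε))⁻¹ * ∫⁻ y in ball x ε, u y := by
  unfold T
  rw [← lintegral_const_mul' _ _ (ENNReal.inv_ne_top.2 (measure_ball_pos _ _ he).ne'),
    ← lintegral_indicator measurableSet_ball]
  congr 1
  ext y
  by_cases hy : y ∈ G
  · unfold ker Set.indicator
    simp [hx, hy, dist_comm]
  · simp [ker, Set.indicator, hu y hy]

lemma Tn_meas (hG : MeasurableSet G) {a : E → ℝ≥0∞} (ha : Measurable a) (n : ℕ) :
    Measurable ((T G ε)^[n] a) := by
  induction n with
  | zero => exact ha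
  | succ n ih => rw [Function.iterate_succ_apply']; exact T_meas hG ih

/-- partial Green sums -/
noncomputable def S {d : ℕ} (G : Set (EuclideanSpace ℝ (Fin d))) (ε : ℝ)
    (a : EuclideanSpace ℝ (Fin d) → ℝ≥0∞) : ℕ → EuclideanSpace ℝ (Fin d) → ℝ≥0∞
  | 0 => fun _ => 0
  | n + 1 => fun x => a x + T G ε (S G ε a n) x

lemma S_meas (hG : MeasurableSet G) {a : E → ℝ≥0∞} (ha : Measurable a) (n : ℕ) :
    Measurable (S G ε a n) := by
  induction n with
  | zero => exact measurable_const
  | succ n ih => exact ha.add (T_meas hG ih)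

lemma S_eq (hG : MeasurableSet G) {a : E → ℝ≥0∞} (ha : Measurable a) (n : ℕ) (x : E) :
    S G ε a n x = ∑ k ∈ Finset.range n, (T G ε)^[k] a x := by
  induction n generalizing x with
  | zero => simp [S]
  | succ n ih =>
    rw [Finset.sum_range_succ']
    have hs : S G ε a n = fun y => ∑ k ∈ Finset.range n, (T G ε)^[k] a y := by ext y; exact ih y
    have h2 : T G ε (S G ε a n) x = ∑ k ∈ Finset.range n, (T G ε)^[k+1] a x := by
      rw [hs]
      have h3 : ∀ y, ker G ε x y * ∑ k ∈ Finset.range n, (T G ε)^[k] a y =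
        ∑ k ∈ Finset.range n, ker G ε x y * (T G ε)^[k] a y := fun y => Finset.mul_sum _ _ _
      change ∫⁻ y, ker G ε x y * ∑ k ∈ Finset.range n, (T G ε)^[k] a y = _
      simp_rw [h3]
      rw [lintegral_finsetSum _ (fun k _ => ker_mul hG x (Tn_meas hG ha k))]
      apply Finset.sum_congr rfl
      intro k _
      change _ = (T G ε)^[k+1] a x
      rw [Function.iterate_succ_apply']
      rfl
    change a x + T G ε (S G ε a n) x = _
    rw [h2, add_comm]
    rfl

lemma S_le {a v : E → ℝ≥0∞} (h : ∀ x, a x + T G ε v x ≤ v x) (n : ℕ) (x : E) :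
    S G ε a n x ≤ v x := by
  induction n generalizing x with
  | zero => simp [S]
  | succ n ih =>
    refine le_trans ?_ (h x)
    exact add_le_add_right (T_mono (fun y _ => ih y) x) _

/-- Green potential -/
noncomputable def Q {d : ℕ} (G : Set (EuclideanSpace ℝ (Fin d))) (ε : ℝ)
    (a : EuclideanSpace ℝ (Fin d) → ℝ≥0∞) (x : EuclideanSpace ℝ (Fin d)) : ℝ≥0∞ :=
  ∑' n, (T G ε)^[n] a x

lemma Q_meas (hG : MeasurableSet G) {a : E → ℝ≥0∞} (ha : Measurable a) :
    Measurable (Q G ε a) := by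
  unfold Q
  exact Measurable.ennreal_tsum (fun n => Tn_meas hG ha n)

lemma Q_le (hG : MeasurableSet G) {a : E → ℝ≥0∞} (ha : Measurable a) {x : E} {c : ℝ≥0∞}
    (h : ∀ n, S G ε a n x ≤ c) : Q G ε a x ≤ c := by
  unfold Q
  rw [ENNReal.tsum_eq_iSup_nat]
  apply iSup_le
  intro n
  rw [← S_eq hG ha]
  exact h n

lemma Q_eq (hG : MeasurableSet G) {a : E → ℝ≥0∞} (ha : Measurable a) (x : E) :
    Q G ε a x = a x + T G ε (Q G ε a) x := by
  have : T G ε (Q G ε a) x = ∑' n, (T G ε)^[n+1] a x := by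
    unfold Q
    rw [T_tsum hG (fun n => Tn_meas hG ha n)]
    congr 1; ext n
    rw [Function.iterate_succ_apply']
  have h2 : ∀ f : ℕ → ℝ≥0∞, ∑' n, f n = f 0 + ∑' n, f (n+1) := fun f =>
    tsum_eq_zero_add' ENNReal.summable
  rw [this, Q, h2]
  rfl

lemma Tn_symm (hG : MeasurableSet G) {u v : E → ℝ≥0∞} (hu : Measurable u) (hv : Measurable v)
    (n : ℕ) : ∫⁻ x, u x * (T G ε)^[n] v x = ∫⁻ x, v x * (T G ε)^[n] u x := by
  induction n generalizing v with
  | zero => simp [mul_comm]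
  | succ n ih =>
    rw [Function.iterate_succ_apply, ih (T_meas hG hv), Function.iterate_succ_apply',
      T_symm hG hv (Tn_meas hG hu n)]
    simp_rw [mul_comm]

lemma Q_symm (hG : MeasurableSet G) {u v : E → ℝ≥0∞} (hu : Measurable u) (hv : Measurable v) :
    ∫⁻ x, u x * Q G ε v x = ∫⁻ x, v x * Q G ε u x := by
  unfold Q
  simp_rw [← ENNReal.tsum_mul_left]
  rw [lintegral_tsum, lintegral_tsum]
  · simp_rw [Tn_symm hG hu hv]
  · exact fun n => (hv.mul (Tn_meas hG hu n)).aemeasurable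
  · exact fun n => (hu.mul (Tn_meas hG hv n)).aemeasurable

lemma Q_ge (hG : MeasurableSet G) {a b : E → ℝ≥0∞} (ha : Measurable a) (hb : Measurable b)
    {M : ℝ≥0∞} (hM : M ≠ ⊤) (hba : ∀ x, b x ≤ M * a x) (h : ∀ x, b x ≤ a x + T G ε b x)
    {x : E} (hfin : Q G ε a x ≠ ⊤) : b x ≤ Q G ε a x := by
  have h1 : ∀ n x, b x ≤ S G ε a n x + (T G ε)^[n] b x := by
    intro n
    induction n with
    | zero => intro x; simp [S]
    | succ n ih =>
      intro x
      refine (h x).trans ?_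
      rw [Function.iterate_succ_apply']
      change _ ≤ a x + T G ε (S G ε a n) x + _
      rw [add_assoc, ← T_add hG (S_meas hG ha n)]
      exact add_le_add_right (T_mono (fun y _ => ih y) x) _
  have h2 : ∀ n x, (T G ε)^[n] b x ≤ M * (T G ε)^[n] a x := by
    intro n
    induction n with
    | zero => exact hba
    | succ n ih =>
      intro x
      rw [Function.iterate_succ_apply', Function.iterate_succ_apply', ← T_cmul hM]
      exact T_mono (fun y _ => ih y) x
  have h3 : Filter.Tendsto (fun n => Q G ε a x + M * (T G ε)^[n] a x) Filter.atTop
      (nhds (Q G ε a x + M * 0)) := by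
    apply tendsto_const_nhds.add
    apply ENNReal.Tendsto.const_mul _ (Or.inr hM)
    exact ENNReal.tendsto_atTop_zero_of_tsum_ne_top hfin
  have h4 := ge_of_tendsto' h3 (b := b x) (fun n => by
    refine (h1 n x).trans (add_le_add ?_ (h2 n x))
    rw [S_eq hG ha]
    exact ENNReal.sum_le_tsum _)
  simpa using h4

end HB

end PartD

section PartE

open scoped ENNReal

namespace HB
variable {d : ℕ}

local notation "E" => EuclideanSpace ℝ (Fin d)

/-- points at distance at least `ε` of the complement -/
def Gset {d : ℕ} (Ω : Set (EuclideanSpace ℝ (Fin d))) (ε : ℝ) :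
    Set (EuclideanSpace ℝ (Fin d)) := {x | ε ≤ infDist x Ωᶜ}

lemma Gset_meas (Ω : Set E) (ε : ℝ) : MeasurableSet (Gset Ω ε) :=
  (isClosed_le continuous_const (continuous_infDist_pt _)).measurableSet

lemma Gset_ball {Ω : Set E} {ε : ℝ} {x : E} (hx : x ∈ Gset Ω ε) : ball x ε ⊆ Ω := by
  intro y hy
  by_contra h
  have h1 : infDist x Ωᶜ ≤ dist x y := infDist_le_dist_of_mem h
  rw [mem_ball, dist_comm] at hy
  have : ε ≤ infDist x Ωᶜ := hx
  linarith

lemma mem_Gset (hd : 0 < d) {Ω : Set E} (hΩ : Ω ⊆ ball 0 1) {ε : ℝ} {x : E}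
    (h : ball x ε ⊆ Ω) : x ∈ Gset Ω ε := by
  have hne : (Ωᶜ : Set E).Nonempty := by
    refine ⟨EuclideanSpace.single ⟨0, hd⟩ 1, fun h => ?_⟩
    have := hΩ h
    simp at this
  change ε ≤ infDist x Ωᶜ
  rw [le_infDist hne]
  intro y hy
  by_contra h'
  push Not at h'
  exact hy (h (by rw [mem_ball, dist_comm]; exact h'))

lemma w_int {Ω : Set E} {w : E → ℝ} (hw : ∀ x ∈ Ω, 0 < w x)
    (hmean : ∀ x r, 0 < r → ball x r ⊆ Ω → w x = ⨍ y in ball x r, w y) {x : E} {r : ℝ}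
    (hr : 0 < r) (h : ball x r ⊆ Ω) : IntegrableOn w (ball x r) := by
  by_contra hn
  have h1 := hmean x r hr h
  rw [setAverage_eq, integral_undef hn, smul_zero] at h1
  have := hw x (h (mem_ball_self hr))
  linarith

lemma w_harnack {Ω : Set E} {w : E → ℝ} (hw : ∀ x ∈ Ω, 0 < w x)
    (hmean : ∀ x r, 0 < r → ball x r ⊆ Ω → w x = ⨍ y in ball x r, w y) {x y : E} {σ : ℝ}
    (hσ : 0 < σ) (h : ball x (4 * σ) ⊆ Ω) (hy : y ∈ ball x σ) : w x ≤ 2 ^ d * w y := by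
  have hyx : dist y x < σ := hy
  have h1 : ball x σ ⊆ ball y (2 * σ) := by
    apply ball_subset_ball'
    rw [dist_comm]; linarith
  have h2 : ball y (2 * σ) ⊆ Ω := by
    refine (ball_subset_ball' ?_).trans h
    linarith
  have h3 := hmean y _ (by positivity) h2
  have h4 := hmean x σ hσ (h1.trans h2)
  rw [setAverage_eq, smul_eq_mul, vol_eq _ (by positivity)] at h3 h4
  have hv := vol_pos (0:E) one_pos
  have h5 : ∫ z in ball x σ, w z ≤ ∫ z in ball y (2 * σ), w z := by
    apply setIntegral_mono_set (w_int hw hmean (by positivity) h2)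
    · filter_upwards [ae_restrict_mem measurableSet_ball] with z hz using (hw z (h2 hz)).le
    · exact h1.eventuallyLE
  rw [h3, h4, mul_pow]
  have : (2:ℝ) ^ d * ((2 ^ d * σ ^ d * volume.real (ball (0:E) 1))⁻¹ *
      ∫ z in ball y (2 * σ), w z) = (σ ^ d * volume.real (ball (0:E) 1))⁻¹ *
      ∫ z in ball y (2 * σ), w z := by
    field_simp
  rw [this]
  gcongr

lemma walk (hd : 0 < d) {Ω D : Set E} (hΩ : Ω ⊆ ball 0 1) (hD : MeasurableSet D) {ε : ℝ}
    (hε : 0 < ε) (hDΩ : ∀ x ∈ D, ball x ε ⊆ Ω) {w : E → ℝ} (hw : ∀ x ∈ Ω, 0 < w x)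
    (hmean : ∀ x r, 0 < r → ball x r ⊆ Ω → w x = ⨍ y in ball x r, w y)
    (hwD : ∀ x ∈ D, w x ≤ 1) {xs : E} {σ : ℝ} (hσ : 0 < σ) (hεσ : ε ≤ σ)
    (hxs : ball xs (4 * σ) ⊆ Ω) :
    ∃ q : E → ℝ, Measurable q ∧ (∀ x, 0 ≤ q x) ∧ (∀ x, q x ≤ 4) ∧ (∀ x, x ∉ ball (0:E) 1 → q x = 0) ∧
      (∀ x, ball x ε ⊆ Ω → ⨍ y in ball x ε, q y ≤ q x) ∧
      (∀ z R, 0 < R → ball z R ⊆ D → R ^ 2 ≤ q z) ∧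
      (∫ y in ball xs σ, q y ≤ 4 * 2 ^ d * volume.real (ball (0:E) 1) / w xs) := by
  set G := Gset Ω ε with hGdef
  have hG : MeasurableSet G := Gset_meas Ω ε
  have hGΩ : G ⊆ Ω := fun x hx => Gset_ball hx (mem_ball_self hε)
  have hG1 : ∀ x ∈ G, ball x ε ⊆ ball (0:E) 1 := fun x hx => (Gset_ball hx).trans hΩ
  set c : ℝ := 2 * d * kd d * ε ^ 2 with hc
  have hc0 : 0 < c := by have := kd_pos (d := d); positivity
  set v : E → ℝ≥0∞ := fun x => ENNReal.ofReal (4 - ‖x - 0‖ ^ 2) with hv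
  have hv4 : ∀ x, v x ≤ 4 := by
    intro x
    simp only [hv]
    rw [ENNReal.ofReal_le_iff_le_toReal (by simp)]
    simp
  -- upper bound for indicator sources
  have hup : ∀ A : Set E, A ⊆ G → ∀ n x,
      S G ε (A.indicator fun _ => ENNReal.ofReal c) n x ≤ v x := by
    intro A hA n x
    apply S_le
    intro x
    by_cases hx : x ∈ G
    · have hpos : ∀ y ∈ ball x ε, 0 ≤ 4 - ‖y - 0‖ ^ 2 := by
        intro y hy
        have := hG1 x hx hy
        simp at this ⊢
        nlinarith [norm_nonneg y]
      have hav : ⨍ y in ball x ε, (4 - ‖y - 0‖ ^ 2) = 4 - ‖x - 0‖ ^ 2 - c := by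
        have h1 : ∀ y : E, 4 - ‖y - 0‖ ^ 2 = 4 + (-1) * ‖y - 0‖ ^ 2 := fun y => by ring
        simp_rw [h1]
        rw [av_add (int_ball continuous_const x ε) (int_ball (by fun_prop) x ε), av_const _ _ hε,
          av_cmul, av_sq hd 0 x hε]
        ring
      have h1 : T G ε v x ≤ ENNReal.ofReal (4 - ‖x - 0‖ ^ 2 - c) := by
        refine (T_le v x).trans ?_
        simp only [hv]
        rw [lav hε (int_ball (by fun_prop) x ε) hpos, hav]
      have h2 : 0 ≤ 4 - ‖x - 0‖ ^ 2 - c := by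
        rw [← hav, setAverage_eq, smul_eq_mul]
        apply mul_nonneg (by positivity)
        exact setIntegral_nonneg measurableSet_ball hpos
      calc _ ≤ ENNReal.ofReal c + ENNReal.ofReal (4 - ‖x - 0‖ ^ 2 - c) := by
            apply add_le_add _ h1
            exact Set.indicator_le_self' (by simp) x
        _ = v x := by
            rw [← ENNReal.ofReal_add hc0.le h2]
            simp only [hv]; congr 1; ring
    · rw [T_off hx, Set.indicator_of_notMem (fun h => hx (hA h))]
      simp
  have hDG : D ⊆ G := fun x hx => mem_Gset hd hΩ (hDΩ x hx)
  set a : E → ℝ≥0∞ := D.indicator fun _ => ENNReal.ofReal c with ha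
  have ham : Measurable a := measurable_const.indicator hD
  set Qa := Q G ε a with hQa
  have hQm : Measurable Qa := Q_meas hG ham
  have hQ4 : ∀ x, Qa x ≤ 4 := fun x => Q_le hG ham (fun n => (hup D hDG n x).trans (hv4 x))
  have hQt : ∀ x, Qa x ≠ ⊤ := fun x => ((hQ4 x).trans_lt (by simp)).ne
  have hQoff : ∀ x, x ∉ G → Qa x = 0 := by
    intro x hx
    rw [hQa, Q_eq hG ham, T_off hx, ha, Set.indicator_of_notMem (fun h => hx (hDG h))]
    simp
  have hofr : ∀ x, ENNReal.ofReal (Qa x).toReal = Qa x := fun x => ENNReal.ofReal_toReal (hQt x)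
  have hqi : ∀ x r, IntegrableOn (fun x => (Qa x).toReal) (ball x r) := by
    intro x r
    apply Measure.integrableOn_of_bounded (M := 4) measure_ball_lt_top.ne
      hQm.ennreal_toReal.aestronglyMeasurable
    refine Filter.Eventually.of_forall fun y => ?_
    rw [Real.norm_of_nonneg ENNReal.toReal_nonneg]
    exact ENNReal.toReal_le_of_le_ofReal (by norm_num) ((hQ4 y).trans (by simp))
  refine ⟨fun x => (Qa x).toReal, hQm.ennreal_toReal, fun x => ENNReal.toReal_nonneg, ?_, ?_, ?_, ?_, ?_⟩
  · intro y
    exact ENNReal.toReal_le_of_le_ofReal (by norm_num) ((hQ4 y).trans (by simp))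
  · intro x hx
    simp only
    rw [hQoff x (fun h => hx (hΩ (hGΩ h)))]
    simp
  · intro x hx
    have hxG : x ∈ G := mem_Gset hd hΩ hx
    have h1 : T G ε Qa x ≤ Qa x := by
      conv_rhs => rw [hQa, Q_eq hG ham]
      exact le_add_self
    rw [T_eq hε hxG hQoff] at h1
    have h2 := lav hε (hqi x ε) (fun y _ => ENNReal.toReal_nonneg)
    simp_rw [hofr] at h2
    rw [h2] at h1
    exact (ENNReal.ofReal_le_iff_le_toReal (hQt x)).1 h1
  · intro z R hR hz
    set b : E → ℝ≥0∞ := fun x => ENNReal.ofReal (R ^ 2 - ‖x - z‖ ^ 2) with hb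
    have hbm : Measurable b := by
      apply ENNReal.measurable_ofReal.comp
      exact Continuous.measurable (by fun_prop)
    have hboff : ∀ x, x ∉ ball z R → b x = 0 := by
      intro x hx
      simp only [hb]
      rw [ENNReal.ofReal_eq_zero]
      rw [mem_ball, dist_eq_norm] at hx
      nlinarith
    have key := Q_ge (G := G) (ε := ε) hG ham hbm (M := ENNReal.ofReal (R ^ 2 / c)) ENNReal.ofReal_ne_top ?_ ?_ (hQt z)
    · have h1 : b z = ENNReal.ofReal (R ^ 2) := by simp [hb]
      rw [h1] at key
      exact (ENNReal.ofReal_le_iff_le_toReal (hQt z)).1 key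
    · intro x
      by_cases hx : x ∈ ball z R
      · rw [ha, Set.indicator_of_mem (hz hx), ← ENNReal.ofReal_mul (by positivity)]
        apply ENNReal.ofReal_le_ofReal
        rw [div_mul_cancel₀ _ hc0.ne']
        nlinarith [sq_nonneg ‖x - z‖]
      · rw [hboff x hx]; simp
    · intro x
      by_cases hx : x ∈ ball z R
      · have hxG := hDG (hz hx)
        rw [T_eq hε hxG (fun y hy => hboff y (fun h => hy (hDG (hz h)))), ha,
          Set.indicator_of_mem (hz hx)]
        have h1 : ∀ y, b y = ENNReal.ofReal (max (R ^ 2 - ‖y - z‖ ^ 2) 0) := by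
          intro y; simp [hb]
        simp_rw [h1]
        rw [lav hε (int_ball (by fun_prop) x ε) (fun y _ => le_max_right _ _),
          ← ENNReal.ofReal_add hc0.le]
        · apply ENNReal.ofReal_le_ofReal
          have h2 : ⨍ y in ball x ε, (R ^ 2 + (-1) * ‖y - z‖ ^ 2) ≤
              ⨍ y in ball x ε, max (R ^ 2 - ‖y - z‖ ^ 2) 0 := by
            apply av_mono (int_ball (by fun_prop) x ε) (int_ball (by fun_prop) x ε)
            intro y _
            refine le_trans (le_of_eq ?_) (le_max_left _ _)
            ring
          rw [av_add (int_ball continuous_const x ε) (int_ball (by fun_prop) x ε), av_const _ _ hε,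
            av_cmul, av_sq hd z x hε] at h2
          apply max_le
          · linarith
          · apply add_nonneg hc0.le
            rw [setAverage_eq, smul_eq_mul]
            apply mul_nonneg (by positivity)
            exact setIntegral_nonneg measurableSet_ball (fun y _ => le_max_right _ _)
        · rw [setAverage_eq, smul_eq_mul]
          apply mul_nonneg (by positivity)
          exact setIntegral_nonneg measurableSet_ball (fun y _ => le_max_right _ _)
      · rw [hboff x hx]; simp
  · have hxsΩ : xs ∈ Ω := hxs (mem_ball_self (by positivity))
    have hw0 := hw xs hxsΩ
    set B := ball xs σ with hB
    have hBG : B ⊆ G := by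
      intro y hy
      apply mem_Gset hd hΩ
      refine (ball_subset_ball' ?_).trans hxs
      have : dist y xs < σ := hy
      linarith
    set ab : E → ℝ≥0∞ := B.indicator fun _ => ENNReal.ofReal c with hab
    have habm : Measurable ab := measurable_const.indicator measurableSet_ball
    set M : ℝ := 4 * 2 ^ d / w xs with hM
    have hM0 : 0 < M := by positivity
    have hdom : ∀ n, ∀ x ∈ G, S G ε ab n x ≤ ENNReal.ofReal M * ENNReal.ofReal (w x) := by
      intro n
      induction n with
      | zero => intro x _; simp [S]
      | succ n ih =>
        intro x hx
        by_cases hxB : x ∈ B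
        · refine ((hup B hBG (n+1) x).trans (hv4 x)).trans ?_
          rw [← ENNReal.ofReal_mul hM0.le]
          have h1 : (4:ℝ) ≤ M * w x := by
            have := w_harnack hw hmean hσ hxs hxB
            rw [hM, div_mul_eq_mul_div, le_div_iff₀ hw0]
            nlinarith
          calc (4:ℝ≥0∞) = ENNReal.ofReal 4 := by simp
            _ ≤ _ := ENNReal.ofReal_le_ofReal h1
        · change ab x + T G ε (S G ε ab n) x ≤ _
          rw [hab, Set.indicator_of_notMem hxB, zero_add]
          refine (T_mono ih x).trans ?_
          rw [T_cmul ENNReal.ofReal_ne_top]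
          gcongr
          refine (T_le _ x).trans ?_
          have hbΩ := Gset_ball hx
          rw [lav hε (w_int hw hmean hε hbΩ) (fun y hy => (hw y (hbΩ hy)).le),
            ← hmean x ε hε hbΩ]
    have hQab : ∀ x ∈ D, Q G ε ab x ≤ ENNReal.ofReal M := by
      intro x hx
      apply Q_le hG habm
      intro n
      refine (hdom n x (hDG hx)).trans ?_
      calc _ ≤ ENNReal.ofReal M * ENNReal.ofReal 1 := by gcongr; exact hwD x hx
        _ = _ := by simp
    have h1 : ∫⁻ x, ab x * Qa x = ∫⁻ x, a x * Q G ε ab x := Q_symm hG habm ham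
    have h2 : ∫⁻ x, ab x * Qa x = ENNReal.ofReal c * ∫⁻ x in B, Qa x := by
      rw [← lintegral_const_mul _ hQm, ← lintegral_indicator measurableSet_ball]
      congr 1; ext x
      simp only [hab, Set.indicator]
      split_ifs <;> simp
    have h3 : ∫⁻ x, a x * Q G ε ab x ≤ ENNReal.ofReal c * (ENNReal.ofReal M * volume (ball (0:E) 1)) := by
      calc _ ≤ ∫⁻ x, (ball (0:E) 1).indicator (fun _ => ENNReal.ofReal c * ENNReal.ofReal M) x := by
            apply lintegral_mono
            intro x
            by_cases hx : x ∈ D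
            · simp only [ha]
              rw [Set.indicator_of_mem hx, Set.indicator_of_mem (hΩ (hGΩ (hDG hx)))]
              gcongr
              exact hQab x hx
            · simp [ha, hx]
        _ = _ := by
            rw [lintegral_indicator measurableSet_ball, setLIntegral_const, mul_assoc]
    rw [← h1, h2] at h3
    have h4 := (ENNReal.mul_le_mul_iff_right (by simpa using hc0) ENNReal.ofReal_ne_top).1 h3
    have h5 : ∫ y in B, (Qa y).toReal = (∫⁻ x in B, Qa x).toReal :=
      integral_toReal hQm.aemeasurable (Filter.Eventually.of_forall fun y => (hQt y).lt_top)
    rw [h5]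
    have h6 := ENNReal.toReal_mono (ENNReal.mul_ne_top ENNReal.ofReal_ne_top measure_ball_lt_top.ne) h4
    rw [ENNReal.toReal_mul, ENNReal.toReal_ofReal hM0.le] at h6
    refine h6.trans (le_of_eq ?_)
    rw [hM, measureReal_def]
    ring

end HB

end PartE

section PartF

namespace HB
variable {d : ℕ}

local notation "E" => EuclideanSpace ℝ (Fin d)

lemma mol_swap (ρ f : E → ℝ) (x : E) : mol ρ f x = ∫ z, f (x - z) * ρ z := by
  unfold mol
  rw [← integral_sub_left_eq_self (fun z => f (x - z) * ρ z) volume x]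
  simp

lemma av_shift (q : E → ℝ) (x z : E) {r : ℝ} (hr : 0 < r) :
    ⨍ y in ball (x - z) r, q y = ⨍ y in ball x r, q (y - z) := by
  rw [average_eq q _ hr, average_eq _ x hr]
  congr 2; ext y; congr 1; abel

lemma mol_super {Ω : Set E} {q ρ : E → ℝ} (hq : Measurable q) (h0 : ∀ x, 0 ≤ q x)
    (h4 : ∀ x, q x ≤ 4) {ε σ : ℝ} (hε : 0 < ε) (hεσ : ε ≤ σ)
    (hsup : ∀ x, ball x ε ⊆ Ω → ⨍ y in ball x ε, q y ≤ q x)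
    (hρ : Continuous ρ) (hρc : HasCompactSupport ρ) (hρ0 : ∀ x, 0 ≤ ρ x)
    (hρs : ∀ z, z ∉ ball (0:E) σ → ρ z = 0) {x : E} (hx : ball x (2 * σ) ⊆ Ω) :
    ⨍ y in ball x ε, mol ρ q y ≤ mol ρ q x := by
  have hρi : Integrable ρ := hρ.integrable_of_hasCompactSupport hρc
  have hfin : IsFiniteMeasure ((volume : Measure E).restrict (ball x ε)) :=
    ⟨by simpa using measure_ball_lt_top⟩
  have hqn : ∀ y, ‖q y‖ ≤ 4 := fun y => by rw [Real.norm_of_nonneg (h0 y)]; exact h4 y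
  have hprod : Integrable (fun p : E × E => q (p.1 - p.2) * ρ p.2)
      (((volume : Measure E).restrict (ball x ε)).prod volume) := by
    have h1 : Integrable (fun p : E × E => (4:ℝ) * ρ p.2)
      (((volume : Measure E).restrict (ball x ε)).prod volume) :=
      (integrable_const (4:ℝ)).mul_prod hρi
    refine h1.mono' ?_ ?_
    · exact ((hq.comp (measurable_fst.sub measurable_snd)).mul
        (hρ.measurable.comp measurable_snd)).aestronglyMeasurable
    · refine Filter.Eventually.of_forall fun p => ?_
      rw [norm_mul, Real.norm_of_nonneg (hρ0 _)]
      exact mul_le_mul_of_nonneg_right (hqn _) (hρ0 _)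
  have h1 : ⨍ y in ball x ε, mol ρ q y = ∫ z, (⨍ y in ball (x - z) ε, q y) * ρ z := by
    rw [setAverage_eq]
    simp_rw [mol_swap]
    rw [integral_integral_swap hprod, ← integral_smul]
    congr 1; ext z
    rw [av_shift q x z hε, setAverage_eq, integral_mul_const, smul_eq_mul, smul_eq_mul, mul_assoc]
  rw [h1, mol_swap]
  have hmeas : Integrable (fun z => (⨍ y in ball (x - z) ε, q y) * ρ z) := by
    have h2 := hprod.integral_prod_right.const_mul (volume.real (ball x ε))⁻¹
    refine h2.congr (Filter.Eventually.of_forall fun z => ?_)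
    simp only
    rw [av_shift q x z hε, setAverage_eq, integral_mul_const, smul_eq_mul, mul_assoc]
  apply integral_mono hmeas
  · refine (hρi.const_mul 4).mono' ?_ ?_
    · exact ((hq.comp (measurable_const.sub measurable_id)).mul
        hρ.measurable).aestronglyMeasurable
    · refine Filter.Eventually.of_forall fun p => ?_
      rw [norm_mul, Real.norm_of_nonneg (hρ0 _)]
      exact mul_le_mul_of_nonneg_right (hqn _) (hρ0 _)
  · intro z
    simp only
    by_cases hz : z ∈ ball (0:E) σ
    · apply mul_le_mul_of_nonneg_right _ (hρ0 z)
      apply hsup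
      refine (ball_subset_ball' ?_).trans hx
      simp at hz
      simp
      linarith
    · rw [hρs z hz]; simp

lemma green (hd : 0 < d) {Ω D : Set E} (hΩ : Ω ⊆ ball 0 1) (hD : MeasurableSet D) {rD : ℝ}
    (hrD : 0 < rD) (hDΩ : ∀ x ∈ D, ball x rD ⊆ Ω) {w : E → ℝ} (hw : ∀ x ∈ Ω, 0 < w x)
    (hmean : ∀ x r, 0 < r → ball x r ⊆ Ω → w x = ⨍ y in ball x r, w y)
    (hwD : ∀ x ∈ D, w x ≤ 1) {xs : E} {σ : ℝ} (hσ : 0 < σ)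
    (hxs : ball xs (4 * σ) ⊆ Ω) {η : ℝ} (hη : 0 < η) :
    ∃ q : E → ℝ, Continuous q ∧ (∀ x ∈ ball (0:E) 1, 0 < q x) ∧
      (∀ x r, 0 < r → ball x (r + 2 * σ) ⊆ Ω → ⨍ y in ball x r, q y ≤ q x) ∧
      (∀ x R, 0 < R → ball x (R + σ) ⊆ D → R ^ 2 ≤ q x) ∧
      q xs ≤ 4 * 4 ^ d / (σ ^ d * w xs) + η := by
  have := nontriv hd
  let b : ContDiffBump (0:E) := ⟨σ/2, σ, by positivity, by linarith⟩
  set ρ : E → ℝ := b.normed volume with hρ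
  have hρc : ContDiff ℝ (⊤ : ℕ∞) ρ := b.contDiff_normed
  have hρs : HasCompactSupport ρ := b.hasCompactSupport_normed
  have hρt : Function.support ρ = ball 0 σ := b.support_normed_eq
  have hρ0 : ∀ x, 0 ≤ ρ x := fun x => b.nonneg_normed x
  have hρz : ∀ z, z ∉ ball (0:E) σ → ρ z = 0 := by
    intro z hz; rw [← hρt] at hz; simpa using hz
  have hρ1 : ∫ z, ρ z = 1 := b.integral_normed
  have hρi : Integrable ρ := b.integrable_normed
  set ω := 2 * d * (η / 4) with hω
  have hω0 : 0 < ω := by positivity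
  have hV := vol_pos (0:E) one_pos
  have huc : UniformContinuous (lap ρ) :=
    (lap_continuous hρc).uniformContinuous_of_tendsto_cocompact
      (lap_compact hρs).is_zero_at_infty
  rw [Metric.uniformContinuous_iff] at huc
  obtain ⟨τ, hτ, hu⟩ := huc (ω / (4 * volume.real (ball (0:E) 1))) (by positivity)
  set ε := min rD (min σ τ) with hεd
  have hε : 0 < ε := lt_min hrD (lt_min hσ hτ)
  have hεσ : ε ≤ σ := (min_le_right _ _).trans (min_le_left _ _)
  have hετ : ε ≤ τ := (min_le_right _ _).trans (min_le_right _ _)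
  have hεD : ε ≤ rD := min_le_left _ _
  obtain ⟨q, hqm, hq0, hq4, hqoff, hqsup, hqlow, hqxs⟩ := walk hd hΩ hD hε
    (fun x hx => (ball_subset_ball hεD).trans (hDΩ x hx)) hw hmean hwD hσ hεσ hxs
  have hqn : ∀ y, ‖q y‖ ≤ 4 := fun y => by rw [Real.norm_of_nonneg (hq0 y)]; exact hq4 y
  have hqi : ∀ x r, IntegrableOn q (ball x r) := fun x r =>
    Measure.integrableOn_of_bounded (M := 4) measure_ball_lt_top.ne
      hqm.aestronglyMeasurable (Filter.Eventually.of_forall hqn)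
  have hql : LocallyIntegrable q := fun x => ⟨ball x 1, ball_mem_nhds x one_pos, hqi x 1⟩
  have hms : ∀ x, Integrable (fun z => q (x - z) * ρ z) := by
    intro x
    refine (hρi.const_mul 4).mono' ?_ ?_
    · exact ((hqm.comp (measurable_const.sub measurable_id)).mul
        hρc.continuous.measurable).aestronglyMeasurable
    · refine Filter.Eventually.of_forall fun p => ?_
      rw [norm_mul, Real.norm_of_nonneg (hρ0 _)]
      exact mul_le_mul_of_nonneg_right (hqn _) (hρ0 _)
  have hmc : ContDiff ℝ (⊤ : ℕ∞) (mol ρ q) := mol_contDiff hρc hρs hql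
  have hm0 : ∀ x, 0 ≤ mol ρ q x := fun x => integral_nonneg fun y => mul_nonneg (hq0 _) (hρ0 _)
  have hosc : ∀ x y, dist x y < τ → |lap (mol ρ q) x - lap (mol ρ q) y| ≤ ω := by
    intro x y hxy
    rw [mol_lap hρc hρs hql]
    unfold mol
    have hi := fun x => mol_int (lap_continuous hρc) (lap_compact hρs) hql x
    rw [← integral_sub (hi x) (hi y)]
    have h1 : ∀ z, q z * lap ρ (x - z) - q z * lap ρ (y - z) =
      (ball (0:E) 1).indicator (fun z => q z * (lap ρ (x - z) - lap ρ (y - z))) z := by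
      intro z
      by_cases hz : z ∈ ball (0:E) 1
      · rw [Set.indicator_of_mem hz]; ring
      · rw [Set.indicator_of_notMem hz, hqoff z hz]; ring
    simp_rw [h1]
    rw [integral_indicator measurableSet_ball, ← Real.norm_eq_abs]
    refine (norm_setIntegral_le_of_norm_le_const (C := 4 * (ω / (4 * volume.real (ball (0:E) 1))))
      measure_ball_lt_top ?_).trans (le_of_eq ?_)
    · intro z _
      rw [norm_mul]
      have h2 : dist (x - z) (y - z) < τ := by simpa using hxy
      have h3 := (hu h2).le
      rw [Real.dist_eq] at h3
      exact mul_le_mul (hqn z) h3 (norm_nonneg _) (by norm_num)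
    · field_simp
  have hlap : ∀ x, ball x (2 * σ) ⊆ Ω → lap (mol ρ q) x ≤ ω := by
    intro x hx
    by_contra hcon
    push Not at hcon
    have h1 := sub_mean hmc x hε (e := lap (mol ρ q) x - ω) (by
      intro y hy
      have := abs_le.1 (hosc y x (lt_of_lt_of_le hy hετ))
      linarith)
    have h2 := mol_super hqm hq0 hq4 hε hεσ hqsup hρc.continuous hρs hρ0 hρz hx
    have h3 : 0 < (lap (mol ρ q) x - ω) * kd d * ε ^ 2 := by
      have := kd_pos (d := d)
      have : 0 < lap (mol ρ q) x - ω := by linarith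
      positivity
    linarith
  have hc1 : ContDiff ℝ (⊤ : ℕ∞) (fun x : E => η + (-(η / 4)) * ‖x - 0‖ ^ 2) :=
    contDiff_const.add (contDiff_const.mul (sq_contDiff 0))
  have hc2 : ContDiff ℝ (⊤ : ℕ∞) (fun x : E => mol ρ q x + (η + (-(η / 4)) * ‖x - 0‖ ^ 2)) :=
    hmc.add hc1
  have hl1 : ∀ x : E, lap (fun x : E => η + (-(η / 4)) * ‖x - 0‖ ^ 2) x = -ω := by
    intro x
    rw [lap_add contDiff_const (contDiff_const.mul (sq_contDiff 0)), lap_const,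
      lap_cmul _ (sq_contDiff 0), lap_sq]
    rw [hω]; ring
  refine ⟨fun x => mol ρ q x + (η + (-(η / 4)) * ‖x - 0‖ ^ 2), hc2.continuous, ?_, ?_, ?_, ?_⟩
  · intro x hx
    have := hm0 x
    simp at hx
    simp only [sub_zero]
    have : ‖x‖ ^ 2 < 1 := by nlinarith [norm_nonneg x]
    nlinarith
  · intro x r hr hx
    have h1 := sub_mean (contDiff_const.mul hc2 : ContDiff ℝ (⊤ : ℕ∞) (fun x : E =>
      (-1:ℝ) * (mol ρ q x + (η + (-(η / 4)) * ‖x - 0‖ ^ 2)))) x hr (e := 0) (by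
        intro y hy
        rw [lap_cmul _ hc2, lap_add hmc hc1, hl1]
        have := hlap y ((ball_subset_ball' (by
          have : dist y x < r := hy
          linarith)).trans hx)
        linarith)
    rw [av_cmul] at h1
    linarith
  · intro x R hR hx
    have hxD : x ∈ D := hx (mem_ball_self (by positivity))
    have hx1 : ‖x‖ < 1 := by simpa using hΩ (hDΩ x hxD (mem_ball_self hrD))
    have h1 : R ^ 2 ≤ mol ρ q x := by
      rw [mol_swap]
      have h2 : ∫ z, R ^ 2 * ρ z ≤ ∫ z, q (x - z) * ρ z := by
        apply integral_mono (hρi.const_mul _) (hms x)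
        intro z
        simp only
        by_cases hz : z ∈ ball (0:E) σ
        · apply mul_le_mul_of_nonneg_right _ (hρ0 z)
          apply hqlow _ R hR
          refine (ball_subset_ball' ?_).trans hx
          simp at hz
          simp
          linarith
        · rw [hρz z hz]; simp
      rw [integral_const_mul, hρ1] at h2
      linarith
    simp only [sub_zero]
    have : ‖x‖ ^ 2 < 1 := by nlinarith [norm_nonneg x]
    nlinarith
  · have hxsΩ : xs ∈ Ω := hxs (mem_ball_self (by positivity))
    have hw0 := hw xs hxsΩ
    have h1 : mol ρ q xs ≤ 4 * 4 ^ d / (σ ^ d * w xs) := by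
      unfold mol
      have hb : ∀ z, ρ z ≤ 1 / volume.real (ball (0:E) (σ / 2)) := by
        intro z
        have := b.normed_le_div_measure_closedBall_rIn volume z
        rwa [measureReal_def, Measure.addHaar_closedBall_eq_addHaar_ball, ← measureReal_def] at this
      have h2 : ∫ y, q y * ρ (xs - y) ≤
          ∫ y in ball xs σ, q y * (1 / volume.real (ball (0:E) (σ / 2))) := by
        rw [← integral_indicator measurableSet_ball]
        apply integral_mono (mol_int hρc.continuous hρs hql xs)
          (IntegrableOn.integrable_indicator ((hqi xs σ).mul_const _) measurableSet_ball)
        intro y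
        simp only
        by_cases hy : y ∈ ball xs σ
        · rw [Set.indicator_of_mem hy]
          exact mul_le_mul_of_nonneg_left (hb _) (hq0 y)
        · rw [Set.indicator_of_notMem hy, hρz, mul_zero]
          simpa [dist_eq_norm, norm_sub_rev] using hy
      rw [integral_mul_const, vol_eq _ (by positivity : 0 < σ / 2)] at h2
      refine h2.trans ?_
      calc _ ≤ 4 * 2 ^ d * volume.real (ball (0:E) 1) / w xs *
            (1 / ((σ / 2) ^ d * volume.real (ball (0:E) 1))) := by gcongr
        _ = _ := by
            rw [div_pow, show (4:ℝ) ^ d = 2 ^ d * 2 ^ d by rw [← mul_pow]; norm_num]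
            field_simp
    have : 0 ≤ η / 4 * ‖xs - 0‖ ^ 2 := by positivity
    simp only
    linarith

end HB

end PartF

section PartG

namespace HB
variable {d : ℕ}

local notation "E" => EuclideanSpace ℝ (Fin d)

lemma ex_contDiff (α : ℝ) : ContDiff ℝ (⊤ : ℕ∞) (fun y : E => Real.exp (-α * ‖y‖ ^ 2)) :=
  (contDiff_const.mul (contDiff_id.norm_sq ℝ)).exp

lemma pd_ex (α : ℝ) (i : Fin d) (y : E) : pd i (fun y : E => Real.exp (-α * ‖y‖ ^ 2)) y =
    Real.exp (-α * ‖y‖ ^ 2) * (-α * (2 * y i)) := by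
  have h := (((hasFDerivAt_id y).norm_sq).const_mul (-α)).exp
  rw [pd]
  erw [h.fderiv]
  simp [EuclideanSpace.inner_single_right]

lemma lap_ex (α : ℝ) (y : E) : lap (fun y : E => Real.exp (-α * ‖y‖ ^ 2)) y =
    Real.exp (-α * ‖y‖ ^ 2) * (4 * α ^ 2 * ‖y‖ ^ 2 - 2 * d * α) := by
  have h1 : ∀ i, pd i (pd i (fun y : E => Real.exp (-α * ‖y‖ ^ 2))) y =
      Real.exp (-α * ‖y‖ ^ 2) * (4 * α ^ 2 * (y i) ^ 2 - 2 * α) := by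
    intro i
    have h2 : pd i (fun y : E => Real.exp (-α * ‖y‖ ^ 2)) =
        fun y => Real.exp (-α * ‖y‖ ^ 2) * (-α * (2 * y i)) := by ext y; exact pd_ex α i y
    rw [h2]
    have h3 : HasFDerivAt (fun y : E => -α * (2 * y i))
        ((-α) • (2:ℝ) • (EuclideanSpace.proj i : E →L[ℝ] ℝ)) y :=
      (((EuclideanSpace.proj i : E →L[ℝ] ℝ).hasFDerivAt (x := y)).const_mul 2).const_mul (-α)
    have h4 := (((hasFDerivAt_id y).norm_sq).const_mul (-α)).exp
    have h5 := h4.mul h3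
    rw [pd]
    erw [h5.fderiv]
    simp [EuclideanSpace.inner_single_right]
    ring
  simp only [lap, h1]
  rw [← Finset.mul_sum, Finset.sum_sub_distrib, ← Finset.mul_sum, EuclideanSpace.real_norm_sq_eq]
  simp
  ring

lemma ex_lip {α : ℝ} (hα : 0 < α) {x y : E} (hx : ‖x‖ < 1) (hy : ‖y‖ < 1) :
    Real.exp (-α * ‖x‖ ^ 2) - Real.exp (-α * ‖y‖ ^ 2) ≤ 2 * α * dist y x := by
  have h1 : Real.exp (-α * ‖y‖ ^ 2) = Real.exp (-α * ‖x‖ ^ 2) *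
      Real.exp (α * (‖x‖ ^ 2 - ‖y‖ ^ 2)) := by
    rw [← Real.exp_add]; congr 1; ring
  have h2 := Real.add_one_le_exp (α * (‖x‖ ^ 2 - ‖y‖ ^ 2))
  have h3 : Real.exp (-α * ‖x‖ ^ 2) ≤ 1 := by
    rw [Real.exp_le_one_iff]
    nlinarith [sq_nonneg ‖x‖]
  have h4 := Real.exp_pos (-α * ‖x‖ ^ 2)
  have h5 : ‖y‖ - ‖x‖ ≤ dist y x := by rw [dist_eq_norm]; exact norm_sub_norm_le y x
  have h6 : ‖y‖ ^ 2 - ‖x‖ ^ 2 ≤ 2 * dist y x := by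
    have : ‖y‖ ^ 2 - ‖x‖ ^ 2 = (‖y‖ - ‖x‖) * (‖y‖ + ‖x‖) := by ring
    rw [this]
    calc (‖y‖ - ‖x‖) * (‖y‖ + ‖x‖) ≤ dist y x * (‖y‖ + ‖x‖) := by gcongr
      _ ≤ dist y x * 2 := by gcongr; linarith
      _ = _ := by ring
  rw [h1]
  have h7 : Real.exp (-α * ‖x‖ ^ 2) - Real.exp (-α * ‖x‖ ^ 2) * Real.exp (α * (‖x‖ ^ 2 - ‖y‖ ^ 2)) ≤
      Real.exp (-α * ‖x‖ ^ 2) * (α * (2 * dist y x)) := by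
    have : 1 - Real.exp (α * (‖x‖ ^ 2 - ‖y‖ ^ 2)) ≤ α * (2 * dist y x) := by nlinarith
    nlinarith
  have h8 : Real.exp (-α * ‖x‖ ^ 2) * (α * (2 * dist y x)) ≤ 1 * (α * (2 * dist y x)) := by
    gcongr
  linarith

lemma sqrt_am {A a b : ℝ} (hA : 0 < A) (ha : 0 < a) (hb : 0 ≤ b) :
    A * √b ≤ A * √a / 2 + A * √a / 2 / a * b := by
  have h1 : 0 < √a := Real.sqrt_pos.2 ha
  have h2 : √a * √a = a := Real.mul_self_sqrt ha.le
  have h3 : √b * √b = b := Real.mul_self_sqrt hb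
  have h4 : A * √a / 2 + A * √a / 2 / a * b = A * ((√a * √a + √b * √b) / (2 * √a)) := by
    rw [h2, h3]
    field_simp
    rw [pow_two, h2]
  rw [h4]
  gcongr
  rw [le_div_iff₀ (by positivity)]
  nlinarith [sq_nonneg (√a - √b)]

lemma av_indicator {x p : E} {s ρ c : ℝ} (hs : 0 < s) (hρ : 0 < ρ) (h : ball p ρ ⊆ ball x s) :
    ⨍ y in ball x s, (ball p ρ).indicator (fun _ => c) y = (ρ / s) ^ d * c := by
  rw [setAverage_eq, setIntegral_indicator measurableSet_ball, Set.inter_eq_right.2 h,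
    setIntegral_const, vol_eq x hs, vol_eq p hρ, smul_eq_mul, smul_eq_mul]
  have := vol_pos (0:E) one_pos
  rw [div_pow]
  field_simp

end HB

end PartG

section PartH

namespace HB
variable {d : ℕ}

local notation "E" => EuclideanSpace ℝ (Fin d)

set_option maxHeartbeats 1000000 in
lemma interior_case {L κ c θ α m δ₁ : ℝ} (hL : 0 < L) (hκ : 0 < κ)
    (hc0 : 0 < c) (hc1 : c ≤ 1/16) (hc2 : 16 * L * c ≤ κ) (hθ : θ = (c / (1 - c)) ^ d)
    (hα0 : 0 < α) (hm : 0 < m) (hsmall : 8 * α * m < κ * θ) (h12 : 12 * δ₁ ≤ κ)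
    {Ω : Set E} {φ : E → ℝ} (hΩ : Ω ⊆ ball 0 1)
    (h0 : (0:E) ∉ Ω) (hφ : Continuous φ)
    (hzero : ∀ x ∈ ball (0 : E) 1 \ Ω, φ x = 0)
    (hlip : ∀ x ∈ ball (0 : E) 1, ∀ y ∈ ball (0 : E) 1, |φ x - φ y| ≤ L * dist x y)
    (hlow : ∀ x ∈ ball (0 : E) (1/2), κ * infDist x (ball (0 : E) 1 \ Ω) ≤ φ x)
    (hsub : ∀ x r, 0 < r → ‖x‖ + r < 1 → φ x ≤ ⨍ y in ball x r, φ y)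
    {σ : ℝ} {q : E → ℝ} (hqc : Continuous q) (hq0 : ∀ x ∈ ball (0:E) 1, 0 < q x)
    (hq1 : ∀ x r, 0 < r → ball x (r + 2 * σ) ⊆ Ω → ⨍ y in ball x r, q y ≤ q x)
    {x₁ : E} (hcase : ‖x₁‖ < 1/2) (hφp : 0 < φ x₁) (hφ3 : φ x₁ < 3 * δ₁)
    (hσ : 2 * L * σ ≤ c * φ x₁) {Q k : ℝ} (hk0 : 0 ≤ k) (hk : k * q x₁ = Q / 2) (hQ : Q ≤ φ x₁)
    (hcmp : ∀ y : E, ‖y‖ ≤ 3/4 →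
      φ y ≤ (Q / 2 + k * q y) + (φ x₁ - Q) + 2 * α * m * dist y x₁) : False := by
  obtain ⟨K, hK⟩ : ∃ K, K = ball (0 : E) 1 \ Ω := ⟨_, rfl⟩
  rw [← hK] at hlow hzero
  have h0K : (0:E) ∈ K := by rw [hK]; exact ⟨by simp, h0⟩
  have hKne : K.Nonempty := ⟨0, h0K⟩
  obtain ⟨r, hr⟩ : ∃ r : ℝ, r = infDist x₁ K := ⟨_, rfl⟩
  have hr1 : κ * r ≤ φ x₁ := by rw [hr]; exact hlow x₁ (by simpa using hcase)
  have hr2 : φ x₁ / L ≤ r := by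
    rw [hr, le_infDist hKne]
    intro z hz
    rw [div_le_iff₀ hL]
    have h1 := hlip x₁ (by simp; linarith) z (hK ▸ hz).1
    rw [hzero z hz] at h1
    have := le_abs_self (φ x₁ - 0)
    linarith
  have hr0 : 0 < r := lt_of_lt_of_le (by have : 0 < φ x₁ := by linarith
                                         positivity) hr2
  have hr3 : r ≤ ‖x₁‖ := by
    have := infDist_le_dist_of_mem (x := x₁) h0K
    rw [← hr] at this; simpa using this
  have hballΩ : ball x₁ r ⊆ Ω := by
    intro y hy
    by_contra hyΩ
    have hyn : ‖y‖ < 1 := by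
      have := norm_le_norm_add_norm_sub' y x₁
      rw [mem_ball, dist_eq_norm] at hy
      linarith
    have h1 : r ≤ dist x₁ y := by
      rw [hr]; exact infDist_le_dist_of_mem (by rw [hK]; exact ⟨by simpa using hyn, hyΩ⟩)
    rw [mem_ball, dist_comm] at hy
    linarith
  obtain ⟨z₀, hz₀, hz₀d⟩ := (infDist_lt_iff (x := x₁) (r := r * (1 + c)) hKne).1
    (by rw [← hr]; nlinarith)
  have hz₀r : r ≤ dist x₁ z₀ := by rw [hr]; exact infDist_le_dist_of_mem hz₀
  obtain ⟨ρ, hρ⟩ : ∃ ρ : ℝ, ρ = dist x₁ z₀ := ⟨_, rfl⟩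
  rw [← hρ] at hz₀r hz₀d
  have hρ0 : 0 < ρ := by linarith
  obtain ⟨s, hs⟩ : ∃ s : ℝ, s = (1 - c) * r := ⟨_, rfl⟩
  have hs0 : 0 < s := by rw [hs]
                         have : 0 < 1 - c := by linarith
                         positivity
  have hsr : s ≤ r := by nlinarith
  have hcr : 0 < c * r := by positivity
  obtain ⟨p, hp⟩ : ∃ p : E, p = x₁ + ((1 - 2 * c) * r / ρ) • (z₀ - x₁) := ⟨_, rfl⟩
  have hnz : ‖z₀ - x₁‖ = ρ := by rw [hρ, dist_eq_norm, norm_sub_rev]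
  have hpx : dist p x₁ = (1 - 2 * c) * r := by
    have h1 : 0 ≤ (1 - 2 * c) * r / ρ := by
      have : 0 < 1 - 2 * c := by linarith
      positivity
    rw [hp, dist_eq_norm, add_sub_cancel_left, norm_smul, hnz, Real.norm_of_nonneg h1]
    field_simp
  have hpz : dist p z₀ = ρ - (1 - 2 * c) * r := by
    have h1 : p - z₀ = (-(1 - (1 - 2 * c) * r / ρ)) • (z₀ - x₁) := by
      rw [hp]; module
    have h2 : 0 ≤ 1 - (1 - 2 * c) * r / ρ := by
      rw [sub_nonneg, div_le_one hρ0]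
      nlinarith
    rw [dist_eq_norm, h1, norm_smul, norm_neg, Real.norm_of_nonneg h2, hnz]
    field_simp
  have hΘ : ball p (c * r) ⊆ ball x₁ s := by
    apply ball_subset_ball'
    rw [hpx, hs]; linarith
  have hin : ∀ y ∈ ball x₁ s, ‖y‖ ≤ 3/4 := by
    intro y hy
    have h1 := norm_le_norm_add_norm_sub' y x₁
    rw [mem_ball, dist_eq_norm] at hy
    have h2 : r < 1/4 := by
      by_contra h
      push Not at h
      have : κ * (1/4) ≤ κ * r := by gcongr
      linarith
    linarith
  have hΘφ : ∀ y ∈ ball p (c * r), φ y ≤ φ x₁ / 4 := by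
    intro y hy
    have h1 : dist y z₀ ≤ 4 * c * r := by
      have := dist_triangle y p z₀
      have hy' : dist y p < c * r := hy
      rw [hpz] at this
      linarith
    have hyn : ‖y‖ < 1 := by
      have := hΩ (hballΩ (ball_subset_ball hsr (hΘ hy)))
      simpa using this
    have h2 := hlip y (by simpa using hyn) z₀ (hK ▸ hz₀).1
    rw [hzero z₀ hz₀] at h2
    have h3 := le_abs_self (φ y - 0)
    have h4 : L * dist y z₀ ≤ L * (4 * c * r) := by gcongr
    have h5 : 16 * L * c * r ≤ κ * r := by gcongr
    linarith
  have h2σ : 2 * σ ≤ c * r := by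
    have h1 : φ x₁ ≤ r * L := (div_le_iff₀ hL).1 hr2
    have h2 : c * φ x₁ ≤ c * (r * L) := by gcongr
    have h3 : L * (2 * σ) ≤ L * (c * r) := by linarith
    exact le_of_mul_le_mul_left h3 hL
  have hqs := hq1 x₁ s hs0 ((ball_subset_ball (by rw [hs]; linarith)).trans hballΩ)
  have hps := hsub x₁ s hs0 (by linarith)
  have hI := av_indicator (c := φ x₁ / 4) hs0 hcr hΘ
  have hcs : c * r / s = c / (1 - c) := by
    have : 1 - c ≠ 0 := by linarith
    rw [hs]; field_simp
  rw [hcs, ← hθ] at hI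
  have hIi : IntegrableOn ((ball p (c * r)).indicator (fun _ => φ x₁ / 4)) (ball x₁ s) := by
    refine Integrable.indicator ?_ measurableSet_ball
    exact int_ball continuous_const x₁ s
  have hpt : ∀ y ∈ ball x₁ s, φ y + (ball p (c * r)).indicator (fun _ => φ x₁ / 4) y ≤
      k * q y + (φ x₁ - Q / 2 + 2 * α * m * s) := by
    intro y hy
    have h1 := hcmp y (hin y hy)
    have hyd : dist y x₁ ≤ s := (mem_ball.1 hy).le
    have h2 : 2 * α * m * dist y x₁ ≤ 2 * α * m * s := by gcongr
    by_cases hyp : y ∈ ball p (c * r)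
    · rw [Set.indicator_of_mem hyp]
      have h3 := hΘφ y hyp
      have h4 : 0 ≤ k * q y := mul_nonneg hk0 (hq0 y (by simpa using (hin y hy).trans_lt (by norm_num))).le
      have h5 : 0 ≤ 2 * α * m * s := by positivity
      linarith
    · rw [Set.indicator_of_notMem hyp]
      linarith
  have hav := av_mono (x := x₁) (r := s)
    (f := fun y => φ y + (ball p (c * r)).indicator (fun _ => φ x₁ / 4) y)
    (g := fun y => k * q y + (φ x₁ - Q / 2 + 2 * α * m * s))
    ((int_ball hφ x₁ s).add hIi)
    (int_ball (by fun_prop) x₁ s) hpt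
  rw [av_add (int_ball hφ x₁ s) hIi,
    av_add (int_ball (by fun_prop) x₁ s) (int_ball (by fun_prop) x₁ s), av_const _ x₁ hs0,
    av_cmul, hI] at hav
  have h1 : k * (⨍ y in ball x₁ s, q y) ≤ k * q x₁ := by gcongr
  have h2 : θ * (φ x₁ / 4) ≤ 2 * α * m * s := by linarith
  have h3 : 2 * α * m * (κ * s) ≤ 2 * α * m * φ x₁ := by
    have : κ * s ≤ κ * r := by gcongr
    gcongr; linarith
  have h4 : κ * (θ * (φ x₁ / 4)) ≤ κ * (2 * α * m * s) := by gcongr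
  have h5 : 8 * α * m * φ x₁ < κ * θ * φ x₁ := by gcongr
  linarith

end HB

end PartH

section PartI

namespace HB
variable {d : ℕ}

local notation "E" => EuclideanSpace ℝ (Fin d)

set_option maxHeartbeats 1000000 in
lemma annulus_case (hd : 0 < d) {L α m : ℝ} (hL : 0 < L)
    (hα : α = 16 * d) (hm : 0 < m)
    {Ω : Set E} {φ : E → ℝ} (hφ : Continuous φ)
    (hzero : ∀ x ∈ ball (0 : E) 1 \ Ω, φ x = 0)
    (hlip : ∀ x ∈ ball (0 : E) 1, ∀ y ∈ ball (0 : E) 1, |φ x - φ y| ≤ L * dist x y)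
    (hsub : ∀ x r, 0 < r → ‖x‖ + r < 1 → φ x ≤ ⨍ y in ball x r, φ y)
    {σ : ℝ} (hσ64 : σ ≤ 1/64) {q : E → ℝ} (hqc : Continuous q)
    (hq1 : ∀ x r, 0 < r → ball x (r + 2 * σ) ⊆ Ω → ⨍ y in ball x r, q y ≤ q x)
    {x₁ : E} (hc1 : 1/2 ≤ ‖x₁‖) (hc2 : ‖x₁‖ < 3/4) (hφp : 0 < φ x₁)
    (hσ : 2 * σ ≤ φ x₁ / L / 2) {Q k n0 : ℝ} (hn0 : n0 < ‖x₁‖) (hk0 : 0 ≤ k)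
    (hk : k * q x₁ = Q / 2)
    (hcmp : ∀ y : E, n0 ≤ ‖y‖ → ‖y‖ ≤ 3/4 →
      φ y ≤ (Q / 2 + k * q y) + (φ x₁ - Q) +
        m * (Real.exp (-α * ‖x₁‖ ^ 2) - Real.exp (-α * ‖y‖ ^ 2))) : False := by
  have hd' : (0:ℝ) < d := by exact_mod_cast hd
  have hnt := nontriv hd
  have hα0 : 0 < α := by rw [hα]; positivity
  obtain ⟨r, hr0, hr1, hr2, hr3, hr4⟩ : ∃ r : ℝ, 0 < r ∧ r ≤ 3/4 - ‖x₁‖ ∧ r ≤ ‖x₁‖ - n0 ∧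
      r ≤ 1/8 ∧ r ≤ φ x₁ / L / 2 := by
    refine ⟨min (min (3/4 - ‖x₁‖) (‖x₁‖ - n0)) (min (1/8) (φ x₁ / L / 2)), ?_, ?_, ?_, ?_, ?_⟩
    · refine lt_min (lt_min (by linarith) (by linarith)) (lt_min (by norm_num) (by positivity))
    · exact (min_le_left _ _).trans (min_le_left _ _)
    · exact (min_le_left _ _).trans (min_le_right _ _)
    · exact (min_le_right _ _).trans (min_le_left _ _)
    · exact (min_le_right _ _).trans (min_le_right _ _)
  have hnu : ∀ y : E, ‖y‖ ≤ ‖x₁‖ + dist y x₁ := by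
    intro y
    rw [dist_eq_norm]; exact norm_le_norm_add_norm_sub' y x₁
  have hnl : ∀ y : E, ‖x₁‖ - dist y x₁ ≤ ‖y‖ := by
    intro y
    rw [dist_eq_norm, norm_sub_rev]
    have := norm_sub_norm_le x₁ y
    linarith
  have hball : ball x₁ (r + 2 * σ) ⊆ Ω := by
    intro y hy
    have hy' : dist y x₁ < r + 2 * σ := hy
    have hyn : ‖y‖ < 1 := by have := hnu y; linarith
    by_contra hyΩ
    have h1 := hlip x₁ (by simp; linarith) y (by simpa using hyn)
    rw [hzero y ⟨by simpa using hyn, hyΩ⟩, dist_comm] at h1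
    have h2 := le_abs_self (φ x₁ - 0)
    have h3 : dist y x₁ < φ x₁ / L := by linarith
    rw [lt_div_iff₀ hL] at h3
    linarith
  have hqs := hq1 x₁ r hr0 hball
  have hps := hsub x₁ r hr0 (by linarith)
  have hes := sub_mean (ex_contDiff α) x₁ hr0 (e := Real.exp (-α) * (α * (7 * d))) (by
    intro y hy
    have hy' : dist y x₁ < r := hy
    have h1 := hnl y
    have h2 := hnu y
    have h3 : (3/8:ℝ) ≤ ‖y‖ := by linarith
    have h4 : (3/8:ℝ) ^ 2 ≤ ‖y‖ ^ 2 := by gcongr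
    have h5 : ‖y‖ ^ 2 ≤ 1 := pow_le_one₀ (norm_nonneg _) (by linarith)
    rw [lap_ex]
    have h6 : Real.exp (-α) ≤ Real.exp (-α * ‖y‖ ^ 2) := by
      apply Real.exp_le_exp.2; nlinarith
    have h7 : α * (7 * d) ≤ 4 * α ^ 2 * ‖y‖ ^ 2 - 2 * d * α := by
      have : 4 * α ^ 2 * (3/8) ^ 2 ≤ 4 * α ^ 2 * ‖y‖ ^ 2 := by gcongr
      have h8 : α ^ 2 = α * (16 * d) := by rw [pow_two]; nth_rewrite 2 [hα]; rfl
      rw [h8] at this ⊢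
      linarith
    gcongr)
  have hec : Continuous (fun y : E => Real.exp (-α * ‖y‖ ^ 2)) := (ex_contDiff α).continuous
  have hpt : ∀ y ∈ ball x₁ r, φ y ≤ (k * q y + (-m) * Real.exp (-α * ‖y‖ ^ 2)) +
      (φ x₁ - Q / 2 + m * Real.exp (-α * ‖x₁‖ ^ 2)) := by
    intro y hy
    have hy' : dist y x₁ < r := hy
    have h1 := hnl y
    have h2 := hnu y
    have := hcmp y (by linarith) (by linarith)
    linarith
  have hav := av_mono (x := x₁) (r := r) (int_ball hφ x₁ r)
    (int_ball (by fun_prop) x₁ r) hpt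
  rw [av_add (int_ball (by fun_prop) x₁ r) (int_ball (by fun_prop) x₁ r), av_const _ x₁ hr0,
    av_add (int_ball (by fun_prop) x₁ r) (int_ball (by fun_prop) x₁ r), av_cmul, av_cmul] at hav
  have h1 : k * (⨍ y in ball x₁ r, q y) ≤ k * q x₁ := by gcongr
  have h2 : 0 < Real.exp (-α) * (α * (7 * d)) * kd d * r ^ 2 := by
    have := kd_pos (d := d)
    positivity
  have h3 : Real.exp (-α * ‖x₁‖ ^ 2) < ⨍ y in ball x₁ r, Real.exp (-α * ‖y‖ ^ 2) := by linarith
  have h4 := mul_lt_mul_of_pos_left h3 hm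
  linarith

set_option maxHeartbeats 1000000 in
lemma core (hd : 0 < d) {L κ c θ α m δ₁ R A : ℝ} (hL : 0 < L) (hκ : 0 < κ)
    (hc0 : 0 < c) (hc1 : c ≤ 1/16) (hc2 : 16 * L * c ≤ κ) (hθ : θ = (c / (1 - c)) ^ d)
    (hα : α = 16 * d) (hm : 0 < m)
    (hmg : m * (Real.exp (-α * (1/2) ^ 2) - Real.exp (-α * (3/4) ^ 2)) = 3 * δ₁)
    (hsmall : 8 * α * m < κ * θ) (h12 : 12 * δ₁ ≤ κ) (hR : 0 < R) (hR1 : R ≤ 1/16) (hLR : L * R ≤ δ₁)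
    (hA : A * R = L) (hA0 : 0 < A)
    {Ω : Set E} {φ : E → ℝ} (hΩ : Ω ⊆ ball 0 1)
    (h0 : (0:E) ∉ Ω) (hφ : Continuous φ) (hpos : ∀ x ∈ Ω, 0 < φ x)
    (hzero : ∀ x ∈ ball (0 : E) 1 \ Ω, φ x = 0)
    (hlip : ∀ x ∈ ball (0 : E) 1, ∀ y ∈ ball (0 : E) 1, |φ x - φ y| ≤ L * dist x y)
    (hlow : ∀ x ∈ ball (0 : E) (1/2), κ * infDist x (ball (0 : E) 1 \ Ω) ≤ φ x)
    (hsub : ∀ x r, 0 < r → ‖x‖ + r < 1 → φ x ≤ ⨍ y in ball x r, φ y)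
    {xs : E} (hxs : xs ∈ ball (0:E) (1/2)) (hxsΩ : xs ∈ Ω) {σ : ℝ} (hσ : 0 < σ)
    (hσ1 : 4 * L * σ ≤ c * φ xs) (hσ2 : L * σ ≤ R * φ xs)
    {q : E → ℝ} (hqc : Continuous q) (hq0 : ∀ x ∈ ball (0:E) 1, 0 < q x)
    (hq1 : ∀ x r, 0 < r → ball x (r + 2 * σ) ⊆ Ω → ⨍ y in ball x r, q y ≤ q x)
    (hq2 : ∀ x R, 0 < R → ball x (R + σ) ⊆ ({y | δ₁ < φ y} ∩ ball (0:E) (7/8)) → R ^ 2 ≤ q x) :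
    φ xs / 2 ≤ A * √(q xs) := by
  have hd' : (0:ℝ) < d := by exact_mod_cast hd
  have hnt := nontriv hd
  have hα0 : 0 < α := by rw [hα]; positivity
  set t := φ xs with ht
  have ht0 : 0 < t := hpos xs hxsΩ
  have h0B : (0:E) ∈ ball (0:E) 1 \ Ω := ⟨by simp, h0⟩
  have hφ0 : φ 0 = 0 := hzero 0 h0B
  have hφle : ∀ x : E, ‖x‖ < 1 → φ x ≤ L * ‖x‖ := by
    intro x hx
    have := hlip x (by simpa using hx) 0 (by simp)
    rw [hφ0, dist_zero_right] at this
    have := le_abs_self (φ x - 0)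
    linarith
  have hxsn : ‖xs‖ < 1/2 := by simpa using hxs
  have htL : t ≤ L / 2 := by
    have := hφle xs (by linarith)
    nlinarith
  have hσ64 : σ ≤ 1/64 := by
    have h1 : 4 * L * σ ≤ 1/16 * (L / 2) := hσ1.trans (by gcongr)
    have : L * (4 * σ) ≤ L * (1/32) := by linarith
    have := le_of_mul_le_mul_left this hL
    linarith
  have hσR : σ ≤ R := by
    have h1 : L * σ ≤ R * L := hσ2.trans (by gcongr; linarith)
    have : L * σ ≤ L * R := by linarith
    exact le_of_mul_le_mul_left this hL
  set e : E → ℝ := fun y => Real.exp (-α * ‖y‖ ^ 2) with he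
  have hec : Continuous e := (ex_contDiff α).continuous
  set β : E → ℝ := fun y => m * max (e xs - e y) 0 with hβ
  have hβc : Continuous β := by
    simp only [hβ]; fun_prop
  have hβ0 : ∀ y, 0 ≤ β y := fun y => mul_nonneg hm.le (le_max_right _ _)
  by_contra hcon
  push Not at hcon
  set F : E → ℝ := fun y => φ y - A * √(q y) - β y with hF
  have hFc : Continuous F := by
    simp only [hF]
    exact (hφ.sub (continuous_const.mul hqc.sqrt)).sub hβc
  obtain ⟨x₁, hx₁m, hx₁⟩ := (isCompact_closedBall (0:E) (3/4)).exists_isMaxOn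
    ⟨0, by simp; norm_num⟩ hFc.continuousOn
  have hx₁n : ‖x₁‖ ≤ 3/4 := by simpa using hx₁m
  have hmax : ∀ y : E, ‖y‖ ≤ 3/4 → F y ≤ F x₁ := fun y hy => hx₁ (by simpa using hy)
  have hF1 : t / 2 < F x₁ := by
    have h1 := hmax xs (by linarith)
    have h2 : F xs = t - A * √(q xs) := by simp [hF, hβ, ← ht]
    linarith
  set Q₁ := A * √(q x₁) with hQ₁
  have hQ0 : 0 ≤ Q₁ := by positivity
  have hF1' : F x₁ = φ x₁ - Q₁ - β x₁ := rfl
  have hqx1 : 0 < q x₁ := hq0 x₁ (by simp; linarith)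
  have hφ1 : φ x₁ > t / 2 := by have := hβ0 x₁; linarith
  have hφ3 : φ x₁ < 3 * δ₁ := by
    by_contra h3
    push Not at h3
    have h4 := hq2 x₁ R hR (by
      intro y hy
      have hy' : dist y x₁ < R + σ := hy
      have hyn : ‖y‖ < 7/8 := by
        have := norm_le_norm_add_norm_sub' y x₁
        rw [dist_eq_norm] at hy'
        linarith
      refine ⟨?_, by simpa using hyn⟩
      have h5 := hlip x₁ (by simp; linarith) y (by simp; linarith)
      rw [dist_comm] at h5
      have h6 : L * dist y x₁ < L * (R + σ) := by gcongr
      have h7 : L * σ ≤ L * R := by gcongr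
      have := le_abs_self (φ x₁ - φ y)
      simp only [Set.mem_setOf_eq]
      linarith)
    have h5 : R ≤ √(q x₁) := Real.le_sqrt_of_sq_le h4
    have h6 : L ≤ Q₁ := by rw [← hA]; exact mul_le_mul_of_nonneg_left h5 hA0.le
    have h7 := hφle x₁ (by linarith)
    have h8 : L * ‖x₁‖ ≤ L * (3/4) := by gcongr
    have := hβ0 x₁
    linarith
  -- the comparison on balls
  have hcmp : ∀ y : E, ‖y‖ ≤ 3/4 →
      φ y ≤ (Q₁ / 2 + Q₁ / 2 / q x₁ * q y) + (φ x₁ - Q₁) + (β y - β x₁) := by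
    intro y hy
    have h1 := hmax y hy
    have h2 := sqrt_am hA0 hqx1 (hq0 y (by simp; linarith)).le
    rw [hF1'] at h1
    simp only [hF] at h1
    linarith
  have hk : Q₁ / 2 / q x₁ * q x₁ = Q₁ / 2 := by field_simp
  have hk0 : 0 ≤ Q₁ / 2 / q x₁ := by positivity
  have hσφ : 2 * σ ≤ φ x₁ / L / 2 := by
    rw [div_div, le_div_iff₀ (by positivity)]
    have : c * t ≤ 1/16 * t := by gcongr
    nlinarith
  rcases lt_or_ge ‖x₁‖ (1/2) with hcase | hcase
  · -- interior case
    refine interior_case hL hκ hc0 hc1 hc2 hθ hα0 hm hsmall h12 hΩ h0 hφ hzero hlip hlow hsub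
      (σ := σ) hqc hq0 hq1 hcase (by linarith) hφ3 (by nlinarith) (Q := Q₁) hk0 hk
      (by have := hβ0 x₁; linarith) ?_
    intro y hy
    have h1 := hcmp y hy
    have h2 : β y - β x₁ ≤ 2 * α * m * dist y x₁ := by
      have h3 := ex_lip hα0 (x := x₁) (y := y) (by linarith) (by linarith)
      have h4 : max (e xs - e y) 0 ≤ max (e xs - e x₁) 0 + 2 * α * dist y x₁ := by
        apply max_le
        · have := le_max_left (e xs - e x₁) 0
          simp only [he] at this ⊢
          linarith
        · have := le_max_right (e xs - e x₁) 0
          have : 0 ≤ 2 * α * dist y x₁ := by positivity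
          linarith
      have h5 := mul_le_mul_of_nonneg_left h4 hm.le
      simp only [hβ]
      linarith
    linarith
  · rcases lt_or_ge ‖x₁‖ (3/4) with hcase2 | hcase2
    · -- annulus
      have hbe : ∀ y : E, ‖xs‖ ≤ ‖y‖ → β y = m * (e xs - e y) := by
        intro y hy
        have h1 : e y ≤ e xs := by
          simp only [he]
          apply Real.exp_le_exp.2
          have : ‖xs‖ ^ 2 ≤ ‖y‖ ^ 2 := by gcongr
          nlinarith
        simp only [hβ]
        rw [max_eq_left (by linarith)]
      refine annulus_case hd hL hα hm hφ hzero hlip hsub hσ64 hqc hq1 hcase hcase2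
        (by linarith) hσφ (Q := Q₁) (n0 := ‖xs‖) (by linarith) hk0 hk ?_
      intro y hy1 hy2
      have h1 := hcmp y hy2
      have h2 : β y - β x₁ = m * (e x₁ - e y) := by
        rw [hbe y hy1, hbe x₁ (by linarith)]; ring
      rw [h2] at h1
      exact h1
    · -- outer boundary
      have hx34 : ‖x₁‖ = 3/4 := le_antisymm hx₁n hcase2
      have h1 : Real.exp (-α * (1/2) ^ 2) ≤ e xs := by
        simp only [he]
        apply Real.exp_le_exp.2
        have : ‖xs‖ ^ 2 ≤ (1/2) ^ 2 := by gcongr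
        nlinarith
      have h2 : e x₁ = Real.exp (-α * (3/4) ^ 2) := by simp only [he, hx34]
      have h3 : 3 * δ₁ ≤ β x₁ := by
        rw [← hmg]
        simp only [hβ]
        gcongr
        refine le_trans ?_ (le_max_left _ _)
        rw [h2]; linarith
      linarith

end HB

end PartI

/-- Pointwise estimate up to the boundary: there are `δ₂, C, p > 0` depending only on
`d`, `L`, `κ` such that every positive harmonic `w` on `Ω` with `w ≤ 1` on
`B₁ ∩ {φ > δ}` (for `δ ∈ (0, δ₂]`) satisfies `w ≤ C φ^{-p}` on `B_{1/2} ∩ Ω`. -/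
theorem stmt_10 (d : ℕ) (hd : 0 < d) (L κ : ℝ) (hL : 0 < L) (hκ : 0 < κ) :
    ∃ δ₂ > (0:ℝ), ∃ C > (0:ℝ), ∃ p > (0:ℝ),
      ∀ (Ω : Set (EuclideanSpace ℝ (Fin d))) (φ : EuclideanSpace ℝ (Fin d) → ℝ),
      IsOpen Ω → Ω ⊆ ball 0 1 → (0 : EuclideanSpace ℝ (Fin d)) ∈ frontier Ω →
      Continuous φ →
      (∀ x ∈ Ω, 0 < φ x) →
      (∀ x ∈ ball (0 : EuclideanSpace ℝ (Fin d)) 1 \ Ω, φ x = 0) →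
      (∀ x ∈ ball (0 : EuclideanSpace ℝ (Fin d)) 1,
        ∀ y ∈ ball (0 : EuclideanSpace ℝ (Fin d)) 1, |φ x - φ y| ≤ L * dist x y) →
      (∀ x ∈ ball (0 : EuclideanSpace ℝ (Fin d)) (1/2),
        κ * infDist x (ball (0 : EuclideanSpace ℝ (Fin d)) 1 \ Ω) ≤ φ x) →
      (∀ ψ : EuclideanSpace ℝ (Fin d) → ℝ, ContDiff ℝ (⊤ : ℕ∞) ψ → HasCompactSupport ψ →
        tsupport ψ ⊆ ball (0 : EuclideanSpace ℝ (Fin d)) 1 → (∀ x, 0 ≤ ψ x) →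
        0 ≤ ∫ x in ball (0 : EuclideanSpace ℝ (Fin d)) 1, φ x *
          (∑ i : Fin d, fderiv ℝ (fun y => fderiv ℝ ψ y (EuclideanSpace.single i 1)) x
            (EuclideanSpace.single i 1))) →
      ∀ δ, 0 < δ → δ ≤ δ₂ →
      ∀ w : EuclideanSpace ℝ (Fin d) → ℝ, (∀ x ∈ Ω, 0 < w x) →
        (∀ x r, 0 < r → ball x r ⊆ Ω → w x = ⨍ y in ball x r, w y) →
        (∀ x ∈ ball (0 : EuclideanSpace ℝ (Fin d)) 1, δ < φ x → w x ≤ 1) →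
      ∀ x ∈ ball (0 : EuclideanSpace ℝ (Fin d)) (1/2) ∩ Ω,
        w x ≤ C * φ x ^ (-p) := by
  have hd' : (0:ℝ) < d := by exact_mod_cast hd
  obtain ⟨c, hc0, hc1, hc2, hcL⟩ : ∃ c : ℝ, 0 < c ∧ c ≤ 1/16 ∧ 16 * L * c ≤ κ ∧ c ≤ 1 := by
    have h1 : min (1/16) (κ / (16 * L)) ≤ 1/16 := min_le_left _ _
    refine ⟨min (1/16) (κ / (16 * L)), lt_min (by norm_num) (by positivity), h1, ?_, by linarith⟩
    have h2 : min (1/16) (κ / (16 * L)) ≤ κ / (16 * L) := min_le_right _ _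
    rw [le_div_iff₀ (by positivity)] at h2
    linarith
  obtain ⟨θ, hθ⟩ : ∃ θ : ℝ, θ = (c / (1 - c)) ^ d := ⟨_, rfl⟩
  have hθ0 : 0 < θ := by
    have : 0 < 1 - c := by linarith
    rw [hθ]; positivity
  obtain ⟨α, hα⟩ : ∃ α : ℝ, α = 16 * d := ⟨_, rfl⟩
  have hα0 : 0 < α := by rw [hα]; positivity
  obtain ⟨g, hg⟩ : ∃ g : ℝ, g = Real.exp (-α * (1/2) ^ 2) - Real.exp (-α * (3/4) ^ 2) := ⟨_, rfl⟩
  have hg0 : 0 < g := by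
    rw [hg, sub_pos]
    apply Real.exp_lt_exp.2
    nlinarith
  obtain ⟨δ₁, hδ0, hδ1, hδ2⟩ : ∃ δ₁ : ℝ, 0 < δ₁ ∧ δ₁ * (48 * α) ≤ κ * θ * g ∧ 12 * δ₁ ≤ κ := by
    refine ⟨min (κ * θ * g / (48 * α)) (κ / 12), lt_min (by positivity) (by positivity), ?_, ?_⟩
    · rw [← le_div_iff₀ (by positivity)]; exact min_le_left _ _
    · have : min (κ * θ * g / (48 * α)) (κ / 12) ≤ κ / 12 := min_le_right _ _
      linarith
  obtain ⟨m, hm⟩ : ∃ m : ℝ, m = 3 * δ₁ / g := ⟨_, rfl⟩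
  have hm0 : 0 < m := by rw [hm]; positivity
  have hmg : m * g = 3 * δ₁ := by rw [hm]; field_simp
  have hsmall : 8 * α * m < κ * θ := by
    have h1 : 8 * α * m * g < κ * θ * g := by
      have : 0 < δ₁ * α := by positivity
      have h2 : 8 * α * m * g = 24 * (δ₁ * α) := by linear_combination 8 * α * hmg
      rw [h2]; linarith
    exact lt_of_mul_lt_mul_right h1 hg0.le
  obtain ⟨R, hR0, hR1, hLR⟩ : ∃ R : ℝ, 0 < R ∧ R ≤ 1/16 ∧ L * R ≤ δ₁ := by
    refine ⟨min (δ₁ / L) (1/16), lt_min (by positivity) (by norm_num), min_le_right _ _, ?_⟩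
    have : min (δ₁ / L) (1/16) ≤ δ₁ / L := min_le_left _ _
    rw [le_div_iff₀ hL] at this
    linarith
  obtain ⟨A, hA⟩ : ∃ A : ℝ, A = L / R := ⟨_, rfl⟩
  have hA0 : 0 < A := by rw [hA]; positivity
  have hAR : A * R = L := by rw [hA]; field_simp
  obtain ⟨k, hk0, hk1, hk2⟩ : ∃ k : ℝ, 0 < k ∧ 4 * L * k ≤ c ∧ L * k ≤ R := by
    refine ⟨min (c / (4 * L)) (R / L), lt_min (by positivity) (by positivity), ?_, ?_⟩
    · have : min (c / (4 * L)) (R / L) ≤ c / (4 * L) := min_le_left _ _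
      rw [le_div_iff₀ (by positivity)] at this
      linarith
    · have : min (c / (4 * L)) (R / L) ≤ R / L := min_le_right _ _
      rw [le_div_iff₀ (by positivity)] at this
      linarith
  refine ⟨δ₁, hδ0, 16 * A ^ 2 * 4 ^ d / k ^ d, by positivity, (d:ℝ) + 2, by positivity, ?_⟩
  intro Ω φ hΩo hΩ h0f hφ hpos hzero hlip hlow hdist δ hδ hδδ w hw hmean hw1 xs hxs
  have hnt := HB.nontriv hd
  have h0 : (0 : EuclideanSpace ℝ (Fin d)) ∉ Ω := by
    rw [hΩo.frontier_eq] at h0f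
    exact h0f.2
  have hsub : ∀ x r, 0 < r → ‖x‖ + r < 1 → φ x ≤ ⨍ y in ball x r, φ y :=
    fun x r hr hx => HB.phi_sub_mean hφ hdist hr hx
  have ht0 : 0 < φ xs := hpos xs hxs.2
  have hxn : ‖xs‖ < 1/2 := by simpa using hxs.1
  have htL : φ xs ≤ L * (1/2) := by
    have h1 := hlip xs (by simp; linarith) 0 (by simp)
    rw [hzero 0 ⟨by simp, h0⟩, dist_zero_right] at h1
    have h2 := le_abs_self (φ xs - 0)
    have h3 : L * ‖xs‖ ≤ L * (1/2) := by gcongr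
    linarith
  obtain ⟨σ, hσ⟩ : ∃ σ : ℝ, σ = k * φ xs := ⟨_, rfl⟩
  have hσ0 : 0 < σ := by rw [hσ]; positivity
  have hσ1 : 4 * L * σ ≤ c * φ xs := by
    rw [hσ, ← mul_assoc]; gcongr
  have hσ2 : L * σ ≤ R * φ xs := by
    rw [hσ, ← mul_assoc]; gcongr
  have hinΩ : ∀ x : EuclideanSpace ℝ (Fin d), ‖x‖ < 1 → ∀ y : EuclideanSpace ℝ (Fin d),
      ‖y‖ < 1 → L * dist y x < φ x → y ∈ Ω := by
    intro x hx y hy hxy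
    by_contra hyΩ
    have h1 := hlip x (by simpa using hx) y (by simpa using hy)
    rw [hzero y ⟨by simpa using hy, hyΩ⟩, dist_comm] at h1
    have h2 := le_abs_self (φ x - 0)
    linarith
  have hballσ : ball xs (4 * σ) ⊆ Ω := by
    intro y hy
    have hy' : dist y xs < 4 * σ := hy
    have h1 : L * dist y xs < L * (4 * σ) := by gcongr
    have h2 : c * φ xs ≤ 1/16 * φ xs := by gcongr
    have h3 : L * dist y xs < L * (1/32) := by linarith
    have h4 := lt_of_mul_lt_mul_left h3 hL.le
    have h5 := norm_le_norm_add_norm_sub' y xs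
    rw [← dist_eq_norm] at h5
    exact hinΩ xs (by linarith) y (by linarith) (by linarith)
  have hDΩ : ∀ x ∈ ({y | δ₁ < φ y} ∩ ball (0:EuclideanSpace ℝ (Fin d)) (7/8)),
      ball x (min (δ₁ / L) (1/8)) ⊆ Ω := by
    rintro x ⟨hx1, hx2⟩ y hy
    have hx1' : δ₁ < φ x := hx1
    have hx2' : ‖x‖ < 7/8 := by simpa using hx2
    have hy1 : dist y x < δ₁ / L := lt_of_lt_of_le hy (min_le_left _ _)
    have hy2 : dist y x < 1/8 := lt_of_lt_of_le hy (min_le_right _ _)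
    rw [lt_div_iff₀ hL] at hy1
    have h5 := norm_le_norm_add_norm_sub' y x
    rw [← dist_eq_norm] at h5
    exact hinΩ x (by linarith) y (by linarith) (by linarith)
  have hDm : MeasurableSet ({y | δ₁ < φ y} ∩ ball (0:EuclideanSpace ℝ (Fin d)) (7/8)) :=
    ((isOpen_lt continuous_const hφ).inter isOpen_ball).measurableSet
  have hwD : ∀ x ∈ ({y | δ₁ < φ y} ∩ ball (0:EuclideanSpace ℝ (Fin d)) (7/8)), w x ≤ 1 := by
    rintro x ⟨hx1, hx2⟩
    have hx1' : δ₁ < φ x := hx1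
    exact hw1 x (ball_subset_ball (by norm_num) hx2) (by linarith)
  have hwx := hw xs hxs.2
  have key : φ xs ^ 2 / (4 * A ^ 2) ≤ 4 * 4 ^ d / (σ ^ d * w xs) := by
    apply le_of_forall_pos_le_add
    intro η hη
    obtain ⟨q, hqc, hq0, hq1, hq2, hq3⟩ := HB.green hd hΩ hDm
      (lt_min (by positivity) (by norm_num) : 0 < min (δ₁ / L) (1/8)) hDΩ hw hmean hwD hσ0 hballσ hη
    have hcore := HB.core hd hL hκ hc0 hc1 hc2 hθ hα hm0 (by rw [← hg]; exact hmg) hsmall hδ2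
      hR0 hR1 hLR hAR hA0 hΩ h0 hφ hpos hzero hlip hlow hsub hxs.1 hxs.2 hσ0 hσ1 hσ2 hqc hq0 hq1 hq2
    refine le_trans ?_ hq3
    have hqx := hq0 xs (by simp; linarith)
    have h1 : (φ xs / 2) ^ 2 ≤ (A * √(q xs)) ^ 2 := by gcongr
    rw [mul_pow, Real.sq_sqrt hqx.le] at h1
    rw [div_le_iff₀ (by positivity)]
    linarith
  rw [Real.rpow_neg ht0.le, Real.rpow_add ht0, Real.rpow_natCast]
  rw [hσ, mul_pow, div_le_div_iff₀ (by positivity) (by positivity)] at key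
  have e2 : φ xs ^ (2:ℝ) = φ xs ^ 2 := by exact_mod_cast Real.rpow_natCast (φ xs) 2
  rw [e2, ← div_eq_mul_inv, div_div, le_div_iff₀ (by positivity)]
  linarith
end
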